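/- arXiv:2406.13780 — 2 statements merged into one kernel-verified Lean document; each statement's English description precedes it below -/
import Mathlib

section
/- Let t ≥ 3 be an integer, α ∈ [0,(t−2)/(t−1)) a real number, and F a graph such that there is a constant c₀ > 0 with ex(b,F) ≤ c₀·b^{1+α} for every positive integer b. Suppose there exist constants c₁, c₂, c₃ > 0 and M such that for every integer m > M there is a K_t-free (m,d,λ)-graph with c₁·m^{1−1/(2t−3)} ≤ d ≤ c₂·m^{1−1/(2t−3)} and λ ≤ c₃·d^{1/2}. Then there exist constants C > 0 and N such that for every integer n > N, f_{F,K_t}(n) ≤ C · n^{1/((1−α)(t−2)+1)} · (log n)^{3(t−2)/((1−α)(t−2)+1)}. -/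
/-- `G` contains a copy of `F` as a (not necessarily induced) subgraph, i.e. there is an
injective graph homomorphism from `F` to `G`. -/
def ContainsCopy {α β : Type*} (F : SimpleGraph α) (G : SimpleGraph β) : Prop :=
  ∃ f : α → β, Function.Injective f ∧ ∀ ⦃a b : α⦄, F.Adj a b → G.Adj (f a) (f b)

/-- The `F`-independence number of a finite graph `G`: the maximum size of a set `S` of
vertices such that the induced subgraph `G[S]` contains no copy of `F`. -/
noncomputable def fIndepNum {α β : Type*} [Fintype β] (F : SimpleGraph α) (G : SimpleGraph β) :
    ℕ :=
  sSup {k | ∃ S : Finset β, S.card = k ∧ ¬ ContainsCopy F (G.induce (S : Set β))}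

/-- `f_{F,H}(n)`: the minimum of the `F`-independence number over all `H`-free graphs on
`n` vertices. -/
noncomputable def minFIndep {α γ : Type*} (F : SimpleGraph α) (H : SimpleGraph γ) (n : ℕ) : ℕ :=
  sInf {k | ∃ G : SimpleGraph (Fin n), ¬ ContainsCopy H G ∧ fIndepNum F G = k}

/-- The Turán number `ex(n, F)`: the maximum number of edges of an `F`-free graph on `n`
vertices. -/
noncomputable def turanNum (n : ℕ) {α : Type*} (F : SimpleGraph α) : ℕ :=
  sSup {k | ∃ G : SimpleGraph (Fin n), ¬ ContainsCopy F G ∧ k = Nat.card G.edgeSet}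

/-! The bound comes from a random induced subgraph on `n` vertices of the given pseudorandom
`K_t`-free graph `G` on `m` vertices, which is again `K_t`-free. The point is to show that `G` has
few `k`-sets `I` for which `G[I]` has no copy of `F`, so that a union bound leaves an `n`-set
containing none of them.

Such an `I` spans at most `c₀ k ^ (1 + a)` edges (`sum_degree_le_turan`), i.e. its average degree
is at most `D = 2 c₀ k ^ a`. By expander mixing, each vertex set larger than `r = 2 c₃ m / √d`
contains a vertex joined to at least a proportion `d / (2m)` of it (`exists_large_degree`). The
Kleitman–Winston algorithm (`container`) therefore needs at most `(2m / d) log (m + 1)` selected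
vertices to reach a container of size at most `r`. It is run on the vertices of `I` of degree at
most `D log m` in `G[I]`; the neighbours in `I` of the selected vertices and the at most `k / log m`
remaining vertices of `I` are recorded along with the selected ones (`fingerprint`). If
`k ^ (1 - a)` is at least a constant times `(m / d) (log m) ^ 3`, at most `2k / log m` vertices are
recorded, so the number of sets `I` is at most `(O(1) r / k) ^ k` (`card_family_le`), and the union
bound works as soon as `n` is at most a small constant times `k m / r`
(`minFIndep_lt_of_pseudorandom`).

With `m / d` of order `z = m ^ (1 / (2t - 3))` the conditions read `k ^ (1 - a) ≳ z (log m) ^ 3` and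
`n ≲ k z ^ (t - 2)`; solving for `k` gives the exponents of the theorem. The assumption
`a < (t - 2) / (t - 1)` ensures `k ≤ r`. -/

/-! ### Expander mixing -/

open Matrix in
/-- Lower bound on the quadratic form of a regular graph whose eigenvalues other than one are at
most `lam` in absolute value. Since `lam < d`, the all-ones vector, an eigenvector for `d`, is
orthogonal to every eigenvector of index other than `i₀`, so it spans the eigenline of `i₀`. -/
lemma mixing {m : ℕ} (G : SimpleGraph (Fin m)) [DecidableRel G.Adj] (d : ℕ) (lam : ℝ)
    (hreg : G.IsRegularOfDegree d) (hA : (G.adjMatrix ℝ).IsHermitian) (i₀ : Fin m)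
    (h : ∀ i, i ≠ i₀ → |hA.eigenvalues i| ≤ lam) (hlam : 0 ≤ lam) (hd : lam < d) (x : Fin m → ℝ) :
    (d : ℝ) * (∑ v, x v) ^ 2 / m - lam * ∑ v, x v ^ 2 ≤ x ⬝ᵥ (G.adjMatrix ℝ *ᵥ x) := by
  have hm : (0 : ℝ) < m := by
    have := i₀.pos
    exact_mod_cast this
  set b : Fin m → Fin m → ℝ := fun i => (hA.eigenvectorBasis i).ofLp with hb
  have parseval : ∀ x y : Fin m → ℝ, ∑ i, (b i ⬝ᵥ x) * (b i ⬝ᵥ y) = x ⬝ᵥ y := by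
    intro x y
    have := hA.eigenvectorBasis.sum_inner_mul_inner (WithLp.toLp 2 x) (WithLp.toLp 2 y)
    simp only [EuclideanSpace.inner_eq_star_dotProduct, star_trivial] at this
    rw [dotProduct_comm x y, ← this]
    refine Finset.sum_congr rfl fun i _ => ?_
    rw [dotProduct_comm (b i) y]
  have hsym : ∀ i x, b i ⬝ᵥ (G.adjMatrix ℝ *ᵥ x) = hA.eigenvalues i * (b i ⬝ᵥ x) := by
    intro i x
    rw [dotProduct_mulVec, ← mulVec_transpose, SimpleGraph.transpose_adjMatrix,
      hA.mulVec_eigenvectorBasis i, smul_dotProduct, smul_eq_mul]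
  have hone : G.adjMatrix ℝ *ᵥ (fun _ => 1) = fun _ => (d : ℝ) := by
    ext v
    rw [SimpleGraph.adjMatrix_mulVec_apply]
    simp [hreg.degree_eq v]
  have hones : ∀ i, hA.eigenvalues i * (b i ⬝ᵥ fun _ => 1) = d * (b i ⬝ᵥ fun _ => 1) := by
    intro i
    rw [← hsym, hone]
    simp only [dotProduct, mul_one, Finset.mul_sum]
    exact Finset.sum_congr rfl fun v _ => mul_comm _ _
  have hz : ∀ i, i ≠ i₀ → (b i ⬝ᵥ fun _ => (1 : ℝ)) = 0 := by
    intro i hi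
    by_contra hne
    have h1 := mul_right_cancel₀ hne (hones i)
    have h2 := h i hi
    rw [h1, Nat.abs_cast] at h2
    linarith
  have hm1 : (b i₀ ⬝ᵥ fun _ => (1 : ℝ)) ^ 2 = m := by
    have := parseval (fun _ => 1) (fun _ => 1)
    rw [Finset.sum_eq_single i₀ (fun i _ hi => by rw [hz i hi, zero_mul]) (by simp)] at this
    rw [sq, this]
    simp [dotProduct]
  have hne : (b i₀ ⬝ᵥ fun _ => (1 : ℝ)) ≠ 0 := by
    intro h0
    rw [h0] at hm1
    simp at hm1
    linarith
  have hev : hA.eigenvalues i₀ = d := mul_right_cancel₀ hne (hones i₀)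
  have hx1 : (∑ v, x v) ^ 2 = (b i₀ ⬝ᵥ x) ^ 2 * m := by
    have := parseval (fun _ => 1) x
    rw [Finset.sum_eq_single i₀ (fun i _ hi => by rw [hz i hi, zero_mul]) (by simp)] at this
    have h2 : ((fun _ => (1 : ℝ)) ⬝ᵥ x) = ∑ v, x v := by simp [dotProduct]
    rw [← h2, ← this, mul_pow, hm1, mul_comm]
  have hnorm : ∑ v, x v ^ 2 = ∑ i, (b i ⬝ᵥ x) ^ 2 := by
    have := parseval x x
    simp only [← sq] at this
    rw [this]
    simp [dotProduct, sq]
  rw [← parseval, hx1, hnorm]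
  simp only [hsym]
  rw [← mul_assoc, mul_div_cancel_right₀ _ hm.ne', Finset.mul_sum,
    ← Finset.add_sum_erase _ _ (Finset.mem_univ i₀), 
    ← Finset.add_sum_erase (a := i₀) _ (fun i => b i ⬝ᵥ x * _) (Finset.mem_univ i₀), hev]
  have key : -∑ i ∈ Finset.univ.erase i₀, lam * (b i ⬝ᵥ x) ^ 2 ≤ 
      ∑ i ∈ Finset.univ.erase i₀, b i ⬝ᵥ x * (hA.eigenvalues i * b i ⬝ᵥ x) := by
    rw [← Finset.sum_neg_distrib]
    refine Finset.sum_le_sum fun i hi => ?_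
    have h1 := (abs_le.1 (h i (Finset.ne_of_mem_erase hi))).1
    nlinarith [sq_nonneg (b i ⬝ᵥ x)]
  nlinarith [mul_nonneg hlam (sq_nonneg (b i₀ ⬝ᵥ x))]

/-- A set of more than `2 * lam * m / d` vertices induces a subgraph with a vertex of degree at
least half of what the edge density `d / m` predicts: the mixing inequality for the indicator
vector bounds the average degree. -/
lemma exists_large_degree {m : ℕ} (G : SimpleGraph (Fin m)) [DecidableRel G.Adj] (d : ℕ) (lam : ℝ)
    (hreg : G.IsRegularOfDegree d) (hA : (G.adjMatrix ℝ).IsHermitian) (i₀ : Fin m)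
    (h : ∀ i, i ≠ i₀ → |hA.eigenvalues i| ≤ lam) (hlam : 0 ≤ lam) (hd : lam < d)
    (A : Finset (Fin m)) (hr : 2 * lam * m / d < A.card) :
    ∃ v ∈ A, (d : ℝ) / (2 * m) * A.card ≤ (A.filter (G.Adj v)).card := by
  have hm : (0 : ℝ) < m := by
    have := i₀.pos
    exact_mod_cast this
  have hd0 : (0 : ℝ) < d := hlam.trans_lt hd
  have hApos : (0 : ℝ) < A.card := lt_of_le_of_lt (by positivity) hr
  have hmix := mixing G d lam hreg hA i₀ h hlam hd (fun v => if v ∈ A then 1 else 0)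
  have hq : (fun v => if v ∈ A then (1 : ℝ) else 0) ⬝ᵥ
      ((G.adjMatrix ℝ).mulVec fun v => if v ∈ A then 1 else 0)
      = ∑ v ∈ A, ((A.filter (G.Adj v)).card : ℝ) := by
    simp only [dotProduct, SimpleGraph.adjMatrix_mulVec_apply, ite_mul, one_mul, zero_mul,
      Finset.sum_ite_mem, Finset.univ_inter]
    refine Finset.sum_congr rfl fun v _ => ?_
    rw [Finset.sum_const, nsmul_eq_mul, mul_one]
    congr 2
    ext u
    simp [and_comm]
  rw [hq] at hmix
  have e1 : ∑ v, (if v ∈ A then (1 : ℝ) else 0) = A.card := by simp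
  have e2 : ∑ v, (if v ∈ A then (1 : ℝ) else 0) ^ 2 = A.card := by simp
  rw [e1, e2] at hmix
  by_contra! hcon
  have hne : A.Nonempty := by
    rw [← Finset.card_pos]
    exact_mod_cast hApos
  have hlt := Finset.sum_lt_sum_of_nonempty hne hcon
  rw [Finset.sum_const, nsmul_eq_mul] at hlt
  rw [div_lt_iff₀ hd0] at hr
  have h3 : (d : ℝ) * A.card ^ 2 / m - lam * A.card
      = A.card * (d / (2 * m) * A.card) + A.card * (A.card * d - 2 * lam * m) / (2 * m) := by
    field_simp
    ring
  have h4 : 0 < (A.card : ℝ) * (A.card * d - 2 * lam * m) / (2 * m) := by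
    have : 0 < (A.card : ℝ) * d - 2 * lam * m := by linarith
    positivity
  linarith

/-! ### Containers and counting -/

section Counting

variable {V : Type*} [Fintype V] [DecidableEq V]

omit [Fintype V] in
/-- Kleitman–Winston containers with a fingerprint `T` that is only part of the information.
While the current set `A` has more than `r` elements, take a vertex `v` of degree at least
`β * |A|` in `A`. If `v ∈ J`, put it in `T` and delete it with its neighbours from `A`; otherwise
delete `v` only. The final set depends only on `T`. As `J` need not be independent, elements of `J`
adjacent to `T` may be lost; they are left for the caller to record. -/
lemma container (G : SimpleGraph V) [DecidableRel G.Adj] (β r : ℝ)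
    (hdeg : ∀ A : Finset V, r < A.card → ∃ v ∈ A, β * A.card ≤ (A.filter (G.Adj v)).card)
    (A : Finset V) :
    ∃ C : Finset V → Finset V, (∀ T, ((C T).card : ℝ) ≤ r) ∧
      ∀ J : Finset V, ∃ T, T ⊆ J ∩ A ∧ Real.exp (β * T.card) ≤ A.card + 1 ∧
        ∀ w ∈ J ∩ A, w ∈ T ∨ w ∈ C T ∨ ∃ u ∈ T, G.Adj u w := by
  induction hn : A.card using Nat.strong_induction_on generalizing A with
  | _ n ih =>
    subst hn
    by_cases hr : (A.card : ℝ) ≤ r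
    · refine ⟨fun _ => A, fun _ => hr, fun J => ⟨∅, by simp, by simp, ?_⟩⟩
      intro w hw
      exact Or.inr (Or.inl (Finset.mem_inter.1 hw).2)
    · push Not at hr
      obtain ⟨v, hvA, hv⟩ := hdeg A hr
      set A₁ := (A.erase v).filter (fun u => ¬ G.Adj v u) with hA₁
      have hlt₀ : (A.erase v).card < A.card := Finset.card_erase_lt_of_mem hvA
      have hlt₁ : A₁.card < A.card := (Finset.card_filter_le _ _).trans_lt hlt₀
      obtain ⟨C₀, hC₀, h₀⟩ := ih _ hlt₀ (A.erase v) rfl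
      obtain ⟨C₁, hC₁, h₁⟩ := ih _ hlt₁ A₁ rfl
      have hA₁card : (A₁.card : ℝ) + 1 + β * A.card ≤ A.card := by
        have e1 : A₁.card + (A.filter (G.Adj v)).card + 1 = A.card := by
          have := Finset.card_filter_add_card_filter_not (s := A.erase v) (G.Adj v)
          rw [Finset.filter_erase, Finset.erase_eq_of_notMem (by simp)] at this
          have h3 := Finset.card_erase_add_one hvA
          rw [hA₁]
          omega
        have e2 : (A₁.card : ℝ) + (A.filter (G.Adj v)).card + 1 = A.card := by exact_mod_cast e1
        linarith
      refine ⟨fun T => if v ∈ T then C₁ (T.erase v) else C₀ T, fun T => ?_, fun J => ?_⟩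
      · dsimp only
        split_ifs
        exacts [hC₁ _, hC₀ _]
      · by_cases hvJ : v ∈ J
        · obtain ⟨T, hT, hexp, hcov⟩ := h₁ J
          have hvT : v ∉ T := fun hh => by
            have := hT hh
            simp [hA₁] at this
          refine ⟨insert v T, ?_, ?_, ?_⟩
          · refine Finset.insert_subset (Finset.mem_inter.2 ⟨hvJ, hvA⟩) (hT.trans ?_)
            exact Finset.inter_subset_inter_left
              ((Finset.filter_subset _ _).trans (Finset.erase_subset _ _))
          · rw [Finset.card_insert_of_notMem hvT]
            push_cast
            rw [mul_add, mul_one, Real.exp_add]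
            -- Each selected vertex shrinks `A` by a factor `1 - β ≤ exp (-β)`.
            have h2 : (A₁.card : ℝ) + 1 ≤ Real.exp (-β) * A.card := by
              have h3 := Real.add_one_le_exp (-β)
              have h4 : (0 : ℝ) ≤ A.card := by positivity
              nlinarith
            calc Real.exp (β * T.card) * Real.exp β
                ≤ (Real.exp (-β) * A.card) * Real.exp β :=
                  mul_le_mul_of_nonneg_right (hexp.trans h2) (Real.exp_pos _).le
              _ = A.card := by
                  rw [mul_comm, ← mul_assoc, ← Real.exp_add]
                  simp
              _ ≤ A.card + 1 := by linarith
          · intro w hw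
            dsimp only
            rw [if_pos (Finset.mem_insert_self v T), Finset.erase_insert hvT]
            by_cases hwv : w = v
            · exact Or.inl (by simp [hwv])
            by_cases hadj : G.Adj v w
            · exact Or.inr (Or.inr ⟨v, by simp, hadj⟩)
            have hw' := Finset.mem_inter.1 hw
            rcases hcov w (by simp [hA₁, hw'.1, hw'.2, hwv, hadj]) with h | h | ⟨u, hu, h⟩
            · exact Or.inl (Finset.mem_insert_of_mem h)
            · exact Or.inr (Or.inl h)
            · exact Or.inr (Or.inr ⟨u, Finset.mem_insert_of_mem hu, h⟩)
        · obtain ⟨T, hT, hexp, hcov⟩ := h₀ J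
          have hvT : v ∉ T := fun hh => hvJ (Finset.mem_inter.1 (hT hh)).1
          refine ⟨T, hT.trans (Finset.inter_subset_inter_left (Finset.erase_subset _ _)), ?_, ?_⟩
          · refine hexp.trans ?_
            have : ((A.erase v).card : ℝ) ≤ A.card := by exact_mod_cast hlt₀.le
            linarith
          · intro w hw
            have hw' := Finset.mem_inter.1 hw
            have hwv : w ≠ v := fun hh => hvJ (hh ▸ hw'.1)
            dsimp only
            rw [if_neg hvT]
            exact hcov w (by simp [hw'.1, hw'.2, hwv])

lemma card_small_sets (q : ℕ) :
    (Finset.univ.filter fun S : Finset V => S.card ≤ q).card ≤ (Fintype.card V + 1) ^ q := by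
  have h : (Finset.univ.filter fun S : Finset V => S.card ≤ q) ⊆
      (Finset.univ : Finset (Fin q → Option V)).image
        (fun f => Finset.univ.filter fun v => ∃ i, f i = some v) := by
    intro S hS
    rw [Finset.mem_filter] at hS
    refine Finset.mem_image.2 ⟨fun i => if h : i.1 < S.card then
      some (S.equivFin.symm ⟨i, h⟩).1 else none, Finset.mem_univ _, ?_⟩
    ext v
    simp only [Finset.mem_filter, Finset.mem_univ, true_and]
    constructor
    · rintro ⟨i, hi⟩
      split_ifs at hi with hlt
      rw [← Option.some.inj hi]
      exact (S.equivFin.symm ⟨i, hlt⟩).2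
    · intro hv
      have hlt := (S.equivFin ⟨v, hv⟩).2
      exact ⟨⟨S.equivFin ⟨v, hv⟩, hlt.trans_le hS.2⟩, by simp⟩
  refine (Finset.card_le_card h).trans (Finset.card_image_le.trans ?_)
  simp

omit [Fintype V] [DecidableEq V] in
lemma card_subsets_le (C : Finset V) (k : ℕ) (x : ℝ) (hx : 1 ≤ x) :
    ((C.powerset.filter fun X => X.card ≤ k).card : ℝ) ≤ x ^ k * Real.exp (C.card / x) := by
  have hx0 : 0 < x := by linarith
  calc ((C.powerset.filter fun X => X.card ≤ k).card : ℝ)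
      = ∑ X ∈ C.powerset.filter fun X => X.card ≤ k, (1 : ℝ) := by simp
      -- The weight `x ^ (k - |X|) ≥ 1` turns the sum into a binomial expansion.
    _ ≤ ∑ X ∈ C.powerset.filter fun X => X.card ≤ k, x ^ k * (x⁻¹) ^ X.card := by
        refine Finset.sum_le_sum fun X hX => ?_
        have hk := (Finset.mem_filter.1 hX).2
        rw [inv_pow, ← div_eq_mul_inv, one_le_div (by positivity)]
        exact pow_le_pow_right₀ hx hk
    _ ≤ ∑ X ∈ C.powerset, x ^ k * (x⁻¹) ^ X.card :=
        Finset.sum_le_sum_of_subset_of_nonneg (Finset.filter_subset _ _)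
          fun _ _ _ => by positivity
    _ = x ^ k * (x⁻¹ + 1) ^ C.card := by
        rw [← Finset.mul_sum, ← Finset.sum_pow_mul_eq_add_pow]
        simp
    _ ≤ x ^ k * Real.exp (C.card / x) := by
        gcongr
        rw [div_eq_mul_inv, Real.exp_nat_mul]
        exact pow_le_pow_left₀ (by positivity) (Real.add_one_le_exp _) _

omit [Fintype V] [DecidableEq V] in
/-- A fixed `k`-subset of an `m`-set lies in a uniformly random `n`-subset with probability at most
`(n / m) ^ k`. -/
lemma choose_sub_mul_pow_le {m n : ℕ} (hnm : n ≤ m) (k : ℕ) (hk : k ≤ n) :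
    (m - k).choose (n - k) * m ^ k ≤ m.choose n * n ^ k := by
  induction k with
  | zero => simp
  | succ k ih =>
    have ih' := ih (by omega)
    obtain ⟨a, ha⟩ : ∃ a, n - k = a + 1 := ⟨n - k - 1, by omega⟩
    obtain ⟨b, hb⟩ : ∃ b, m - k = b + 1 := ⟨m - k - 1, by omega⟩
    have e1 : n - (k + 1) = a := by omega
    have e2 : m - (k + 1) = b := by omega
    rw [e1, e2]
    rw [ha, hb] at ih'
    have h3 := Nat.add_one_mul_choose_eq b a
    have h4 : (a + 1) * m ≤ n * (b + 1) := by
      have : n = a + 1 + k := by omega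
      have : m = b + 1 + k := by omega
      have : a ≤ b := by omega
      subst n m
      nlinarith
    have h5 : (b + 1) * (b.choose a * m ^ (k + 1)) ≤ (b + 1) * (m.choose n * n ^ (k + 1)) := by
      calc (b + 1) * (b.choose a * m ^ (k + 1)) = ((b + 1).choose (a + 1) * m ^ k) * ((a + 1) * m) := by
            rw [← mul_assoc, h3]; ring
        _ ≤ (m.choose n * n ^ k) * (n * (b + 1)) := Nat.mul_le_mul ih' h4
        _ = _ := by ring
    exact Nat.le_of_mul_le_mul_left h5 (by omega)

/-- Union bound over a uniformly random `n`-subset `U` of `V`: each `k`-set lies in `U` with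
probability at most `(n / |V|) ^ k`. -/
lemma exists_avoiding (P : Finset (Finset V)) (n k : ℕ) (hn : n ≤ Fintype.card V)
    (hP : ∀ I ∈ P, I.card = k) (hlt : P.card * n ^ k < Fintype.card V ^ k) :
    ∃ U : Finset V, U.card = n ∧ ∀ I ∈ P, ¬ I ⊆ U := by
  by_contra! hcon
  have hsub : (Finset.univ : Finset V).powersetCard n ⊆
      P.biUnion fun I => ((Finset.univ : Finset V).powersetCard n).filter (I ⊆ ·) := by
    intro U hU
    obtain ⟨I, hI, hIU⟩ := hcon U (Finset.mem_powersetCard.1 hU).2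
    exact Finset.mem_biUnion.2 ⟨I, hI, Finset.mem_filter.2 ⟨hU, hIU⟩⟩
  have hone : ∀ I ∈ P, (((Finset.univ : Finset V).powersetCard n).filter (I ⊆ ·)).card * 
      Fintype.card V ^ k ≤ (Fintype.card V).choose n * n ^ k := by
    intro I hI
    by_cases hkn : k ≤ n
    · refine le_trans ?_ (choose_sub_mul_pow_le hn k hkn)
      refine Nat.mul_le_mul_right _ ?_
      have : ((Finset.univ : Finset V).powersetCard n).filter (I ⊆ ·) ⊆
          ((Finset.univ \ I).powersetCard (n - k)).image (I ∪ ·) := by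
        intro U hU
        rw [Finset.mem_filter, Finset.mem_powersetCard] at hU
        refine Finset.mem_image.2 ⟨U \ I, ?_, Finset.union_sdiff_of_subset hU.2⟩
        rw [Finset.mem_powersetCard, Finset.card_sdiff_of_subset hU.2, hU.1.2, hP I hI]
        exact ⟨Finset.sdiff_subset_sdiff (Finset.subset_univ _) le_rfl, rfl⟩
      refine (Finset.card_le_card this).trans (Finset.card_image_le.trans ?_)
      rw [Finset.card_powersetCard, Finset.card_sdiff_of_subset (Finset.subset_univ _), hP I hI,
        Finset.card_univ]
    · rw [Finset.filter_eq_empty_iff.2]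
      · simp
      · intro U hU hIU
        have h1 := Finset.card_le_card hIU
        rw [hP I hI, (Finset.mem_powersetCard.1 hU).2] at h1
        exact hkn h1
  have h1 := (Finset.card_le_card hsub).trans Finset.card_biUnion_le
  rw [Finset.card_powersetCard, Finset.card_univ] at h1
  have h2 : (Fintype.card V).choose n * Fintype.card V ^ k
      ≤ P.card * ((Fintype.card V).choose n * n ^ k) := by
    calc _ ≤ _ := Nat.mul_le_mul_right _ h1
      _ = ∑ I ∈ P, (((Finset.univ : Finset V).powersetCard n).filter (I ⊆ ·)).card * 
            Fintype.card V ^ k := by rw [Finset.sum_mul]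
      _ ≤ ∑ I ∈ P, (Fintype.card V).choose n * n ^ k := Finset.sum_le_sum hone
      _ = _ := by simp
  have h3 : 0 < (Fintype.card V).choose n := Nat.choose_pos hn
  have h4 := Nat.mul_lt_mul_of_pos_left hlt h3
  nlinarith

end Counting

section Fingerprint

variable {V : Type*} [Fintype V] [DecidableEq V]

/-- A set `I` with average degree at most `D` (when `k = |I|`) is covered by a small part `S ⊆ I`
and a container `C T` with `T ⊆ S`. The containers are applied to the vertices of degree at most
`L * D` in `I`, so that each vertex of `T` costs at most `1 + L * D` elements of `I`; the at most
`k / L` vertices of larger degree go into `S` directly. -/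
lemma fingerprint (G : SimpleGraph V) [DecidableRel G.Adj] (C : Finset V → Finset V)
    (β D L k : ℝ) (hβ : 0 < β) (hD : 0 < D) (hL : 0 < L)
    (hC : ∀ J : Finset V, ∃ T, T ⊆ J ∩ Finset.univ ∧
      Real.exp (β * T.card) ≤ (Finset.univ : Finset V).card + 1 ∧
        ∀ w ∈ J ∩ Finset.univ, w ∈ T ∨ w ∈ C T ∨ ∃ u ∈ T, G.Adj u w)
    (I : Finset V) (hI : ∑ v ∈ I, ((I.filter (G.Adj v)).card : ℝ) ≤ D * k) :
    ∃ T S : Finset V, T ⊆ S ∧ S ⊆ I ∧ I ⊆ S ∪ C T ∧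
      (S.card : ℝ) ≤ Real.log (Fintype.card V + 1) / β * (1 + L * D) + k / L := by
  set J := I.filter (fun v => ((I.filter (G.Adj v)).card : ℝ) ≤ L * D) with hJ
  set B := I.filter (fun v => ¬ ((I.filter (G.Adj v)).card : ℝ) ≤ L * D) with hB
  obtain ⟨T, hT, hexp, hcov⟩ := hC J
  simp only [Finset.inter_univ] at hT hcov
  have hJI : J ⊆ I := Finset.filter_subset _ _
  have hTcard : (T.card : ℝ) ≤ Real.log (Fintype.card V + 1) / β := by
    rw [le_div_iff₀ hβ, mul_comm, Real.le_log_iff_exp_le (by positivity)]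
    simpa using hexp
  have hBcard : (B.card : ℝ) ≤ k / L := by
    have h1 : ∑ v ∈ B, (L * D) ≤ ∑ v ∈ I, ((I.filter (G.Adj v)).card : ℝ) := by
      refine (Finset.sum_le_sum fun v hv => ?_).trans
        (Finset.sum_le_sum_of_subset_of_nonneg (Finset.filter_subset _ _)
          fun _ _ _ => by positivity)
      exact (not_le.1 (Finset.mem_filter.1 hv).2).le
    rw [Finset.sum_const, nsmul_eq_mul] at h1
    rw [le_div_iff₀ hL]
    have h2 : (B.card * L) * D ≤ k * D := by nlinarith
    exact le_of_mul_le_mul_right h2 hD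
  have hN : ((T.biUnion fun u => I.filter (G.Adj u)).card : ℝ) ≤ T.card * (L * D) := by
    have h1 : ((T.biUnion fun u => I.filter (G.Adj u)).card : ℝ) ≤
        ∑ u ∈ T, ((I.filter (G.Adj u)).card : ℝ) := by
      exact_mod_cast Finset.card_biUnion_le
    refine h1.trans ((Finset.sum_le_sum fun u hu => (Finset.mem_filter.1 (hT hu)).2).trans ?_)
    simp
  refine ⟨T, (T ∪ T.biUnion fun u => I.filter (G.Adj u)) ∪ B, ?_, ?_, ?_, ?_⟩
  · exact Finset.subset_union_left.trans Finset.subset_union_left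
  · refine Finset.union_subset (Finset.union_subset (hT.trans hJI) ?_) (Finset.filter_subset _ _)
    exact Finset.biUnion_subset.2 fun _ _ => Finset.filter_subset _ _
  · intro w hw
    by_cases hwJ : ((I.filter (G.Adj w)).card : ℝ) ≤ L * D
    · rcases hcov w (Finset.mem_filter.2 ⟨hw, hwJ⟩) with h | h | ⟨u, hu, h⟩
      · simp [h]
      · simp [h]
      · refine Finset.mem_union_left _ (Finset.mem_union_left _ (Finset.mem_union_right _ ?_))
        exact Finset.mem_biUnion.2 ⟨u, hu, Finset.mem_filter.2 ⟨hw, h⟩⟩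
    · exact Finset.mem_union_left _ (Finset.mem_union_right _ (Finset.mem_filter.2 ⟨hw, hwJ⟩))
  · have h1 := Finset.card_union_le (T ∪ T.biUnion fun u => I.filter (G.Adj u)) B
    have h2 := Finset.card_union_le T (T.biUnion fun u => I.filter (G.Adj u))
    have h3 : ((((T ∪ T.biUnion fun u => I.filter (G.Adj u)) ∪ B).card : ℕ) : ℝ) ≤
      T.card + (T.biUnion fun u => I.filter (G.Adj u)).card + B.card := by
      exact_mod_cast h1.trans (by omega)
    have h4 : (T.card : ℝ) * (1 + L * D) ≤ Real.log (Fintype.card V + 1) / β * (1 + L * D) :=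
      mul_le_mul_of_nonneg_right hTcard (by positivity)
    linarith

/-- `I` is determined by `T`, `S` and `I ∩ C T`; the bound is the product of the numbers of
choices for these. -/
lemma card_family_le (P : Finset (Finset V)) (C : Finset V → Finset V) (k q : ℕ) (r : ℝ)
    (hk : 0 < k) (hkr : (k : ℝ) ≤ r) (hC : ∀ T, ((C T).card : ℝ) ≤ r)
    (hP : ∀ I ∈ P, I.card = k)
    (hfp : ∀ I ∈ P, ∃ T S : Finset V, T ⊆ S ∧ S ⊆ I ∧ I ⊆ S ∪ C T ∧ S.card ≤ q) :
    (P.card : ℝ) ≤ ((Fintype.card V + 1 : ℝ) ^ q) ^ 2 * ((r / k) ^ k * Real.exp k) := by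
  have hk0 : (0 : ℝ) < k := by exact_mod_cast hk
  have hr0 : 0 < r := hk0.trans_le hkr
  set Q := Finset.univ.filter fun S : Finset V => S.card ≤ q with hQ
  have hsub : P ⊆ Q.biUnion fun T => Q.biUnion fun S =>
      ((C T).powerset.filter fun X => X.card ≤ k).image (S ∪ ·) := by
    intro I hI
    obtain ⟨T, S, hTS, hSI, hcov, hq⟩ := hfp I hI
    simp only [Finset.mem_biUnion, Finset.mem_image, Finset.mem_filter, Finset.mem_powerset]
    refine ⟨T, by simp [hQ, (Finset.card_le_card hTS).trans hq], S, by simp [hQ, hq], I ∩ C T,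
      ⟨Finset.inter_subset_right, ?_⟩, ?_⟩
    · rw [← hP I hI]
      exact Finset.card_le_card Finset.inter_subset_left
    · ext w
      have h1 := @hSI w
      have h2 := @hcov w
      simp only [Finset.mem_union, Finset.mem_inter] at *
      tauto
  have hQc : (Q.card : ℝ) ≤ (Fintype.card V + 1 : ℝ) ^ q := by
    exact_mod_cast card_small_sets (V := V) q
  have hX : ∀ T : Finset V, (((C T).powerset.filter fun X => X.card ≤ k).card : ℝ) ≤
      (r / k) ^ k * Real.exp k := by
    intro T
    refine (card_subsets_le (C T) k (r / k) ((one_le_div hk0).2 hkr)).trans ?_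
    gcongr
    rw [div_le_iff₀ (by positivity)]
    calc ((C T).card : ℝ) ≤ r := hC T
      _ = k * (r / k) := by field_simp
  have h1 : (P.card : ℝ) ≤ ∑ T ∈ Q, ∑ S ∈ Q, (r / k) ^ k * Real.exp k := by
    have h2 := ((Finset.card_le_card hsub).trans Finset.card_biUnion_le).trans
      (Finset.sum_le_sum fun T _ => Finset.card_biUnion_le)
    have h3 := Nat.cast_le (α := ℝ).2 h2
    push_cast at h3
    refine h3.trans (Finset.sum_le_sum fun T _ => Finset.sum_le_sum fun S _ => le_trans ?_ (hX T))
    exact_mod_cast Finset.card_image_le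
  refine h1.trans ?_
  rw [Finset.sum_const, Finset.sum_const, nsmul_eq_mul, nsmul_eq_mul, ← mul_assoc, ← sq]
  gcongr

end Fingerprint

/-! ### Sets without a copy of `F` -/

lemma sum_degree_le_turan {W : Type*} {m k : ℕ} (F : SimpleGraph W) (G : SimpleGraph (Fin m))
    [DecidableRel G.Adj] (I : Finset (Fin m)) (hk : I.card = k)
    (hI : ¬ ContainsCopy F (G.induce (I : Set (Fin m)))) :
    ∑ v ∈ I, (I.filter (G.Adj v)).card ≤ 2 * turanNum k F := by
  classical
  let e : I ≃ Fin k := I.equivFinOfCardEq hk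
  let H : SimpleGraph (Fin k) := G.comap fun i => (e.symm i : Fin m)
  have hH : ¬ ContainsCopy F H := by
    rintro ⟨f, hf, hadj⟩
    refine hI ⟨fun w => ⟨(e.symm (f w)).1, (e.symm (f w)).2⟩, fun x y hxy => ?_, fun x y h => ?_⟩
    · apply hf
      apply e.symm.injective
      exact Subtype.ext (Subtype.mk.inj hxy)
    · exact hadj h
  have hle : Nat.card H.edgeSet ≤ turanNum k F := by
    refine le_csSup ⟨Nat.card (Sym2 (Fin k)), ?_⟩ ⟨H, hH, rfl⟩
    rintro _ ⟨G', _, rfl⟩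
    exact Nat.card_le_card_of_injective _ Subtype.val_injective
  have hsum : ∑ v ∈ I, (I.filter (G.Adj v)).card = ∑ i, H.degree i := by
    rw [← Finset.sum_coe_sort I, ← Equiv.sum_comp e.symm]
    refine Finset.sum_congr rfl fun i _ => ?_
    rw [← SimpleGraph.card_neighborFinset_eq_degree]
    refine (Finset.card_bij (fun j _ => ((e.symm j : I) : Fin m)) ?_ ?_ ?_).symm
    · intro j hj
      rw [SimpleGraph.mem_neighborFinset] at hj
      exact Finset.mem_filter.2 ⟨(e.symm j).2, hj⟩
    · intro x _ y _ h
      exact e.symm.injective (Subtype.ext h)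
    · intro b hb
      rw [Finset.mem_filter] at hb
      refine ⟨e ⟨b, hb.1⟩, ?_, by simp⟩
      rw [SimpleGraph.mem_neighborFinset]
      simp only [H, SimpleGraph.comap_adj, Equiv.symm_apply_apply]
      exact hb.2
  rw [hsum, H.sum_degrees_eq_twice_card_edges]
  rw [Nat.card_eq_fintype_card, ← SimpleGraph.edgeFinset_card] at hle
  omega

/-- The graph induced on `U` witnesses the bound; sets of size exactly `k` suffice because being
free of `F` passes to subsets. -/
lemma minFIndep_lt {W : Type*} {m n k t : ℕ} (F : SimpleGraph W) (G : SimpleGraph (Fin m))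
    (hG : ¬ ContainsCopy (⊤ : SimpleGraph (Fin t)) G) (U : Finset (Fin m)) (hU : U.card = n)
    (hk : 0 < k)
    (h : ∀ I : Finset (Fin m), I.card = k → I ⊆ U →
      ContainsCopy F (G.induce (I : Set (Fin m)))) :
    minFIndep F (⊤ : SimpleGraph (Fin t)) n < k := by
  classical
  let e : U ≃ Fin n := U.equivFinOfCardEq hU
  let g : Fin n ↪ Fin m := ⟨fun i => (e.symm i : Fin m),
    fun x y hxy => e.symm.injective (Subtype.ext hxy)⟩
  let H : SimpleGraph (Fin n) := G.comap g
  have hH : ¬ ContainsCopy (⊤ : SimpleGraph (Fin t)) H := by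
    rintro ⟨f, hf, hadj⟩
    exact hG ⟨fun x => g (f x), g.injective.comp hf, fun x y hxy => hadj hxy⟩
  refine lt_of_le_of_lt (Nat.sInf_le ⟨H, hH, rfl⟩) ?_
  suffices hs : fIndepNum F H ≤ k - 1 by omega
  refine csSup_le' ?_
  rintro _ ⟨S, rfl, hS⟩
  by_contra! hlt
  obtain ⟨S', hS', hcard⟩ := Finset.exists_subset_card_eq (show k ≤ S.card by omega)
  obtain ⟨f, hf, hadj⟩ := h (S'.map g) (by rw [Finset.card_map, hcard]) (by
    intro x hx
    obtain ⟨i, _, rfl⟩ := Finset.mem_map.1 hx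
    exact (e.symm i).2)
  have hmem : ∀ w, ∃ i ∈ S', g i = (f w).1 := fun w => by
    simpa using (f w).2
  choose φ hφ hgφ using hmem
  refine hS ⟨fun w => ⟨φ w, hS' (hφ w)⟩, fun x y hxy => ?_, fun x y hxy => ?_⟩
  · apply hf
    apply Subtype.ext
    rw [← hgφ, ← hgφ, Subtype.mk.inj hxy]
  · have := hadj hxy
    simp only [SimpleGraph.comap_adj, Function.Embedding.subtype_apply, ← hgφ] at this
    exact this

/-- The combinatorial core: `h1` makes the fingerprints as small as `2k / log m`, `h3` says that `k`
is at most the container size `2 c₃ m / √d`, and `h2` is the condition for the union bound over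
random `n`-subsets. -/
lemma minFIndep_lt_of_pseudorandom {W : Type*} {m n k t d : ℕ} (F : SimpleGraph W) (a c₀ c₃ : ℝ)
    (ha0 : 0 ≤ a) (hc₀ : 0 < c₀) (hc₃ : 0 < c₃)
    (hF : ∀ b : ℕ, 0 < b → (turanNum b F : ℝ) ≤ c₀ * (b : ℝ) ^ (1 + a))
    (G : SimpleGraph (Fin m)) [DecidableRel G.Adj]
    (hG : ¬ ContainsCopy (⊤ : SimpleGraph (Fin t)) G)
    (hreg : G.IsRegularOfDegree d) (hA : (G.adjMatrix ℝ).IsHermitian) (i₀ : Fin m)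
    (heig : ∀ i, i ≠ i₀ → |hA.eigenvalues i| ≤ c₃ * √d)
    (hm : 3 ≤ m) (hk : 0 < k) (hd : c₃ * √d < d)
    (h1 : 4 * (1 + 2 * c₀) * (m / d) * Real.log m ^ 3 ≤ (k : ℝ) ^ (1 - a))
    (h2 : 2 * c₃ * Real.exp 9 * n < k * √d)
    (h3 : (k : ℝ) ≤ 2 * c₃ * m / √d) :
    minFIndep F (⊤ : SimpleGraph (Fin t)) n < k := by
  classical
  have hm0 : (0 : ℝ) < m := by exact_mod_cast (by omega : 0 < m)
  have hm3 : (3 : ℝ) ≤ m := by exact_mod_cast hm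
  have hd0 : (0 : ℝ) < d := lt_of_le_of_lt (by positivity) hd
  have hs0 : 0 < √(d : ℝ) := Real.sqrt_pos.2 hd0
  have hss : √(d : ℝ) * √d = d := Real.mul_self_sqrt hd0.le
  have hk0 : (0 : ℝ) < k := by exact_mod_cast hk
  have hk1 : (1 : ℝ) ≤ k := by exact_mod_cast hk
  have hnm : n ≤ m := by
    rw [le_div_iff₀ hs0] at h3
    have e1 : (1 : ℝ) ≤ Real.exp 9 := Real.one_le_exp (by norm_num)
    have e2 : (2 * c₃) * (n : ℝ) ≤ (2 * c₃) * m := by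
      calc (2 * c₃) * (n : ℝ) ≤ 2 * c₃ * Real.exp 9 * n := by
            exact mul_le_mul_of_nonneg_right
              (le_mul_of_one_le_right (by positivity) e1) (by positivity)
        _ ≤ _ := h2.le.trans h3
    exact_mod_cast le_of_mul_le_mul_left e2 (by positivity)
  set L := Real.log m with hL
  have hL1 : 1 ≤ L := by
    rw [hL, Real.le_log_iff_exp_le hm0]
    exact Real.exp_one_lt_three.le.trans hm3
  have hL0 : 0 < L := by linarith
  have hlog : Real.log (m + 1) ≤ 2 * L := by
    rw [hL, ← Real.log_rpow hm0, Real.log_le_log_iff (by positivity) (by positivity)]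
    norm_num
    nlinarith
  have hlog0 : 0 ≤ Real.log (m + 1) := Real.log_nonneg (by linarith)
  set D := 2 * c₀ * (k : ℝ) ^ a with hD
  have hka : 1 ≤ (k : ℝ) ^ a := Real.one_le_rpow hk1 ha0
  have hD0 : 0 < D := by positivity
  set β := (d : ℝ) / (2 * m) with hβ
  have hβ0 : 0 < β := by positivity
  set r := 2 * (c₃ * √d) * m / d with hr
  have hr' : r = 2 * c₃ * m / √d := by
    rw [hr, div_eq_div_iff hd0.ne' hs0.ne']
    linear_combination 2 * c₃ * m * hss
  obtain ⟨C, hC, hCJ⟩ := container G β r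
    (fun A h => exists_large_degree G d _ hreg hA i₀ heig (by positivity) hd A h) Finset.univ
  set q := ⌊2 * k / L⌋₊ with hq
  set P : Finset (Finset (Fin m)) := Finset.univ.filter fun I =>
    I.card = k ∧ ¬ ContainsCopy F (G.induce (I : Set (Fin m))) with hP
  have hfp : ∀ I ∈ P, ∃ T S : Finset (Fin m), T ⊆ S ∧ S ⊆ I ∧ I ⊆ S ∪ C T ∧ S.card ≤ q := by
    intro I hI
    obtain ⟨hIk, hIF⟩ := (Finset.mem_filter.1 hI).2
    have hsum : ∑ v ∈ I, ((I.filter (G.Adj v)).card : ℝ) ≤ D * k := by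
      have e1 : ∑ v ∈ I, ((I.filter (G.Adj v)).card : ℝ) ≤ 2 * turanNum k F := by
        exact_mod_cast sum_degree_le_turan F G I hIk hIF
      have e2 : (k : ℝ) ^ (1 + a) = k * (k : ℝ) ^ a := by
        rw [Real.rpow_add hk0, Real.rpow_one]
      have e3 := hF k hk
      rw [e2] at e3
      rw [hD]
      linarith
    obtain ⟨T, S, hTS, hSI, hcov, hcard⟩ := fingerprint G C β D L k hβ0 hD0 hL0 hCJ I hsum
    refine ⟨T, S, hTS, hSI, hcov, Nat.le_floor (hcard.trans ?_)⟩
    rw [Fintype.card_fin]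
    have e1 : 1 + L * D ≤ L * ((1 + 2 * c₀) * (k : ℝ) ^ a) := by
      rw [hD]
      nlinarith
    have e2 : Real.log (m + 1) / β * (1 + L * D) ≤
        (2 * L) / β * (L * ((1 + 2 * c₀) * (k : ℝ) ^ a)) := by gcongr
    have e3 : (2 * L) / β * (L * ((1 + 2 * c₀) * (k : ℝ) ^ a)) =
        (4 * (1 + 2 * c₀) * (m / d) * L ^ 3) * (k : ℝ) ^ a / L := by
      rw [hβ]
      field_simp
      ring
    have e4 : (4 * (1 + 2 * c₀) * (m / d) * L ^ 3) * (k : ℝ) ^ a / L ≤ k / L := by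
      have : (k : ℝ) ^ (1 - a) * (k : ℝ) ^ a = k := by
        rw [← Real.rpow_add hk0]
        simp
      rw [div_le_div_iff_of_pos_right hL0]
      calc _ ≤ (k : ℝ) ^ (1 - a) * (k : ℝ) ^ a := by gcongr
        _ = k := this
    have e5 : 2 * k / L = k / L + k / L := by ring
    linarith
  have hPc := card_family_le P C k q r hk (hr' ▸ h3) hC
    (fun I hI => (Finset.mem_filter.1 hI).2.1) hfp
  rw [Fintype.card_fin] at hPc
  -- Fingerprints of size at most `q = ⌊2k / L⌋` contribute only a factor exponential in `k`.
  have hpow : (((m : ℝ) + 1) ^ q) ^ 2 ≤ Real.exp 8 ^ k := by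
    rw [← pow_mul, ← Real.exp_log (show (0 : ℝ) < m + 1 by positivity), ← Real.exp_nat_mul,
      ← Real.exp_nat_mul, Real.exp_le_exp]
    have hqr : (q : ℝ) ≤ 2 * k / L := Nat.floor_le (by positivity)
    push_cast
    calc (q : ℝ) * 2 * Real.log (m + 1) ≤ (2 * k / L) * 2 * (2 * L) := by gcongr
      _ = k * 8 := by field_simp; norm_num
  have hlt : P.card * n ^ k < (Fintype.card (Fin m)) ^ k := by
    rw [Fintype.card_fin]
    have : (P.card : ℝ) * n ^ k < m ^ k := by
      calc (P.card : ℝ) * n ^ k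
          ≤ (Real.exp 8 ^ k * ((r / k) ^ k * Real.exp k)) * n ^ k := by
            gcongr
            exact hPc.trans (by gcongr)
        _ = (Real.exp 9 * (r / k) * n) ^ k := by
            rw [show (9 : ℝ) = 8 + 1 by norm_num, Real.exp_add, ← Real.exp_one_pow k]
            simp only [mul_pow]
            ring
        _ < m ^ k := by
            refine pow_lt_pow_left₀ ?_ (by positivity) hk.ne'
            rw [hr']
            have : Real.exp 9 * (2 * c₃ * m / √d / k) * n
                = (2 * c₃ * Real.exp 9 * n) * m / (k * √d) := by
              field_simp
            rw [this, div_lt_iff₀ (by positivity), mul_comm (m : ℝ)]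
            exact mul_lt_mul_of_pos_right h2 hm0
    exact_mod_cast this
  obtain ⟨U, hU, hUP⟩ := exists_avoiding P n k (by simpa using hnm)
    (fun I hI => (Finset.mem_filter.1 hI).2.1) hlt
  refine minFIndep_lt F G hG U hU hk fun I hIk hIU => ?_
  by_contra hcon
  exact hUP I (Finset.mem_filter.2 ⟨Finset.mem_univ _, hIk, hcon⟩) hIU

/-! ### The choice of parameters -/

lemma eventually_mul_log_rpow_le (s b B : ℝ) (hs : 0 < s) :
    ∀ᶠ n : ℕ in Filter.atTop, B * Real.log n ^ b ≤ (n : ℝ) ^ s := by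
  have h1 := (isLittleO_log_rpow_rpow_atTop b hs).comp_tendsto tendsto_natCast_atTop_atTop
  have h2 := h1.def (show (0 : ℝ) < (|B| + 1)⁻¹ by positivity)
  filter_upwards [h2] with n hn
  simp only [Function.comp] at hn
  have hL : 0 ≤ Real.log n ^ b := Real.rpow_nonneg (Real.log_natCast_nonneg n) b
  rw [Real.norm_of_nonneg hL, Real.norm_of_nonneg (by positivity),
    inv_mul_eq_div, le_div_iff₀ (by positivity)] at hn
  nlinarith [le_abs_self B]

theorem stmt5 {W : Type*} [Fintype W] (t : ℕ) (ht : 3 ≤ t) (a : ℝ)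
    (ha0 : 0 ≤ a) (ha1 : a < ((t : ℝ) - 2) / ((t : ℝ) - 1))
    (F : SimpleGraph W) (c₀ : ℝ) (hc₀ : 0 < c₀)
    (hF : ∀ b : ℕ, 0 < b → (turanNum b F : ℝ) ≤ c₀ * (b : ℝ) ^ (1 + a))
    (c₁ c₂ c₃ : ℝ) (hc₁ : 0 < c₁) (hc₂ : 0 < c₂) (hc₃ : 0 < c₃) (M : ℕ)
    (hpseudo : ∀ m : ℕ, m > M →
      ∃ (G : SimpleGraph (Fin m)) (_ : DecidableRel G.Adj) (d : ℕ) (lam : ℝ),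
        ¬ ContainsCopy (⊤ : SimpleGraph (Fin t)) G ∧
        G.IsRegularOfDegree d ∧
        c₁ * (m : ℝ) ^ (1 - 1 / (2 * (t : ℝ) - 3)) ≤ (d : ℝ) ∧
        (d : ℝ) ≤ c₂ * (m : ℝ) ^ (1 - 1 / (2 * (t : ℝ) - 3)) ∧
        lam ≤ c₃ * (d : ℝ) ^ ((1 : ℝ) / 2) ∧
        ∃ (hA : (G.adjMatrix ℝ).IsHermitian) (i₀ : Fin m),
          ∀ i : Fin m, i ≠ i₀ → |hA.eigenvalues i| ≤ lam) :
    ∃ (C : ℝ) (N : ℕ), 0 < C ∧ ∀ n : ℕ, n > N →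
      (minFIndep F (⊤ : SimpleGraph (Fin t)) n : ℝ) ≤
        C * (n : ℝ) ^ ((1 : ℝ) / ((1 - a) * ((t : ℝ) - 2) + 1)) *
          Real.log n ^ (3 * ((t : ℝ) - 2) / ((1 - a) * ((t : ℝ) - 2) + 1)) := by
  classical
  set T : ℝ := (t : ℝ) with hT
  have hT3 : 3 ≤ T := by
    rw [hT]
    exact_mod_cast ht
  have ha2 : a * (T - 1) < T - 2 := (lt_div_iff₀ (by linarith)).1 ha1
  have ha : 0 < 1 - a := by nlinarith
  set γ := (1 - a) * (T - 2) + 1 with hγ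
  have hγ1 : 1 ≤ γ := by nlinarith
  have hγ0 : 0 < γ := by linarith
  set θ := (1 - a) * (T - 1) - 1 with hθ
  have hθ0 : 0 < θ := by
    rw [hθ]
    linarith
  -- `C` is the sum of the constants needed in the two lower bounds on `k`: `K` for `k ^ (1 - a)`
  -- and `4 c₃ e⁹ / √c₁` for `k √d`.
  set K := 4 * (1 + 2 * c₀) * (2 / c₁) * (2 * T - 2) ^ 3 with hK
  have hK0 : 0 < K := by
    have : 0 < 2 * T - 2 := by linarith
    positivity
  set C := K ^ (1 / (1 - a)) + 4 * c₃ * Real.exp 9 / √c₁ + 1 with hC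
  have hC0 : 0 < C := by positivity
  set Y := (M : ℝ) + 3 + 2 * c₃ / √c₁ with hY
  set B := (C + 1) * √c₂ / (2 * c₃) with hB
  have hev : ∀ᶠ n : ℕ in Filter.atTop, 3 ≤ n ∧
      Y * Real.log n ^ (3 / γ) ≤ (n : ℝ) ^ ((1 - a) / γ) ∧
      B * Real.log n ^ (3 * (T - 1) / γ + 3 * (T - 2) / γ) ≤ (n : ℝ) ^ (θ / γ) :=
    (Filter.eventually_ge_atTop 3).and
      ((eventually_mul_log_rpow_le _ _ _ (by positivity)).and
        (eventually_mul_log_rpow_le _ _ _ (by positivity)))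
  obtain ⟨N₀, hN₀⟩ := Filter.eventually_atTop.1 hev
  refine ⟨C, N₀, hC0, fun n hn => ?_⟩
  obtain ⟨hn3, hn1, hn2⟩ := hN₀ n hn.le
  have hn3' : (3 : ℝ) ≤ n := by exact_mod_cast hn3
  have hn0 : (0 : ℝ) < n := by linarith
  set L := Real.log n with hL
  have hL1 : 1 ≤ L := by
    rw [hL, Real.le_log_iff_exp_le hn0]
    exact Real.exp_one_lt_three.le.trans hn3'
  have hL0 : 0 < L := by linarith
  rw [mul_assoc]
  set X := (n : ℝ) ^ (1 / γ) * L ^ (3 * (T - 2) / γ) with hX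
  have hX1 : 1 ≤ X := one_le_mul_of_one_le_of_one_le
    (Real.one_le_rpow (by linarith) (by positivity))
    (Real.one_le_rpow hL1 (div_nonneg (by linarith) hγ0.le))
  have hX0 : 0 < X := by linarith
  -- `z` is the target size of `m ^ (1 / (2t - 3))`, which is `m / d` up to a constant; it solves
  -- `X * z ^ (t - 2) = n` and `X ^ (1 - a) = z * L ^ 3`, where `X` is the bound without `C`.
  set z := (n : ℝ) ^ ((1 - a) / γ) * L ^ (-(3 / γ)) with hz
  have hz0 : 0 < z := by positivity
  have hzY : Y ≤ z := by
    rw [hz, Real.rpow_neg hL0.le, ← div_eq_mul_inv, le_div_iff₀ (by positivity)]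
    exact hn1
  have hz1 : 1 ≤ z := by
    refine le_trans ?_ hzY
    rw [hY]
    have : 0 ≤ 2 * c₃ / √c₁ := by positivity
    have : (0 : ℝ) ≤ M := by positivity
    linarith
  have hzpow : ∀ s, z ^ s = (n : ℝ) ^ ((1 - a) / γ * s) * L ^ (-(3 / γ) * s) := by
    intro s
    rw [hz, Real.mul_rpow (by positivity) (by positivity), ← Real.rpow_mul hn0.le,
      ← Real.rpow_mul hL0.le]
  have hXz : X * z ^ (T - 2) = n := by
    rw [hzpow, hX, mul_mul_mul_comm, ← Real.rpow_add hn0, ← Real.rpow_add hL0]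
    have e1 : 1 / γ + (1 - a) / γ * (T - 2) = 1 := by
      field_simp
      rw [hγ]; ring
    have e2 : 3 * (T - 2) / γ + -(3 / γ) * (T - 2) = 0 := by ring
    rw [e1, e2, Real.rpow_one, Real.rpow_zero, mul_one]
  have hXa : X ^ (1 - a) = z * L ^ 3 := by
    rw [hX, Real.mul_rpow (by positivity) (by positivity), ← Real.rpow_mul hn0.le,
      ← Real.rpow_mul hL0.le, hz, mul_assoc, ← Real.rpow_natCast L 3, ← Real.rpow_add hL0]
    congr 2
    · ring
    · field_simp
      rw [hγ]; push_cast; ring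
  -- `θ > 0`, which is the assumption `a < (t - 2) / (t - 1)`, leaves room for all logarithms.
  have hzX : B * X ≤ z ^ (T - 1) := by
    have e1 : (n : ℝ) ^ ((1 - a) / γ * (T - 1)) = n ^ (θ / γ) * n ^ (1 / γ) := by
      rw [← Real.rpow_add hn0]
      congr 1
      rw [hθ]
      ring
    have e2 : L ^ (3 * (T - 2) / γ) = 
        L ^ (3 * (T - 1) / γ + 3 * (T - 2) / γ) * L ^ (-(3 / γ) * (T - 1)) := by
      rw [← Real.rpow_add hL0]
      congr 1
      ring
    rw [hzpow, e1, hX, e2]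
    calc _ = (B * L ^ (3 * (T - 1) / γ + 3 * (T - 2) / γ)) *
          ((n : ℝ) ^ (1 / γ) * L ^ (-(3 / γ) * (T - 1))) := by ring
      _ ≤ (n : ℝ) ^ (θ / γ) * ((n : ℝ) ^ (1 / γ) * L ^ (-(3 / γ) * (T - 1))) := by gcongr
      _ = _ := by ring
  have hzn : z ≤ n := by
    have e1 : (n : ℝ) ^ ((1 - a) / γ) ≤ (n : ℝ) ^ (1 : ℝ) :=
      Real.rpow_le_rpow_of_exponent_le (by linarith) ((div_le_one hγ0).2 (by linarith))
    have e2 : L ^ (-(3 / γ)) ≤ 1 := Real.rpow_le_one_of_one_le_of_nonpos hL1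
      (neg_nonpos.2 (by positivity))
    rw [Real.rpow_one] at e1
    calc z ≤ n * 1 := mul_le_mul e1 e2 (by positivity) hn0.le
      _ = n := mul_one _
  set Q := 2 * T - 3 with hQ
  have hQ3 : 3 ≤ Q := by
    rw [hQ]
    linarith
  have hQ0 : 0 < Q := by linarith
  set m := ⌈z ^ Q⌉₊ with hm
  have hzQ1 : 1 ≤ z ^ Q := Real.one_le_rpow hz1 hQ0.le
  have hm1 : z ^ Q ≤ m := Nat.le_ceil _
  have hm2 : (m : ℝ) ≤ 2 * z ^ Q := by
    have := (Nat.ceil_lt_add_one (by positivity : 0 ≤ z ^ Q)).le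
    linarith
  have hm0 : (0 : ℝ) < m := by linarith
  have hmY : Y ≤ m := by
    refine hzY.trans (le_trans ?_ hm1)
    calc z = z ^ (1 : ℝ) := (Real.rpow_one z).symm
      _ ≤ z ^ Q := Real.rpow_le_rpow_of_exponent_le hz1 (by linarith)
  have hmM : M + 3 ≤ m := by
    have : 0 ≤ 2 * c₃ / √c₁ := by positivity
    have : (M : ℝ) + 3 ≤ m := by linarith
    exact_mod_cast this
  set y := (m : ℝ) ^ (1 / Q) with hy
  have hy0 : 0 < y := by positivity
  have hyQ : y ^ Q = m := by
    rw [hy, ← Real.rpow_mul hm0.le, one_div_mul_cancel hQ0.ne', Real.rpow_one]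
  have hzy : z ≤ y := by
    calc z = (z ^ Q) ^ (1 / Q) := by
          rw [← Real.rpow_mul hz0.le, mul_one_div_cancel hQ0.ne', Real.rpow_one]
      _ ≤ y := Real.rpow_le_rpow (by positivity) hm1 (by positivity)
  have hyz : y ≤ 2 * z := by
    have e1 : (2 : ℝ) ≤ 2 ^ Q := by
      calc (2 : ℝ) = 2 ^ (1 : ℝ) := (Real.rpow_one 2).symm
        _ ≤ 2 ^ Q := Real.rpow_le_rpow_of_exponent_le (by norm_num) (by linarith)
    have e2 : (m : ℝ) ≤ (2 * z) ^ Q := by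
      rw [Real.mul_rpow (by norm_num) hz0.le]
      exact hm2.trans (mul_le_mul_of_nonneg_right e1 (by positivity))
    calc y ≤ ((2 * z) ^ Q) ^ (1 / Q) := Real.rpow_le_rpow hm0.le e2 (by positivity)
      _ = 2 * z := by
          rw [← Real.rpow_mul (by positivity), mul_one_div_cancel hQ0.ne', Real.rpow_one]
  have hy1 : 1 ≤ y := hz1.trans hzy
  obtain ⟨G, hdec, d, lam, hG, hreg, hd1, hd2, hlam, hA, i₀, heig⟩ := hpseudo m (by omega)
  have hmy : (m : ℝ) ^ (1 - 1 / Q) = y ^ (T - 2) * y ^ (T - 2) := by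
    rw [← Real.rpow_add hy0, hy, ← Real.rpow_mul hm0.le]
    congr 1
    field_simp
    rw [hQ]; ring
  rw [hmy] at hd1 hd2
  set u := y ^ (T - 2) with hu
  have hu0 : 0 < u := by positivity
  have hmu : (m : ℝ) = u * u * y := by
    rw [← hyQ, hu, ← Real.rpow_add hy0, ← Real.rpow_add_one hy0.ne']
    congr 1
    rw [hQ]; ring
  have hd0 : (0 : ℝ) < d := lt_of_lt_of_le (by positivity) hd1
  have hss : √(d : ℝ) * √d = d := Real.mul_self_sqrt hd0.le
  have hs1 : √c₁ * u ≤ √d := by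
    rw [← Real.sqrt_mul_self hu0.le, ← Real.sqrt_mul hc₁.le]
    exact Real.sqrt_le_sqrt hd1
  have hs2 : √d ≤ √c₂ * u := by
    rw [← Real.sqrt_mul_self hu0.le, ← Real.sqrt_mul hc₂.le]
    exact Real.sqrt_le_sqrt hd2
  have hc₁s : 0 < √c₁ := Real.sqrt_pos.2 hc₁
  have hc₂s : 0 < √c₂ := Real.sqrt_pos.2 hc₂
  have hs0 : 0 < √(d : ℝ) := Real.sqrt_pos.2 hd0
  have hzu : z ^ (T - 2) ≤ u := Real.rpow_le_rpow hz0.le hzy (by linarith)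
  have hzu1 : z ≤ u := by
    refine le_trans ?_ hzu
    calc z = z ^ (1 : ℝ) := (Real.rpow_one z).symm
      _ ≤ z ^ (T - 2) := Real.rpow_le_rpow_of_exponent_le hz1 (by linarith)
  set k := ⌈C * X⌉₊ with hk
  have hk0 : 0 < k := Nat.ceil_pos.2 (by positivity)
  have hk1 : C * X ≤ k := Nat.le_ceil _
  have hk2 : (k : ℝ) ≤ (C + 1) * X := by
    have := (Nat.ceil_lt_add_one (by positivity : 0 ≤ C * X)).le
    linarith
  suffices hmain : minFIndep F (⊤ : SimpleGraph (Fin t)) n < k from (Nat.lt_ceil.1 hmain).le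
  rw [← Real.sqrt_eq_rpow] at hlam
  refine minFIndep_lt_of_pseudorandom F a c₀ c₃ ha0 hc₀ hc₃ hF G hG hreg hA i₀
    (fun i hi => (heig i hi).trans hlam) (by omega) hk0 ?_ ?_ ?_ ?_
  · have e1 : c₃ < √(d : ℝ) := by
      refine lt_of_lt_of_le ?_ hs1
      have e2 : 2 * c₃ / √c₁ ≤ u := by
        refine le_trans ?_ (hzY.trans hzu1)
        rw [hY]
        have : (0 : ℝ) ≤ M := by positivity
        linarith
      rw [div_le_iff₀ hc₁s] at e2
      linarith
    calc c₃ * √d < √(d : ℝ) * √d := mul_lt_mul_of_pos_right e1 hs0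
      _ = d := hss
  · have e1 : (m : ℝ) / d ≤ 2 * z / c₁ := by
      rw [div_le_div_iff₀ hd0 hc₁, hmu]
      calc u * u * y * c₁ = y * (c₁ * (u * u)) := by ring
        _ ≤ 2 * z * d := by gcongr
    have e2 : Real.log m ≤ (2 * T - 2) * L := by
      rw [hL, ← Real.log_rpow hn0]
      refine Real.log_le_log hm0 (hm2.trans ?_)
      calc 2 * z ^ Q ≤ n * (n : ℝ) ^ Q := by
            gcongr
            linarith
        _ = (n : ℝ) ^ (2 * T - 2) := by
            rw [mul_comm, ← Real.rpow_add_one hn0.ne']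
            congr 1
            rw [hQ]; ring
    have e3 : 0 ≤ Real.log m := Real.log_natCast_nonneg m
    have e4 : K ≤ C ^ (1 - a) := by
      calc K = (K ^ (1 / (1 - a))) ^ (1 - a) := by
            rw [← Real.rpow_mul hK0.le, one_div_mul_cancel ha.ne', Real.rpow_one]
        _ ≤ C ^ (1 - a) := by
            refine Real.rpow_le_rpow (by positivity) ?_ ha.le
            rw [hC]
            have : 0 ≤ 4 * c₃ * Real.exp 9 / √c₁ := by positivity
            linarith
    calc 4 * (1 + 2 * c₀) * (m / d) * Real.log m ^ 3
        ≤ 4 * (1 + 2 * c₀) * (2 * z / c₁) * ((2 * T - 2) * L) ^ 3 := by gcongr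
      _ = K * X ^ (1 - a) := by
          rw [hXa, hK]
          ring
      _ ≤ C ^ (1 - a) * X ^ (1 - a) := by gcongr
      _ = (C * X) ^ (1 - a) := (Real.mul_rpow hC0.le hX0.le).symm
      _ ≤ (k : ℝ) ^ (1 - a) := Real.rpow_le_rpow (by positivity) hk1 ha.le
  · have e1 : 4 * c₃ * Real.exp 9 ≤ C * √c₁ := by
      rw [← div_le_iff₀ hc₁s, hC]
      have : 0 < K ^ (1 / (1 - a)) := by positivity
      linarith
    have e2 : 0 < c₃ * Real.exp 9 * n := by positivity
    calc 2 * c₃ * Real.exp 9 * n < 4 * c₃ * Real.exp 9 * n := by linarith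
      _ ≤ (C * √c₁) * n := by gcongr
      _ = (C * X) * (√c₁ * z ^ (T - 2)) := by
          rw [← hXz]
          ring
      _ ≤ k * √d := by
          gcongr
          refine le_trans ?_ hs1
          gcongr
  · rw [le_div_iff₀ hs0]
    calc (k : ℝ) * √d ≤ ((C + 1) * X) * (√c₂ * u) := by gcongr
      _ = 2 * c₃ * (B * X) * u := by
          rw [hB]
          field_simp
      _ ≤ 2 * c₃ * (u * y) * u := by
          refine mul_le_mul_of_nonneg_right
            (mul_le_mul_of_nonneg_left (hzX.trans ?_) (by positivity)) hu0.le
          rw [hu, ← Real.rpow_add_one hy0.ne']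
          calc z ^ (T - 1) ≤ y ^ (T - 1) := Real.rpow_le_rpow hz0.le hzy (by linarith)
            _ = y ^ (T - 2 + 1) := by congr 1; ring
      _ = 2 * c₃ * m := by
          rw [hmu]
          ring
end

section
/- For every integer r ≥ 2 and positive integers s_1,…,s_r, setting s := s_1+⋯+s_r, there exist constants C > 0 and N such that for every integer n > N, f_{K_{s_1,…,s_r},K_{r+2}}(n) ≤ C · n^{(2s−3)/(4s−5)} · (log n)^{3}. -/
open Finset

/-! ### The Hermitian unital -/

/-- O'Nan's theorem for the Hermitian curve `σ y + y = x * σ x`, where `σ` is an involution of `K`: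
it contains no O'Nan configuration. Concretely, let `A`, `B`, `C` be non-collinear points of the
curve with sides `AB : y = a1 * x + b1`, `AC : y = a2 * x + b2`, `BC : y = a3 * x + b3`. A line
`y = a4 * x + b4` through none of `A`, `B`, `C` cannot meet the three sides in points `D`, `E`, `F`
of the curve. The proof compares Menelaus' theorem for this line with the Gram determinant of the
Hermitian form at `A`, `B`, `C`. -/
lemma onan_core {K : Type*} [Field K] (σ : K →+* K)
    (a1 b1 a4 b4 xA yA xB yB xC yC xD yD xE yE xF yF : K)
    (hσ : ∀ z, σ (σ z) = z)
    (iA : σ yA + yA = xA * σ xA) (iB : σ yB + yB = xB * σ xB) (iC : σ yC + yC = xC * σ xC)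
    (iD : σ yD + yD = xD * σ xD) (iE : σ yE + yE = xE * σ xE) (iF : σ yF + yF = xF * σ xF)
    (a2 b2 a3 b3 : K)
    (hA1 : yA = a1 * xA + b1) (hB1 : yB = a1 * xB + b1) (hD1 : yD = a1 * xD + b1)
    (hA2 : yA = a2 * xA + b2) (hC2 : yC = a2 * xC + b2) (hE2 : yE = a2 * xE + b2)
    (hB3 : yB = a3 * xB + b3) (hC3 : yC = a3 * xC + b3) (hF3 : yF = a3 * xF + b3)
    (hD4 : yD = a4 * xD + b4) (hE4 : yE = a4 * xE + b4) (hF4 : yF = a4 * xF + b4)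
    (nAB : xA ≠ xB) (nC1 : yC - a1 * xC - b1 ≠ 0)
    (nA4 : yA - a4 * xA - b4 ≠ 0) (nB4 : yB - a4 * xB - b4 ≠ 0) (nC4 : yC - a4 * xC - b4 ≠ 0)
    (nDA : xA - xD ≠ 0) (nFB : xB - xF ≠ 0) (nEC : xC - xE ≠ 0) : False := by
  -- Menelaus' theorem: the signed ratios in which the line `DEF` divides the sides of `ABC` have
  -- product `-1` (`men`); `m1`, `m2`, `m3` compute the ratios from the equation of the line
  have m1 : (xD - xB) * (yA - a4 * xA - b4) + (xA - xD) * (yB - a4 * xB - b4) = 0 := by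
    rw [hD1] at hD4; rw [hA1, hB1]; linear_combination (xA - xB) * hD4
  have m2 : (xF - xC) * (yB - a4 * xB - b4) + (xB - xF) * (yC - a4 * xC - b4) = 0 := by
    rw [hF3] at hF4; rw [hB3, hC3]; linear_combination (xB - xC) * hF4
  have m3 : (xE - xA) * (yC - a4 * xC - b4) + (xC - xE) * (yA - a4 * xA - b4) = 0 := by
    rw [hE2] at hE4; rw [hC2, hA2]; linear_combination (xC - xA) * hE4
  have det : (xB - xA) * (yC - a1 * xC - b1) = xA * (yB - yC) + xB * (yC - yA) + xC * (yA - yB) := by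
    rw [hA1, hB1]; ring
  have hdet : xA * (yB - yC) + xB * (yC - yA) + xC * (yA - yB) ≠ 0 := by
    rw [← det]; exact mul_ne_zero (sub_ne_zero.2 nAB.symm) nC1
  clear det nC1
  have men : (xD - xB) * (xF - xC) * (xE - xA) = - ((xA - xD) * (xB - xF) * (xC - xE)) := by
    have h0 := mul_ne_zero (mul_ne_zero nA4 nB4) nC4
    apply mul_right_cancel₀ h0
    generalize yA - a4 * xA - b4 = gA at *
    generalize yB - a4 * xB - b4 = gB at *
    generalize yC - a4 * xC - b4 = gC at *
    linear_combination (xF - xC) * (xE - xA) * gB * gC * m1 - (xA - xD) * (xE - xA) * gB * gC * m2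
      + (xA - xD) * (xB - xF) * gB * gC * m3
  -- with `h(P, Q) = y_P + σ y_Q - x_P * σ x_Q`, the phase `h(P₁, P₂) / σ h(P₁, P₂)` is determined by
  -- the ratio in which a third curve point `P₃` of the line `P₁P₂` divides `P₁` and `P₂`
  have tr : ∀ (a b x1 y1 x2 y2 x3 y3 : K), y1 = a * x1 + b → y2 = a * x2 + b → y3 = a * x3 + b →
      σ y1 + y1 = x1 * σ x1 → σ y2 + y2 = x2 * σ x2 → σ y3 + y3 = x3 * σ x3 →
      (x3 - x2) * σ (x1 - x3) * (y1 + σ y2 - x1 * σ x2)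
        = - (σ (x3 - x2) * (x1 - x3) * σ (y1 + σ y2 - x1 * σ x2)) := by
    intro a b x1 y1 x2 y2 x3 y3 h1 h2 h3 i1 i2 i3
    simp only [map_sub, map_add, map_mul, hσ]
    have e1 : σ y1 = σ a * σ x1 + σ b := by rw [h1]; simp
    have e2 : σ y2 = σ a * σ x2 + σ b := by rw [h2]; simp
    have e3 : σ y3 = σ a * σ x3 + σ b := by rw [h3]; simp
    rw [e1, h1] at i1; rw [e2, h2] at i2; rw [e3, h3] at i3
    rw [e1, e2, h1, h2]
    generalize σ x1 = X1 at *
    generalize σ x2 = X2 at *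
    generalize σ x3 = X3 at *
    linear_combination (x1 - x2) * (X1 - X2) * i3 - (x3 - x2) * (X3 - X2) * i1
      - (x1 - x3) * (X1 - X3) * i2
  have t1 := tr a1 b1 xA yA xB yB xD yD hA1 hB1 hD1 iA iB iD
  have t2 := tr a3 b3 xB yB xC yC xF yF hB3 hC3 hF3 iB iC iF
  have t3 := tr a2 b2 xC yC xA yA xE yE hC2 hA2 hE2 iC iA iE
  set h1 := yA + σ yB - xA * σ xB with eh1
  set h2 := yB + σ yC - xB * σ xC with eh2
  set h3 := yC + σ yA - xC * σ xA with eh3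
  -- multiplying the three phases and inserting Menelaus' theorem
  have hH : h1 * h2 * h3 + σ h1 * σ h2 * σ h3 = 0 := by
    have men' := congrArg σ men
    simp only [map_mul, map_neg] at men'
    have w0 : (xA - xD) * (xB - xF) * (xC - xE) ≠ 0 := mul_ne_zero (mul_ne_zero nDA nFB) nEC
    have w1 : σ (xA - xD) * σ (xB - xF) * σ (xC - xE) ≠ 0 := by
      have := (map_ne_zero σ).2 w0
      simpa only [map_mul] using this
    have prod : ((xD - xB) * (xF - xC) * (xE - xA)) * (σ (xA - xD) * σ (xB - xF) * σ (xC - xE))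
          * (h1 * h2 * h3)
        = - ((σ (xD - xB) * σ (xF - xC) * σ (xE - xA)) * ((xA - xD) * (xB - xF) * (xC - xE))
          * (σ h1 * σ h2 * σ h3)) := by
      have : ∀ u1 u2 u3 v1 v2 v3 : K, u1 = -v1 → u2 = -v2 → u3 = -v3 →
          u1 * u2 * u3 = -(v1 * v2 * v3) := by
        rintro u1 u2 u3 v1 v2 v3 rfl rfl rfl; ring
      have := this _ _ _ _ _ _ t1 t2 t3
      linear_combination this
    rw [men, men'] at prod
    apply mul_left_cancel₀ (mul_ne_zero w0 w1)
    linear_combination - prod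
  have hyA : σ yA = xA * σ xA - yA := by linear_combination iA
  have hyB : σ yB = xB * σ xB - yB := by linear_combination iB
  have hyC : σ yC = xC * σ xC - yC := by linear_combination iC
  -- the Gram matrix of `h` at `A`, `B`, `C` has zero diagonal, so its determinant is the left side;
  -- it is also the norm of the determinant expressing that `A`, `B`, `C` are collinear
  have key : h1 * h2 * h3 + σ h1 * σ h2 * σ h3 =
      (xA * (yB - yC) + xB * (yC - yA) + xC * (yA - yB)) *
      σ (xA * (yB - yC) + xB * (yC - yA) + xC * (yA - yB)) := by
    rw [eh1, eh2, eh3]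
    simp only [map_sub, map_add, map_mul, hσ, hyA, hyB, hyC]
    ring
  rw [hH] at key
  have := mul_ne_zero hdet ((map_ne_zero σ).2 hdet)
  exact this key.symm

lemma card_roots_le {K : Type*} [Field K] [Fintype K] [DecidableEq K] (P : Polynomial K)
    (hP : P ≠ 0) : #{x : K | P.eval x = 0} ≤ P.natDegree := by
  apply Polynomial.card_le_degree_of_subset_roots
  intro x hx
  simp only [Finset.mem_val, mem_filter] at hx
  exact (Polynomial.mem_roots hP).2 hx.2

open Polynomial in
/-- The norm map from a field of order `p ^ 2` to its subfield of order `p` takes each nonzero value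
of the subfield exactly `p + 1` times. -/
lemma norm_fiber {K : Type*} [Field K] [Fintype K] [DecidableEq K] (p : ℕ) (hp : 2 ≤ p)
    (hK : Fintype.card K = p ^ 2) (c : K) (hc : c ≠ 0) (hcp : c ^ p = c) :
    #{x : K | x ^ (p + 1) = c} = p + 1 := by
  have fib : ∀ c : K, #{x : K | x ^ (p + 1) = c} ≤ p + 1 := by
    intro c
    have := card_roots_le (X ^ (p + 1) - C c : K[X]) (X_pow_sub_C_ne_zero (by omega) c)
    rw [natDegree_X_pow_sub_C] at this
    simpa [sub_eq_zero] using this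
  set B : Finset K := {c : K | c ^ (p - 1) = 1} with hB
  have cB : #B ≤ p - 1 := by
    have := card_roots_le (X ^ (p - 1) - C 1 : K[X]) (X_pow_sub_C_ne_zero (by omega) 1)
    rw [natDegree_X_pow_sub_C] at this
    simpa [sub_eq_zero, hB] using this
  have hcB : c ∈ B := by
    simp only [hB, mem_filter, mem_univ, true_and]
    apply mul_left_cancel₀ hc
    rw [← pow_succ', mul_one, Nat.sub_add_cancel (by omega), hcp]
  have hmaps : Set.MapsTo (fun x : K => x ^ (p + 1)) ((univ.erase (0 : K) : Finset K) : Set K) B := by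
    intro x hx
    simp only [coe_erase, coe_univ, Set.mem_sdiff, Set.mem_univ, Set.mem_singleton_iff, true_and] at hx
    simp only [hB, coe_filter, mem_univ, true_and, Set.mem_ofPred_eq]
    rw [← pow_mul]
    have := FiniteField.pow_card_sub_one_eq_one x hx
    rw [hK] at this
    rw [← this]; congr 1
    obtain ⟨m, rfl⟩ : ∃ m, p = m + 1 := ⟨p - 1, by omega⟩
    simp only [Nat.add_sub_cancel]
    rw [Nat.sub_eq_of_eq_add]; ring
  have tot := card_eq_sum_card_fiberwise hmaps
  rw [card_erase_of_mem (mem_univ _), card_univ, hK] at tot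
  -- no fibre has more than `p + 1` elements, and the `p - 1` fibres exhaust `p ^ 2 - 1` elements
  refine le_antisymm (fib c) ?_
  by_contra! hlt
  have : ∑ b ∈ B, #{a ∈ univ.erase (0:K) | a ^ (p + 1) = b} < ∑ b ∈ B, (p + 1) := by
    apply sum_lt_sum
    · intro b _
      exact (card_le_card (filter_subset_filter _ (subset_univ _))).trans (fib b)
    · exact ⟨c, hcB, (card_le_card (filter_subset_filter _ (subset_univ _))).trans_lt hlt⟩
  rw [← tot, sum_const, smul_eq_mul] at this
  have h2 : #B * (p + 1) ≤ (p - 1) * (p + 1) := Nat.mul_le_mul_right _ cB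
  have h3 : p ^ 2 - 1 = (p - 1) * (p + 1) := by
    obtain ⟨m, rfl⟩ : ∃ m, p = m + 1 := ⟨p - 1, by omega⟩
    simp only [Nat.add_sub_cancel]
    rw [Nat.sub_eq_of_eq_add]; ring
  omega

open Polynomial in
/-- The trace map of a field of order `p ^ 2` takes each value at most `p` times. -/
lemma trace_fiber {K : Type*} [Field K] [Fintype K] [DecidableEq K] (p : ℕ) (hp : 2 ≤ p)
    (c : K) : #{y : K | y ^ p + y = c} ≤ p := by
  have hd : (X ^ p + X - C c : K[X]).natDegree = p := by
    have h1 : ¬ 1 = p := by omega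
    have h2 : ¬ p = 0 := by omega
    compute_degree
    · simp [h1, h2]
    · omega
  have h0 : (X ^ p + X - C c : K[X]) ≠ 0 := by
    intro h; rw [h] at hd; simp at hd; omega
  have := card_roots_le _ h0
  rw [hd] at this
  simpa [sub_eq_zero] using this

/-- The Hermitian unital over a field of order `p ^ 2`, as an incidence structure. The points `Pt` are
the affine points of the curve `y ^ p + y = x ^ (p + 1)`; the elements of `Ln` are the lines
`y = a * x + b` that are not tangent to the curve; `pen P` is the pencil of such lines through `P`.
Every line has `p + 1` points, two lines share at most one point, and there is no O'Nan
configuration: if distinct lines `ℓ₁`, `ℓ₂`, `ℓ₃`, `ℓ₄` meet pairwise in points of the unital, then three of them are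
concurrent. The points at infinity and the vertical lines are not needed. -/
lemma unital_of_field {K : Type} [Field K] [Fintype K] (p : ℕ) [Fact p.Prime] [CharP K p]
    (hK : Fintype.card K = p ^ 2) :
    ∃ (Pt Ln : Type) (_ : Fintype Pt) (_ : Fintype Ln) (_ : DecidableEq Ln)
      (pen : Pt → Finset Ln),
      Fintype.card Pt ≤ p ^ 3 ∧ Fintype.card Ln ≤ p ^ 4 ∧ p ^ 4 ≤ Fintype.card Ln + p ^ 3 ∧
      (∀ v, #{P : Pt | v ∈ pen P} = p + 1) ∧
      (∀ v w, v ≠ w → ∀ P Q, v ∈ pen P → w ∈ pen P → v ∈ pen Q → w ∈ pen Q → P = Q) ∧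
      (∀ ℓ₁ ℓ₂ ℓ₃ ℓ₄ : Ln, ∀ A B C D E F : Pt,
        ℓ₂ ≠ ℓ₃ → ℓ₁ ∈ pen A → ℓ₂ ∈ pen A → ℓ₁ ∈ pen B → ℓ₃ ∈ pen B → ℓ₂ ∈ pen C → ℓ₃ ∈ pen C →
        ℓ₁ ∈ pen D → ℓ₄ ∈ pen D → ℓ₂ ∈ pen E → ℓ₄ ∈ pen E → ℓ₃ ∈ pen F → ℓ₄ ∈ pen F →
        ℓ₁ ∈ pen C ∨ ℓ₄ ∈ pen A ∨ ℓ₄ ∈ pen B ∨ ℓ₄ ∈ pen C) := by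
  classical
  have hp2 : 2 ≤ p := (Fact.out : p.Prime).two_le
  let σ : K →+* K := frobenius K p
  have σd : ∀ z : K, σ z = z ^ p := fun z => rfl
  have hσ : ∀ z : K, σ (σ z) = z := by
    intro z
    rw [σd, σd, ← pow_mul, ← sq, ← hK]
    exact FiniteField.pow_card z
  let PtS : Finset (K × K) := {P | σ P.2 + P.2 = P.1 * σ P.1}
  let LnS : Finset (K × K) := {l | l.1 * σ l.1 + σ l.2 + l.2 ≠ 0}
  have card_bound : ∀ (S : Finset (K × K)) (m : ℕ), (∀ x, #{P ∈ S | P.1 = x} ≤ m) →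
      #S ≤ p ^ 2 * m := by
    intro S m h
    have := card_le_mul_card_image_of_maps_to (f := Prod.fst) (s := S) (t := univ)
      (fun _ _ => mem_univ _) m (fun b _ => h b)
    rw [card_univ, hK] at this
    linarith
  have slice : ∀ (S : Finset (K × K)) (c : K → K),
      (∀ P ∈ S, P.2 ^ p + P.2 = c P.1) → ∀ x, #{P ∈ S | P.1 = x} ≤ p := by
    intro S c h x
    refine le_trans ?_ (trace_fiber p hp2 (c x))
    apply card_le_card_of_injOn (fun P => P.2)
    · intro P hP
      simp only [coe_filter, Set.mem_ofPred_eq] at hP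
      simp only [coe_filter, Set.mem_ofPred_eq, mem_univ, true_and]
      rw [h P hP.1, hP.2]
    · intro P hP Q hQ hPQ
      simp only [coe_filter, Set.mem_ofPred_eq] at hP hQ
      exact Prod.ext (hP.2.trans hQ.2.symm) hPQ
  refine ⟨PtS, LnS, inferInstance, inferInstance, inferInstance,
    fun P => {l | P.1.2 = l.1.1 * P.1.1 + l.1.2}, ?_, ?_, ?_, ?_, ?_, ?_⟩
  · rw [Fintype.card_coe]
    refine (card_bound PtS p (slice PtS (fun x => x * σ x) ?_)).trans (by ring_nf; rfl)
    intro P hP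
    simp only [PtS, mem_filter, mem_univ, true_and] at hP
    exact hP
  · rw [Fintype.card_coe]
    refine (card_le_univ _).trans ?_
    rw [Fintype.card_prod, hK]; ring_nf; rfl
  · rw [Fintype.card_coe]
    have h1 : #LnS + #{l : K × K | ¬ (l.1 * σ l.1 + σ l.2 + l.2 ≠ 0)} = p ^ 4 := by
      rw [card_filter_add_card_filter_not, card_univ, Fintype.card_prod, hK]; ring
    have h2 : #{l : K × K | ¬ (l.1 * σ l.1 + σ l.2 + l.2 ≠ 0)} ≤ p ^ 3 := by
      refine (card_bound _ p (slice _ (fun x => - (x * σ x)) ?_)).trans (by ring_nf; rfl)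
      intro P hP
      simp only [mem_filter, mem_univ, true_and, not_not] at hP
      rw [← σd]; linear_combination hP
    omega
  · rintro ⟨⟨a, b⟩, hl⟩
    simp only [LnS, mem_filter, mem_univ, true_and] at hl ⊢
    rw [← norm_fiber p hp2 hK (a * σ a + σ b + b) hl]
    · -- substitution `x ↦ x - σ a` identifies the points of the line with a norm fibre
      have eqv : ∀ x : K, (σ (a * x + b) + (a * x + b) = x * σ x) ↔
          (x - σ a) ^ (p + 1) = a * σ a + σ b + b := by
        intro x
        rw [pow_succ, ← σd, map_sub, map_add, map_mul, hσ]
        constructor <;> intro h <;> linear_combination -h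
      refine card_bij (fun (P : PtS) _ => P.1.1 - σ a) ?_ ?_ ?_
      · rintro ⟨⟨x, y⟩, hP⟩ h
        simp only [mem_filter, mem_univ, true_and, PtS] at hP h ⊢
        rw [← eqv, ← h]; exact hP
      · rintro ⟨⟨x, y⟩, hP⟩ h ⟨⟨x', y'⟩, hP'⟩ h' hxx
        simp only [mem_filter, mem_univ, true_and] at h h' hxx
        have hx : x = x' := by linear_combination hxx
        subst hx
        subst h; subst h'; rfl
      · intro x hx
        simp only [mem_filter, mem_univ, true_and] at hx
        refine ⟨⟨(x + σ a, a * (x + σ a) + b), ?_⟩, ?_, ?_⟩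
        · simp only [PtS, mem_filter, mem_univ, true_and]
          rw [eqv]; simpa using hx
        · simp
        · simp
    · rw [← σd]; simp only [map_add, map_mul, hσ]; ring
  · rintro ⟨⟨a, b⟩, hl⟩ ⟨⟨a', b'⟩, hl'⟩ hne ⟨⟨x, y⟩, hP⟩ ⟨⟨x', y'⟩, hQ⟩ h1 h2 h3 h4
    simp only [mem_filter, mem_univ, true_and] at h1 h2 h3 h4
    have hx : (a - a') * (x - x') = 0 := by linear_combination h2 - h1 - h4 + h3
    rcases mul_eq_zero.1 hx with h | h
    · exfalso; apply hne
      have ha : a = a' := sub_eq_zero.1 h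
      subst ha
      have hb : b = b' := by linear_combination h2 - h1
      subst hb; rfl
    · have hx' : x = x' := sub_eq_zero.1 h
      subst hx'
      have : y = y' := by rw [h1, h3]
      subst this; rfl
  · rintro ⟨⟨a1, b1⟩, _⟩ ⟨⟨a2, b2⟩, _⟩ ⟨⟨a3, b3⟩, _⟩ ⟨⟨a4, b4⟩, _⟩ ⟨⟨xA, yA⟩, iA⟩ ⟨⟨xB, yB⟩, iB⟩
      ⟨⟨xC, yC⟩, iC⟩ ⟨⟨xD, yD⟩, iD⟩ ⟨⟨xE, yE⟩, iE⟩ ⟨⟨xF, yF⟩, iF⟩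
      hne hA1 hA2 hB1 hB3 hC2 hC3 hD1 hD4 hE2 hE4 hF3 hF4
    simp only [mem_filter, mem_univ, true_and, PtS] at hA1 hA2 hB1 hB3 hC2 hC3 hD1 hD4 hE2 hE4 hF3 hF4 iA iB iC iD iE iF ⊢
    by_contra! hcon
    obtain ⟨n1, n2, n3, n4⟩ := hcon
    have aux : ∀ (a b a' b' x y x' y' : K), y = a * x + b → y' = a * x' + b →
        y' = a' * x' + b' → y ≠ a' * x + b' → x - x' ≠ 0 := by
      intro a b a' b' x y x' y' h1 h2 h3 h4 h5
      have : x = x' := sub_eq_zero.1 h5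
      subst this
      exact h4 (h1.trans (h2.symm.trans h3))
    have n' : ∀ (x y a b : K), y ≠ a * x + b → y - a * x - b ≠ 0 := by
      intro x y a b h h'; apply h; linear_combination h'
    refine onan_core σ a1 b1 a4 b4 xA yA xB yB xC yC xD yD xE yE xF yF hσ iA iB iC iD iE iF
      a2 b2 a3 b3 hA1 hB1 hD1 hA2 hC2 hE2 hB3 hC3 hF3 hD4 hE4 hF4 ?_ (n' _ _ _ _ n1)
      (n' _ _ _ _ n2) (n' _ _ _ _ n3) (n' _ _ _ _ n4) (aux _ _ _ _ _ _ _ _ hA1 hD1 hD4 n2)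
      (aux _ _ _ _ _ _ _ _ hB3 hF3 hF4 n3) (aux _ _ _ _ _ _ _ _ hC2 hE2 hE4 n4)
    · intro h
      subst h
      have hy : yA = yB := by rw [hA1, hB1]
      subst hy
      have hx : (a2 - a3) * (xA - xC) = 0 := by linear_combination hB3 - hA2 - hC3 + hC2
      rcases mul_eq_zero.1 hx with h | h
      · apply hne
        have ha : a2 = a3 := sub_eq_zero.1 h
        subst ha
        have hb : b2 = b3 := by linear_combination hB3 - hA2
        subst hb; rfl
      · have hx' : xA = xC := sub_eq_zero.1 h
        subst hx'
        exact n1 (by linear_combination hC2 - hA2 + hB1)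

/-- `unital_of_field` over the field with `p ^ 2` elements. -/
lemma unital_exists (p : ℕ) (hp : p.Prime) :
    ∃ (Pt Ln : Type) (_ : Fintype Pt) (_ : Fintype Ln) (_ : DecidableEq Ln)
      (pen : Pt → Finset Ln),
      Fintype.card Pt ≤ p ^ 3 ∧ Fintype.card Ln ≤ p ^ 4 ∧ p ^ 4 ≤ Fintype.card Ln + p ^ 3 ∧
      (∀ v, #{P : Pt | v ∈ pen P} = p + 1) ∧
      (∀ v w, v ≠ w → ∀ P Q, v ∈ pen P → w ∈ pen P → v ∈ pen Q → w ∈ pen Q → P = Q) ∧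
      (∀ ℓ₁ ℓ₂ ℓ₃ ℓ₄ : Ln, ∀ A B C D E F : Pt,
        ℓ₂ ≠ ℓ₃ → ℓ₁ ∈ pen A → ℓ₂ ∈ pen A → ℓ₁ ∈ pen B → ℓ₃ ∈ pen B → ℓ₂ ∈ pen C → ℓ₃ ∈ pen C →
        ℓ₁ ∈ pen D → ℓ₄ ∈ pen D → ℓ₂ ∈ pen E → ℓ₄ ∈ pen E → ℓ₃ ∈ pen F → ℓ₄ ∈ pen F →
        ℓ₁ ∈ pen C ∨ ℓ₄ ∈ pen A ∨ ℓ₄ ∈ pen B ∨ ℓ₄ ∈ pen C) := by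
  have : Fact p.Prime := ⟨hp⟩
  have : Fintype (GaloisField p 2) := Fintype.ofFinite _
  apply unital_of_field (K := GaloisField p 2) p
  rw [← Nat.card_eq_fintype_card]
  exact GaloisField.card p 2 two_ne_zero

/-! ### The pencil graph -/

/-- The coloured pencil graph: each line `v` of a pencil `pen P` receives a colour `χ (P, v)`, and two
lines are adjacent if they lie in a common pencil and have different colours there. Thus every
pencil becomes a complete `r`-partite graph, and the lines of different pencils are coloured
independently. -/
def penGraph {Pt Ln : Type} {r : ℕ} (pen : Pt → Finset Ln) (χ : Pt × Ln → Fin r) :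
    SimpleGraph Ln where
  Adj u v := u ≠ v ∧ ∃ P, u ∈ pen P ∧ v ∈ pen P ∧ χ (P, u) ≠ χ (P, v)
  symm := ⟨fun _ _ ⟨h, P, hu, hv, hc⟩ => ⟨h.symm, P, hv, hu, hc.symm⟩⟩
  loopless := ⟨fun _ h => h.1 rfl⟩

/-- The pencil graph of a unital contains no `K_{r+2}`. Suppose it does. If three of the lines are
concurrent at `P`, then two lines `x`, `y` of the clique avoid `P`; by the absence of O'Nan
configurations two of the three lines pass through the point of `x` and `y`, which is then `P`, a
contradiction. If no three lines are concurrent, any four form an O'Nan configuration. -/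
lemma penGraph_no_clique {Pt Ln : Type} {r : ℕ} (hr : 2 ≤ r) (pen : Pt → Finset Ln)
    (χ : Pt × Ln → Fin r)
    (hlin : ∀ v w, v ≠ w → ∀ P Q, v ∈ pen P → w ∈ pen P → v ∈ pen Q → w ∈ pen Q → P = Q)
    (hon : ∀ ℓ₁ ℓ₂ ℓ₃ ℓ₄ : Ln, ∀ A B C D E F : Pt, ℓ₂ ≠ ℓ₃ →
        ℓ₁ ∈ pen A → ℓ₂ ∈ pen A → ℓ₁ ∈ pen B → ℓ₃ ∈ pen B → ℓ₂ ∈ pen C → ℓ₃ ∈ pen C →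
        ℓ₁ ∈ pen D → ℓ₄ ∈ pen D → ℓ₂ ∈ pen E → ℓ₄ ∈ pen E → ℓ₃ ∈ pen F → ℓ₄ ∈ pen F →
        ℓ₁ ∈ pen C ∨ ℓ₄ ∈ pen A ∨ ℓ₄ ∈ pen B ∨ ℓ₄ ∈ pen C)
    (f : Fin (r + 2) → Ln) (hf : ∀ a b, a ≠ b → (penGraph pen χ).Adj (f a) (f b)) : False := by
  classical
  have hinj : Function.Injective f := by
    intro a b hab
    by_contra hne
    exact (hf a b hne).1 hab
  have hP : ∀ a b, a ≠ b → ∃ P, f a ∈ pen P ∧ f b ∈ pen P := by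
    intro a b hab
    obtain ⟨-, P, h1, h2, -⟩ := hf a b hab
    exact ⟨P, h1, h2⟩
  -- a pencil contains at most `r` of the vertices, by its `r`-partition
  have hsmall : ∀ P, #{i | f i ∈ pen P} ≤ r := by
    intro P
    have := card_le_card_of_injOn (s := {i | f i ∈ pen P}) (t := (univ : Finset (Fin r)))
      (fun i => χ (P, f i)) (fun _ _ => mem_univ _) ?_
    · simpa using this
    · intro a ha b hb hab
      simp only [coe_filter, mem_univ, true_and, Set.mem_ofPred_eq] at ha hb
      by_contra hne
      obtain ⟨h0, Q, h1, h2, h3⟩ := hf a b hne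
      have := hlin _ _ h0 P Q ha hb h1 h2
      subst this
      exact h3 hab
  have key : ∀ (P : Pt) (a b c : Fin (r + 2)), a ≠ b → a ≠ c → b ≠ c →
      f a ∈ pen P → f b ∈ pen P → f c ∈ pen P → False := by
    intro P a b c hab hac hbc ha hb hc
    have h2 : 2 ≤ #{i | ¬ f i ∈ pen P} := by
      have h1 := card_filter_add_card_filter_not (s := (univ : Finset (Fin (r + 2))))
        (fun i => f i ∈ pen P)
      rw [card_univ, Fintype.card_fin] at h1
      have := hsmall P
      omega
    obtain ⟨x, hx, y, hy, hxy⟩ := one_lt_card.1 h2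
    simp only [mem_filter, mem_univ, true_and] at hx hy
    obtain ⟨Q, hQx, hQy⟩ := hP x y hxy
    have pair : ∀ i j, i ≠ j → f i ∈ pen P → f j ∈ pen P → f i ∈ pen Q ∨ f j ∈ pen Q := by
      intro i j hij hi hj
      have nxi : x ≠ i := fun h => hx (h ▸ hi)
      have nxj : x ≠ j := fun h => hx (h ▸ hj)
      have nyi : y ≠ i := fun h => hy (h ▸ hi)
      have nyj : y ≠ j := fun h => hy (h ▸ hj)
      obtain ⟨A, hA1, hA2⟩ := hP x i nxi
      obtain ⟨B, hB1, hB2⟩ := hP x j nxj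
      obtain ⟨E, hE1, hE2⟩ := hP y i nyi
      obtain ⟨F, hF1, hF2⟩ := hP y j nyj
      rcases hon (f x) (f i) (f j) (f y) A B P Q E F (hinj.ne hij) hA1 hA2 hB1 hB2 hi hj hQx hQy
        hE2 hE1 hF2 hF1 with h | h | h | h
      · exact absurd h hx
      · left; rw [hlin _ _ (hinj.ne hxy) Q A hQx hQy hA1 h]; exact hA2
      · right; rw [hlin _ _ (hinj.ne hxy) Q B hQx hQy hB1 h]; exact hB2
      · exact absurd h hy
    have fin : ∀ i j, i ≠ j → f i ∈ pen P → f j ∈ pen P → f i ∈ pen Q → f j ∈ pen Q → False := by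
      intro i j hij h1 h2 h3 h4
      have := hlin _ _ (hinj.ne hij) P Q h1 h2 h3 h4
      subst this
      exact hx hQx
    rcases pair a b hab ha hb with h1 | h1
    · rcases pair b c hbc hb hc with h2 | h2
      · exact fin a b hab ha hb h1 h2
      · exact fin a c hac ha hc h1 h2
    · rcases pair a c hac ha hc with h2 | h2
      · exact fin a b hab ha hb h2 h1
      · exact fin b c hbc hb hc h1 h2
  let e : Fin 4 → Fin (r + 2) := Fin.castLE (by omega)
  have he : ∀ i j, i ≠ j → e i ≠ e j := fun i j h => (Fin.castLE_injective _).ne h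
  obtain ⟨A, hA1, hA2⟩ := hP _ _ (he 0 1 (by decide))
  obtain ⟨B, hB1, hB2⟩ := hP _ _ (he 0 2 (by decide))
  obtain ⟨C, hC1, hC2⟩ := hP _ _ (he 1 2 (by decide))
  obtain ⟨D, hD1, hD2⟩ := hP _ _ (he 0 3 (by decide))
  obtain ⟨E, hE1, hE2⟩ := hP _ _ (he 1 3 (by decide))
  obtain ⟨F, hF1, hF2⟩ := hP _ _ (he 2 3 (by decide))
  rcases hon _ _ _ _ A B C D E F (hinj.ne (he 1 2 (by decide))) hA1 hA2 hB1 hB2 hC1 hC2 hD1 hD2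
    hE1 hE2 hF1 hF2 with h | h | h | h
  · exact key C _ _ _ (he 0 1 (by decide)) (he 0 2 (by decide)) (he 1 2 (by decide)) h hC1 hC2
  · exact key A _ _ _ (he 0 1 (by decide)) (he 0 3 (by decide)) (he 1 3 (by decide)) hA1 hA2 h
  · exact key B _ _ _ (he 0 2 (by decide)) (he 0 3 (by decide)) (he 2 3 (by decide)) hB1 hB2 h
  · exact key C _ _ _ (he 1 2 (by decide)) (he 1 3 (by decide)) (he 2 3 (by decide)) hC1 hC2 h

/-- `T` is *rich* if some pencil contains, for every colour `i`, at least `sz i` lines of `T` of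
colour `i`. The pencil then provides a copy of the complete multipartite graph inside `T`. -/
def Rich {Pt Ln : Type} [DecidableEq Ln] {r : ℕ} (pen : Pt → Finset Ln) (sz : Fin r → ℕ)
    (χ : Pt × Ln → Fin r) (T : Finset Ln) : Prop :=
  ∃ P, ∀ i, sz i ≤ #{v ∈ pen P ∩ T | χ (P, v) = i}

/-- Sampling may repeat a line; the copy lives on distinct lines, so repetitions do no harm. -/
lemma Rich.containsCopy {Pt Ln : Type} [DecidableEq Ln] {r n : ℕ} {pen : Pt → Finset Ln}
    {sz : Fin r → ℕ} {χ : Pt × Ln → Fin r} (g : Fin n → Ln) (I : Finset (Fin n))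
    (h : Rich pen sz χ (I.image g)) :
    ContainsCopy (SimpleGraph.completeMultipartiteGraph fun i => Fin (sz i))
      (((penGraph pen χ).comap g).induce (I : Set (Fin n))) := by
  classical
  obtain ⟨P, hP⟩ := h
  have hc : ∀ i, ∃ φ : Fin (sz i) → Ln, Function.Injective φ ∧
      ∀ x, φ x ∈ pen P ∧ φ x ∈ I.image g ∧ χ (P, φ x) = i := by
    intro i
    obtain ⟨t, ht, htc⟩ := exists_subset_card_eq (hP i)
    refine ⟨fun x => (t.equivFinOfCardEq htc).symm x, ?_, ?_⟩
    · intro x y hxy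
      exact (t.equivFinOfCardEq htc).symm.injective (Subtype.ext hxy)
    · intro x
      have := ht ((t.equivFinOfCardEq htc).symm x).2
      simp only [mem_filter, mem_inter] at this
      exact ⟨this.1.1, this.1.2, this.2⟩
  choose φ hφ hφ' using hc
  have hg : ∀ z ∈ I.image g, ∃ k : (I : Set (Fin n)), g k = z := by
    intro z hz
    obtain ⟨k, hk, rfl⟩ := mem_image.1 hz
    exact ⟨⟨k, hk⟩, rfl⟩
  have hg' : ∀ x : (Σ i, Fin (sz i)), ∃ k : (I : Set (Fin n)), g k = φ x.1 x.2 :=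
    fun x => hg _ (hφ' x.1 x.2).2.1
  choose ψ hψ using hg'
  have hinj : ∀ x y : (Σ i, Fin (sz i)), φ x.1 x.2 = φ y.1 y.2 → x = y := by
    rintro ⟨i, x⟩ ⟨j, y⟩ h
    have : i = j := by rw [← (hφ' i x).2.2, ← (hφ' j y).2.2, h]
    subst this
    have h' : x = y := hφ i h
    rw [h']
  refine ⟨ψ, ?_, ?_⟩
  · intro x y hxy
    apply hinj
    rw [← hψ, ← hψ, hxy]
  · intro x y hxy
    have hne : x.1 ≠ y.1 := hxy
    simp only [SimpleGraph.comap_adj, Function.Embedding.subtype_apply, hψ]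
    refine ⟨?_, P, (hφ' _ _).1, (hφ' _ _).1, ?_⟩
    · intro h
      exact hne (by rw [hinj x y h])
    · rw [(hφ' _ _).2.2, (hφ' _ _).2.2]; exact hne

/-- An `H`-free graph on `n` vertices all of whose `t`-sets contain a copy of `F` witnesses
`f_{F,H}(n) ≤ t`. -/
lemma minFIndep_le_of_forall {α γ : Type*} (F : SimpleGraph α) (H : SimpleGraph γ) (n t : ℕ)
    (G : SimpleGraph (Fin n)) (hH : ¬ ContainsCopy H G)
    (hF : ∀ I : Finset (Fin n), #I = t → ContainsCopy F (G.induce (I : Set (Fin n)))) :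
    minFIndep F H n ≤ t := by
  have h1 : minFIndep F H n ≤ fIndepNum F G := Nat.sInf_le ⟨G, hH, rfl⟩
  refine h1.trans (csSup_le' ?_)
  rintro k ⟨S, rfl, hS⟩
  by_contra! hlt
  obtain ⟨I, hIS, hI⟩ := exists_subset_card_eq hlt.le
  obtain ⟨f, hf, hadj⟩ := hF I hI
  exact hS ⟨fun a => ⟨(f a).1, hIS (f a).2⟩, fun a b h => hf (Subtype.ext (congrArg (fun z => z.1) h)),
    fun a b h => hadj h⟩

/-! ### Random colourings -/

/-- Each set `W P` is cut into `⌊#(W P) / k⌋` disjoint blocks of size `k`, labelled by `P`; fewer than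
`k` elements of `W P` are left over. -/
lemma exists_blocks {Pt V : Type} [Fintype Pt] [DecidableEq V] (W : Pt → Finset V) (k : ℕ)
    (hk : 0 < k) :
    ∃ 𝓑 : Finset (Pt × Finset V), (∀ B ∈ 𝓑, B.2 ⊆ W B.1 ∧ #B.2 = k) ∧
      (∀ B ∈ 𝓑, ∀ B' ∈ 𝓑, B ≠ B' → B.1 = B'.1 → Disjoint B.2 B'.2) ∧
      #𝓑 = ∑ P, #(W P) / k := by
  classical
  have one : ∀ (m : ℕ) (A : Finset V), m * k ≤ #A → ∃ 𝓠 : Finset (Finset V), #𝓠 = m ∧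
      (∀ b ∈ 𝓠, b ⊆ A ∧ #b = k) ∧ (∀ b ∈ 𝓠, ∀ b' ∈ 𝓠, b ≠ b' → Disjoint b b') := by
    intro m
    induction m with
    | zero => intro A _; exact ⟨∅, by simp⟩
    | succ m ih =>
      intro A hA
      obtain ⟨b, hbA, hb⟩ := exists_subset_card_eq (n := k) (s := A) (by nlinarith)
      obtain ⟨𝓠, h1, h2, h3⟩ := ih (A \ b) (by
        rw [card_sdiff_of_subset hbA, hb]; apply Nat.le_sub_of_add_le; linarith)
      have hdis : ∀ b' ∈ 𝓠, Disjoint b b' := fun b' hb' =>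
        disjoint_of_subset_right (h2 b' hb').1 disjoint_sdiff
      have hnot : b ∉ 𝓠 := by
        intro h
        have := hdis b h
        rw [disjoint_self_iff_empty] at this
        rw [this] at hb; simp at hb; omega
      refine ⟨insert b 𝓠, by rw [card_insert_of_notMem hnot, h1], ?_, ?_⟩
      · intro b' hb'
        rcases mem_insert.1 hb' with rfl | h
        · exact ⟨hbA, hb⟩
        · exact ⟨(h2 b' h).1.trans sdiff_subset, (h2 b' h).2⟩
      · intro x hx y hy hxy
        rcases mem_insert.1 hx with hx' | hx'
        · rcases mem_insert.1 hy with hy' | hy'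
          · exact absurd (hx'.trans hy'.symm) hxy
          · rw [hx']; exact hdis y hy'
        · rcases mem_insert.1 hy with hy' | hy'
          · rw [hy']; exact (hdis x hx').symm
          · exact h3 x hx' y hy' hxy
  have := fun P => one (#(W P) / k) (W P) (Nat.div_mul_le_self _ _)
  choose Q hQ1 hQ2 hQ3 using this
  let em : Pt → Finset (Pt × Finset V) := fun P => (Q P).map ⟨fun b => (P, b), fun _ _ h =>
    (Prod.ext_iff.1 h).2⟩
  have hem : ∀ P B, B ∈ em P ↔ B.1 = P ∧ B.2 ∈ Q P := by
    intro P B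
    simp only [em, mem_map]
    constructor
    · rintro ⟨b, hb, rfl⟩; exact ⟨rfl, hb⟩
    · rintro ⟨rfl, h⟩; exact ⟨B.2, h, rfl⟩
  refine ⟨univ.biUnion em, ?_, ?_, ?_⟩
  · intro B hB
    obtain ⟨P, -, h⟩ := mem_biUnion.1 hB
    obtain ⟨rfl, h⟩ := (hem P B).1 h
    exact hQ2 _ _ h
  · intro B hB B' hB' hne heq
    obtain ⟨P, -, h⟩ := mem_biUnion.1 hB
    obtain ⟨rfl, h⟩ := (hem P B).1 h
    obtain ⟨P', -, h'⟩ := mem_biUnion.1 hB'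
    obtain ⟨rfl, h'⟩ := (hem P' B').1 h'
    rw [← heq] at h'
    exact hQ3 _ _ h _ h' (fun h => hne (Prod.ext heq h))
  · rw [card_biUnion]
    · simp [em, hQ1]
    · intro P _ P' _ hne
      change Disjoint (em P) (em P')
      rw [disjoint_left]
      intro B h h'
      exact hne (((hem P B).1 h).1.symm.trans ((hem P' B).1 h').1)

/-- Prescribe a pattern `π i` on each of several disjoint sets `A i` of size `s`. The proportion of
colourings that follow none of the patterns is at most `(1 - r ^ (-s)) ^ #𝓠`; stated without
division. -/
lemma card_avoid {α ι : Type} [Fintype α] [DecidableEq α] [DecidableEq ι] {r s : ℕ}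
    (A : ι → Finset α) (π : ι → α → Fin r) (𝓠 : Finset ι)
    (hcard : ∀ i ∈ 𝓠, #(A i) = s)
    (hdis : ∀ i ∈ 𝓠, ∀ j ∈ 𝓠, i ≠ j → Disjoint (A i) (A j)) :
    #{χ : α → Fin r | ∀ i ∈ 𝓠, ¬ ∀ a ∈ A i, χ a = π i a} * (r ^ s) ^ #𝓠
      ≤ (r ^ s - 1) ^ #𝓠 * r ^ Fintype.card α := by
  classical
  induction 𝓠 using Finset.induction_on with
  | empty => simp [card_univ]
  | insert i 𝓠 hi ih =>
    have ih := ih (fun j hj => hcard j (mem_insert_of_mem hj))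
      (fun j hj k hk => hdis j (mem_insert_of_mem hj) k (mem_insert_of_mem hk))
    set E : Finset (α → Fin r) := {χ | ∀ i ∈ 𝓠, ¬ ∀ a ∈ A i, χ a = π i a} with hE
    have h1 : #{χ : α → Fin r | ∀ j ∈ insert i 𝓠, ¬ ∀ a ∈ A j, χ a = π j a}
        = #{χ ∈ E | ¬ ∀ a ∈ A i, χ a = π i a} := by
      congr 1
      ext χ
      simp only [hE, mem_filter, mem_univ, true_and, forall_mem_insert]
      tauto
    have h2 := card_filter_add_card_filter_not (s := E) (fun χ => ∀ a ∈ A i, χ a = π i a)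
    -- overriding a colouring on `A i` by the pattern is at most `r ^ s` to one
    have h3 : #E ≤ r ^ s * #{χ ∈ E | ∀ a ∈ A i, χ a = π i a} := by
      apply card_le_mul_card_image_of_maps_to
        (f := fun χ a => if a ∈ A i then π i a else χ a)
      · intro χ hχ
        simp only [hE, mem_filter, mem_univ, true_and] at hχ ⊢
        refine ⟨?_, fun a ha => by simp [ha]⟩
        intro j hj hall
        apply hχ j hj
        intro a ha
        have hne : i ≠ j := fun h => hi (h ▸ hj)
        have := hdis i (mem_insert_self _ _) j (mem_insert_of_mem hj) hne
        have hna : a ∉ A i := disjoint_right.1 this ha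
        have := hall a ha
        simpa [hna] using this
      · intro ψ _
        have : #{χ ∈ E | (fun a => if a ∈ A i then π i a else χ a) = ψ}
            ≤ #(univ : Finset (A i → Fin r)) := by
          apply card_le_card_of_injOn (fun χ (a : A i) => χ a.1) (fun _ _ => mem_univ _)
          intro χ hχ χ' hχ' h
          simp only [coe_filter, Set.mem_ofPred_eq] at hχ hχ'
          have he := hχ.2.trans hχ'.2.symm
          funext a
          by_cases ha : a ∈ A i
          · exact congrFun h ⟨a, ha⟩
          · have := congrFun he a
            simpa [ha] using this
        simpa [hcard i (mem_insert_self _ _)] using this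
    rw [h1, card_insert_of_notMem hi, pow_succ, pow_succ]
    set x := #{χ ∈ E | ∀ a ∈ A i, χ a = π i a}
    set y := #{χ ∈ E | ¬ ∀ a ∈ A i, χ a = π i a}
    have h4 : y * r ^ s ≤ (r ^ s - 1) * #E := by
      rw [Nat.sub_mul, one_mul]
      apply Nat.le_sub_of_add_le
      rw [← h2] at h3 ⊢
      nlinarith
    calc y * ((r ^ s) ^ #𝓠 * r ^ s) = (y * r ^ s) * (r ^ s) ^ #𝓠 := by ring
      _ ≤ ((r ^ s - 1) * #E) * (r ^ s) ^ #𝓠 := Nat.mul_le_mul_right _ h4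
      _ = (r ^ s - 1) * (#E * (r ^ s) ^ #𝓠) := by ring
      _ ≤ (r ^ s - 1) * ((r ^ s - 1) ^ #𝓠 * r ^ Fintype.card α) := Nat.mul_le_mul_left _ ih
      _ = _ := by ring

/-- The packing number of `T`: the maximum number of disjoint `s`-subsets of the traces `pen P ∩ T`,
disjointness being required only inside each pencil. -/
def packNum {Pt Ln : Type} [Fintype Pt] [DecidableEq Ln] (pen : Pt → Finset Ln) (s : ℕ)
    (T : Finset Ln) : ℕ := ∑ P, #(pen P ∩ T) / s

/-- A random colouring fails to make `T` rich with probability at most `(1 - r ^ (-s)) ^ X`, where `X`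
is the packing number of `T`: each packed `s`-set has a colour pattern that makes `T` rich. -/
lemma card_not_rich {Pt Ln : Type} [Fintype Pt] [DecidableEq Pt] [Fintype Ln] [DecidableEq Ln] {r : ℕ}
    (pen : Pt → Finset Ln) (sz : Fin r → ℕ) (hs : 0 < ∑ i, sz i) (T : Finset Ln)
    [DecidablePred fun χ : Pt × Ln → Fin r => Rich pen sz χ T] :
    #{χ : Pt × Ln → Fin r | ¬ Rich pen sz χ T} * (r ^ (∑ i, sz i)) ^ packNum pen (∑ i, sz i) T
      ≤ (r ^ (∑ i, sz i) - 1) ^ packNum pen (∑ i, sz i) T * r ^ Fintype.card (Pt × Ln) := by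
  classical
  set s := ∑ i, sz i with hsdef
  obtain ⟨𝓑, hB1, hB2, hB3⟩ := exists_blocks (fun P => pen P ∩ T) s hs
  have pat : ∀ b : Finset Ln, ∃ c : Ln → Fin r, #b = s → ∀ i, sz i ≤ #{v ∈ b | c v = i} := by
    intro b
    by_cases hb : #b = s
    · have e : b ≃ (Σ i, Fin (sz i)) := Fintype.equivOfCardEq (by simp [hb, hsdef])
      have hr : Nonempty (Fin r) := by
        by_contra hemp
        rw [not_nonempty_iff] at hemp
        simp [hsdef] at hs
      refine ⟨fun v => if h : v ∈ b then (e ⟨v, h⟩).1 else Classical.choice hr, fun _ i => ?_⟩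
      have := card_le_card_of_injOn (s := (univ : Finset (Fin (sz i))))
        (t := {v ∈ b | (if h : v ∈ b then (e ⟨v, h⟩).1 else Classical.choice hr) = i})
        (fun x => (e.symm ⟨i, x⟩).1) ?_ ?_
      · simpa using this
      · intro x _
        simp only [coe_filter, Set.mem_ofPred_eq]
        refine ⟨(e.symm ⟨i, x⟩).2, ?_⟩
        rw [dif_pos (e.symm ⟨i, x⟩).2]
        simp
      · intro x _ y _ hxy
        have := e.symm.injective (Subtype.ext hxy)
        simpa using this
    · by_cases hr : Nonempty (Fin r)
      · exact ⟨fun _ => Classical.choice hr, fun h => absurd h hb⟩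
      · exfalso
        rw [not_nonempty_iff] at hr
        simp [hsdef] at hs
  choose c hc using pat
  let em : Pt → Ln ↪ Pt × Ln := fun P => ⟨fun v => (P, v), fun _ _ h => (Prod.ext_iff.1 h).2⟩
  have main := card_avoid (r := r) (s := s) (fun B : Pt × Finset Ln => B.2.map (em B.1))
    (fun B a => c B.2 a.2) 𝓑 (fun B hB => by rw [card_map]; exact (hB1 B hB).2) (by
      intro B hB B' hB' hne
      rw [disjoint_left]
      intro x h h'
      obtain ⟨w, hw, e⟩ := mem_map.1 h
      obtain ⟨w', hw', e'⟩ := mem_map.1 h'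
      obtain ⟨e1, e2⟩ := Prod.ext_iff.1 (e.trans e'.symm)
      have e2 : w = w' := e2
      rw [← e2] at hw'
      exact disjoint_left.1 (hB2 B hB B' hB' hne e1) hw hw')
  rw [hB3] at main
  refine le_trans (Nat.mul_le_mul_right _ (card_le_card ?_)) main
  intro χ hχ
  simp only [mem_filter, mem_univ, true_and] at hχ ⊢
  intro B hB hall
  apply hχ
  refine ⟨B.1, fun i => (hc B.2 (hB1 B hB).2 i).trans (card_le_card ?_)⟩
  intro v hv
  simp only [mem_filter] at hv ⊢
  refine ⟨(hB1 B hB).1 hv.1, ?_⟩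
  rw [← hv.2]
  exact hall (B.1, v) (mem_map.2 ⟨v, hv.1, rfl⟩)

/-- A union bound over the sets of at most `t` lines: some colouring makes every nonempty such set of
packing number at least `X` rich. -/
lemma exists_colouring {Pt Ln : Type} [Fintype Pt] [Fintype Ln] [DecidableEq Ln] {r : ℕ}
    (hr : 0 < r) (pen : Pt → Finset Ln) (sz : Fin r → ℕ) (hs : 0 < ∑ i, sz i) (t X : ℕ)
    (hX : (Fintype.card Ln) ^ t * (r ^ (∑ i, sz i) - 1) ^ X < (r ^ (∑ i, sz i)) ^ X) :
    ∃ χ : Pt × Ln → Fin r, ∀ T : Finset Ln, T.Nonempty → #T ≤ t → ¬ Rich pen sz χ T →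
      packNum pen (∑ i, sz i) T < X := by
  classical
  set s := ∑ i, sz i with hsdef
  by_contra! hcon
  -- every nonempty set of size at most `t` is the range of some `g : Fin t → Ln`
  have hcov : (univ : Finset (Pt × Ln → Fin r)) ⊆
      ({g : Fin t → Ln | X ≤ packNum pen s (univ.image g)} : Finset _).biUnion
        fun g => {χ | ¬ Rich pen sz χ (univ.image g)} := by
    intro χ _
    obtain ⟨T, hT, hTt, hrich, hpack⟩ := hcon χ
    obtain ⟨w, hw⟩ := hT
    have : ∃ g : Fin t → Ln, univ.image g = T := by
      let e := T.equivFin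
      refine ⟨fun i => if h : (i : ℕ) < #T then (e.symm ⟨i, h⟩).1 else w, ?_⟩
      ext v
      simp only [mem_image, mem_univ, true_and]
      constructor
      · rintro ⟨i, rfl⟩
        split_ifs with h
        · exact (e.symm ⟨i, h⟩).2
        · exact hw
      · intro hv
        refine ⟨⟨e ⟨v, hv⟩, lt_of_lt_of_le (e ⟨v, hv⟩).2 hTt⟩, ?_⟩
        simp
    obtain ⟨g, rfl⟩ := this
    exact mem_biUnion.2 ⟨g, by simpa using hpack, by simpa using hrich⟩
  have h1 := (card_le_card hcov).trans card_biUnion_le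
  have hpos : 0 < r ^ s := pow_pos hr _
  have h2 : ∀ g ∈ ({g : Fin t → Ln | X ≤ packNum pen s (univ.image g)} : Finset _),
      #{χ : Pt × Ln → Fin r | ¬ Rich pen sz χ (univ.image g)} * (r ^ s) ^ X
        ≤ (r ^ s - 1) ^ X * r ^ Fintype.card (Pt × Ln) := by
    intro g hg
    simp only [mem_filter, mem_univ, true_and] at hg
    have h3 := card_not_rich pen sz hs (univ.image g)
    rw [← hsdef] at h3
    obtain ⟨d, hd⟩ := Nat.exists_eq_add_of_le hg
    rw [hd, pow_add, pow_add] at h3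
    have h4 : (r ^ s - 1) ^ d ≤ (r ^ s) ^ d := Nat.pow_le_pow_left (Nat.sub_le _ _) _
    have h5 : 0 < (r ^ s) ^ d := pow_pos hpos _
    refine Nat.le_of_mul_le_mul_right ?_ h5
    calc _ = #{χ : Pt × Ln → Fin r | ¬ Rich pen sz χ (univ.image g)} *
            ((r ^ s) ^ X * (r ^ s) ^ d) := by ring
      _ ≤ _ := h3
      _ = ((r ^ s - 1) ^ X * r ^ Fintype.card (Pt × Ln)) * (r ^ s - 1) ^ d := by ring
      _ ≤ _ := Nat.mul_le_mul_left _ h4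
  have h6 := Nat.mul_le_mul_right ((r ^ s) ^ X) h1
  rw [sum_mul] at h6
  have h7 := h6.trans (sum_le_sum h2)
  rw [sum_const, smul_eq_mul, card_univ, Fintype.card_fun, Fintype.card_fin] at h7
  have h8 : #({g : Fin t → Ln | X ≤ packNum pen s (univ.image g)} : Finset _)
      ≤ Fintype.card Ln ^ t := by
    refine (card_le_univ _).trans ?_
    simp
  have h9 : 0 < r ^ Fintype.card (Pt × Ln) := pow_pos hr _
  have h10 := Nat.mul_le_mul_right ((r ^ s - 1) ^ X * r ^ Fintype.card (Pt × Ln)) h8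
  have h11 := Nat.mul_lt_mul_of_pos_left hX h9
  nlinarith [h7, h10, h11]

/-! ### Container systems -/

/-- `Covers M m 𝒯`: the family `𝒯` of subsets of `V` has at most `(|V| + 1) ^ m` containers, that
is, sets of size at most `M` such that every member of `𝒯` lies in one of them. -/
def Covers {V : Type} [Fintype V] (M m : ℝ) (𝒯 : Finset V → Prop) : Prop :=
  ∃ 𝒞 : Finset (Finset V), (#𝒞 : ℝ) ≤ ((Fintype.card V : ℝ) + 1) ^ m ∧
    (∀ C ∈ 𝒞, (#C : ℝ) ≤ M) ∧ ∀ T, 𝒯 T → ∃ C ∈ 𝒞, T ⊆ C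

section Covers

variable {V : Type} [Fintype V] {M m m' : ℝ} {𝒯 𝒯' : Finset V → Prop}

lemma Covers.mono (h : Covers M m 𝒯) (hm : m ≤ m') (h𝒯 : ∀ T, 𝒯' T → 𝒯 T) :
    Covers M m' 𝒯' := by
  obtain ⟨𝒞, h1, h2, h3⟩ := h
  refine ⟨𝒞, h1.trans (Real.rpow_le_rpow_of_exponent_le ?_ hm), h2, fun T hT => h3 T (h𝒯 T hT)⟩
  have : (0 : ℝ) ≤ Fintype.card V := Nat.cast_nonneg _
  linarith

lemma Covers.of_empty (h : ∀ T, ¬ 𝒯 T) : Covers M m 𝒯 := by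
  refine ⟨∅, ?_, by simp, fun T hT => absurd hT (h T)⟩
  simp only [card_empty, Nat.cast_zero]
  positivity

lemma Covers.of_single (C : Finset V) (hC : (#C : ℝ) ≤ M) (hm : 0 ≤ m) (h : ∀ T, 𝒯 T → T ⊆ C) :
    Covers M m 𝒯 := by
  refine ⟨{C}, ?_, by simpa using hC, fun T hT => ⟨C, mem_singleton_self _, h T hT⟩⟩
  have : (0 : ℝ) ≤ Fintype.card V := Nat.cast_nonneg _
  simpa using Real.one_le_rpow (by linarith : (1 : ℝ) ≤ (Fintype.card V : ℝ) + 1) hm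

/-- The branching step of the container construction: guess an element of `T` in `G`, or the fact
that there is none. There are at most `|V| + 1` possible guesses. -/
lemma Covers.branch [DecidableEq V] (G : Finset V)
    (h1 : ∀ v ∈ G, Covers M m fun T => 𝒯 T ∧ v ∈ T)
    (h0 : Covers M m fun T => 𝒯 T ∧ Disjoint T G) : Covers M (m + 1) 𝒯 := by
  classical
  choose! 𝒞 hc hM hcov using h1
  obtain ⟨𝒞₀, hc0, hM0, hcov0⟩ := h0
  have hN : (0 : ℝ) ≤ Fintype.card V := Nat.cast_nonneg _
  refine ⟨𝒞₀ ∪ G.biUnion 𝒞, ?_, ?_, ?_⟩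
  · have e1 : (#(𝒞₀ ∪ G.biUnion 𝒞) : ℝ) ≤ #𝒞₀ + ∑ v ∈ G, (#(𝒞 v) : ℝ) := by
      exact_mod_cast (card_union_le _ _).trans (Nat.add_le_add_left card_biUnion_le _)
    have e2 : ∑ v ∈ G, (#(𝒞 v) : ℝ) ≤ #G * ((Fintype.card V : ℝ) + 1) ^ m := by
      rw [← nsmul_eq_mul]
      exact sum_le_card_nsmul _ _ _ hc
    have e3 : (#G : ℝ) ≤ Fintype.card V := by exact_mod_cast card_le_univ G
    rw [Real.rpow_add (by linarith), Real.rpow_one]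
    have e4 : 0 ≤ ((Fintype.card V : ℝ) + 1) ^ m := by positivity
    nlinarith
  · intro C hC
    rcases mem_union.1 hC with h | h
    · exact hM0 C h
    · obtain ⟨v, hv, h⟩ := mem_biUnion.1 h
      exact hM v hv C h
  · intro T hT
    by_cases hd : Disjoint T G
    · obtain ⟨C, hC, h⟩ := hcov0 T ⟨hT, hd⟩
      exact ⟨C, mem_union_left _ hC, h⟩
    · obtain ⟨v, hvT, hvG⟩ := not_disjoint_iff.1 hd
      obtain ⟨C, hC, h⟩ := hcov v hvG T ⟨hT, hvT⟩
      exact ⟨C, mem_union_right _ (mem_biUnion.2 ⟨v, hvG, hC⟩), h⟩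

end Covers

section Counting

variable {V ι : Type} [DecidableEq V]

lemma sum_card_inter (𝓐 : Finset ι) (f : ι → Finset V) (X : Finset V) :
    ∑ i ∈ 𝓐, #(f i ∩ X) = ∑ w ∈ X, #{i ∈ 𝓐 | w ∈ f i} := by
  refine Eq.trans (sum_congr rfl fun i _ => ?_)
    (sum_card_bipartiteAbove_eq_sum_card_bipartiteBelow (s := 𝓐) (t := X) fun i w => w ∈ f i)
  congr 1
  ext w
  simp [bipartiteAbove, and_comm]

/-- Double counting: if the sets `f i` are large and no element lies in more than `D` of them,
then many elements outside `S` lie in at least `θ` of them. -/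
lemma good_large (𝓐 : Finset ι) (f : ι → Finset V) (U S : Finset V) {D θ κ : ℝ}
    (hθ : 0 ≤ θ) (hD0 : 0 ≤ D) (hU : ∀ i ∈ 𝓐, f i ⊆ U) (hκ : ∀ i ∈ 𝓐, κ ≤ #(f i))
    (hD : ∀ w, (#{i ∈ 𝓐 | w ∈ f i} : ℝ) ≤ D) :
    #𝓐 * κ ≤ (#{v ∈ U \ S | θ ≤ (#{i ∈ 𝓐 | v ∈ f i} : ℝ)} + #S) * D + #U * θ := by
  set G := {v ∈ U \ S | θ ≤ (#{i ∈ 𝓐 | v ∈ f i} : ℝ)} with hG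
  have h1 : (∑ i ∈ 𝓐, (#(f i ∩ U) : ℝ)) = ∑ w ∈ U, (#{i ∈ 𝓐 | w ∈ f i} : ℝ) := by
    exact_mod_cast sum_card_inter 𝓐 f U
  have h2 : #𝓐 * κ ≤ ∑ i ∈ 𝓐, (#(f i ∩ U) : ℝ) := by
    rw [← nsmul_eq_mul]
    refine card_nsmul_le_sum _ _ _ fun i hi => ?_
    rw [inter_eq_left.2 (hU i hi)]
    exact hκ i hi
  have h3 : ∀ w ∈ U, (#{i ∈ 𝓐 | w ∈ f i} : ℝ) ≤ (if w ∈ G ∪ S then D else 0) + θ := by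
    intro w hw
    split_ifs with h
    · have := hD w
      linarith
    · simp only [hG, mem_union, mem_filter, mem_sdiff, not_or, not_and, not_le] at h
      have := h.1 ⟨hw, h.2⟩
      linarith
  have h4 := sum_le_sum h3
  rw [sum_add_distrib, sum_const, nsmul_eq_mul, ← sum_filter, sum_const, nsmul_eq_mul] at h4
  have h5 : (#{w ∈ U | w ∈ G ∪ S} : ℝ) ≤ #G + #S := by
    have : {w ∈ U | w ∈ G ∪ S} ⊆ G ∪ S := fun w hw => (mem_filter.1 hw).2
    exact_mod_cast (card_le_card this).trans (card_union_le _ _)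
  have := mul_le_mul_of_nonneg_right h5 hD0
  linarith

/-- If the sets `f' i` have at most `k` elements, few elements `w` have degree above `D' - 1`, and
consequently few sets `f i` lose `k'` elements when those `w` are deleted. -/
lemma dead_small (𝓐 𝓐' 𝓓 : Finset ι) (f f' : ι → Finset V) (Sat : Finset V)
    {D D' k k' : ℝ} (hDpos : 0 ≤ D) (h𝓓 : 𝓓 ⊆ 𝓐)
    (hk : ∀ i ∈ 𝓐', (#(f' i) : ℝ) ≤ k) (hSat : ∀ w ∈ Sat, D' ≤ #{i ∈ 𝓐' | w ∈ f' i})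
    (hD : ∀ w, (#{i ∈ 𝓐 | w ∈ f i} : ℝ) ≤ D) (hk' : ∀ i ∈ 𝓓, k' ≤ (#(f i ∩ Sat) : ℝ))
    (hD' : 0 ≤ D') :
    #𝓓 * k' * D' ≤ #𝓐' * k * D := by
  have h1 : #Sat * D' ≤ #𝓐' * k := by
    have e : (∑ i ∈ 𝓐', (#(f' i ∩ Sat) : ℝ)) = ∑ w ∈ Sat, (#{i ∈ 𝓐' | w ∈ f' i} : ℝ) := by
      exact_mod_cast sum_card_inter 𝓐' f' Sat
    have e1 : #Sat * D' ≤ ∑ w ∈ Sat, (#{i ∈ 𝓐' | w ∈ f' i} : ℝ) := by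
      rw [← nsmul_eq_mul]; exact card_nsmul_le_sum _ _ _ hSat
    have e2 : (∑ i ∈ 𝓐', (#(f' i ∩ Sat) : ℝ)) ≤ #𝓐' * k := by
      rw [← nsmul_eq_mul]
      refine sum_le_card_nsmul _ _ _ fun i hi => le_trans ?_ (hk i hi)
      exact_mod_cast card_le_card inter_subset_left
    linarith
  have h2 : #𝓓 * k' ≤ #Sat * D := by
    have e : (∑ i ∈ 𝓓, (#(f i ∩ Sat) : ℝ)) = ∑ w ∈ Sat, (#{i ∈ 𝓓 | w ∈ f i} : ℝ) := by
      exact_mod_cast sum_card_inter 𝓓 f Sat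
    have e1 : #𝓓 * k' ≤ ∑ i ∈ 𝓓, (#(f i ∩ Sat) : ℝ) := by
      rw [← nsmul_eq_mul]; exact card_nsmul_le_sum _ _ _ hk'
    have e2 : ∑ w ∈ Sat, (#{i ∈ 𝓓 | w ∈ f i} : ℝ) ≤ #Sat * D := by
      rw [← nsmul_eq_mul]
      refine sum_le_card_nsmul _ _ _ fun w _ => le_trans ?_ (hD w)
      exact_mod_cast card_le_card (filter_subset_filter _ h𝓓)
    linarith
  calc #𝓓 * k' * D' ≤ #Sat * D * D' := mul_le_mul_of_nonneg_right h2 hD'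
    _ = #Sat * D' * D := by ring
    _ ≤ _ := mul_le_mul_of_nonneg_right h1 hDpos

end Counting

/-! ### The rounds of the container construction -/

/-- The sets `T` of size at most `t` and weight at most `X` with `S ⊆ T ⊆ U ∪ S`: these are the sets
still to be covered once the elements of `S` are known to be in `T` and `T` is known to avoid the
complement of `U ∪ S`. -/
def Fam {V : Type} [DecidableEq V] (wt : Finset V → ℕ) (t X : ℕ) (U S T : Finset V) : Prop :=
  #T ≤ t ∧ wt T ≤ X ∧ S ⊆ T ∧ T ⊆ U ∪ S

lemma Fam.insert {V : Type} [DecidableEq V] {wt : Finset V → ℕ} {t X : ℕ} {U S T : Finset V}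
    {v : V} (h : Fam wt t X U S T ∧ v ∈ T) : Fam wt t X U (insert v S) T :=
  ⟨h.1.1, h.1.2.1, insert_subset h.2 h.1.2.2.1,
    h.1.2.2.2.trans (union_subset_union_right (subset_insert v S))⟩

lemma Fam.sdiff {V : Type} [DecidableEq V] {wt : Finset V → ℕ} {t X : ℕ} {U S T G : Finset V}
    (h : Fam wt t X U S T ∧ Disjoint T G) : Fam wt t X (U \ G) S T := by
  refine ⟨h.1.1, h.1.2.1, h.1.2.2.1, fun x hx => ?_⟩
  have := h.1.2.2.2 hx
  have hG := disjoint_left.1 h.2 hx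
  simp only [mem_union, mem_sdiff] at this ⊢
  tauto

/-- A system of subsets `f i` of the blocks `b i`, `i ∈ 𝓐`, of size at least `κ` and maximum degree
at most `D`, in which every block contains at least `j` elements of the chosen set `R`. -/
structure Level {V ι : Type} [DecidableEq V] (b f : ι → Finset V) (R : Finset V) (j : ℕ) (D : ℝ)
    (κ : ℕ) (𝓐 : Finset ι) : Prop where
  sub : ∀ i ∈ 𝓐, f i ⊆ b i
  large : ∀ i ∈ 𝓐, κ ≤ #(f i)
  hit : ∀ i ∈ 𝓐, j ≤ #(b i ∩ R)
  deg : ∀ w, (#{i ∈ 𝓐 | w ∈ f i} : ℝ) ≤ D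

lemma Level.mono {V ι : Type} [DecidableEq V] {b f : ι → Finset V} {R R' : Finset V} {j : ℕ} {D : ℝ}
    {κ : ℕ} {𝓐 : Finset ι} (h : Level b f R j D κ 𝓐) (hR : R ⊆ R') : Level b f R' j D κ 𝓐 :=
  ⟨h.sub, h.large, fun i hi => (h.hit i hi).trans (card_le_card (inter_subset_inter_left hR)),
    h.deg⟩

/-- One round of the container construction: from a level-`j` system with at least `Δ` members a
level-`(j+1)` system with at least `Δ'` members is built by guessing elements of `T`, unless a
positive proportion of `U` is discarded on the way. -/
lemma round_step {V ι : Type} [Fintype V] [DecidableEq V] [DecidableEq ι] {wt : Finset V → ℕ}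
    {t X : ℕ} {U S₀ S₁ : Finset V} {b f : ι → Finset V} {𝓐 : Finset ι} {j κ κ' k' : ℕ}
    {M m D D' Δ Δ' θ δ k : ℝ} (hθ : 0 < θ) (hD0 : 0 ≤ D) (hD'1 : 1 ≤ D') (hk0 : 0 ≤ k)
    (hbU : ∀ i ∈ 𝓐, b i ⊆ U) (hbk : ∀ i ∈ 𝓐, (#(b i) : ℝ) ≤ k)
    (hlin : ∀ v w, v ≠ w → ∀ i ∈ 𝓐, ∀ i' ∈ 𝓐, v ∈ b i → w ∈ b i → v ∈ b i' → w ∈ b i' → i = i')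
    (hS : S₀ ⊆ S₁) (hlev : Level b f (S₁ \ S₀) j D κ 𝓐) (hΔ : Δ ≤ #𝓐) (hκ : κ' + k' ≤ κ)
    (hΔ' : Δ' ≤ Δ / 4) (hnum : ∀ x : ℝ, Δ / 2 * κ ≤ (x + t) * D + #U * θ → δ * #U ≤ x)
    (hnum2 : ∀ x : ℝ, x * k' * (D' - 1) ≤ Δ' * k * D → x ≤ Δ / 4)
    (hnext : ∀ S, S₁ ⊆ S → ∀ 𝓐' ⊆ 𝓐, ∀ f', Level b f' (S \ S₀) (j + 1) D' κ' 𝓐' → Δ' ≤ #𝓐' →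
      Covers M m (Fam wt t X U S))
    (hshr : ∀ S, S₁ ⊆ S → ∀ U' ⊆ U, (#U' : ℝ) ≤ (1 - δ) * #U → Covers M m (Fam wt t X U' S)) :
    ∀ n S, #(U \ S) ≤ n → S₁ ⊆ S → ∀ 𝓐' ⊆ 𝓐, ∀ f', Level b f' (S \ S₀) (j + 1) D' κ' 𝓐' →
      #𝓐' < Δ' → Covers M (m + 1 + (Δ' - #𝓐') / θ) (Fam wt t X U S) := by
  classical
  intro n
  induction n with
  | zero => ?_
  | succ n ih => ?_
  all_goals
    intro S hn hS1 𝓐' h𝓐' f' hlev' hlt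
    -- a family with `#S > t` is empty
    by_cases hSt : t < #S
    · exact Covers.of_empty fun T hT => absurd ((card_le_card hT.2.2.1).trans hT.1) (by omega)
    have hSt : (#S : ℝ) ≤ t := by exact_mod_cast not_lt.1 hSt
    set Sat : Finset V := {w | D' - 1 < #{i ∈ 𝓐' | w ∈ f' i}} with hSat
    set 𝓓 : Finset ι := {i ∈ 𝓐 | #(f i \ Sat) ≤ κ'} with h𝓓
    set 𝓛 : Finset ι := {i ∈ 𝓐 \ 𝓐' | κ' < #(f i \ Sat)} with h𝓛
    have h𝓛𝓐 : 𝓛 ⊆ 𝓐 := (filter_subset _ _).trans sdiff_subset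
    have hdead : (#𝓓 : ℝ) ≤ Δ / 4 := by
      apply hnum2
      have h := dead_small 𝓐 𝓐' 𝓓 f f' Sat (D' := D' - 1) (k := k) (k' := k') hD0
        (filter_subset _ _)
        (fun i hi => le_trans (by exact_mod_cast card_le_card (hlev'.sub i hi)) (hbk i (h𝓐' hi)))
        (fun w hw => by
          have : D' - 1 < #{i ∈ 𝓐' | w ∈ f' i} := by simpa [hSat] using hw
          exact this.le) hlev.deg
        (fun i hi => by
          have hi := mem_filter.1 hi
          have h1 := card_sdiff_add_card_inter (f i) Sat
          have h2 := hlev.large i hi.1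
          have : k' ≤ #(f i ∩ Sat) := by omega
          exact_mod_cast this) (by linarith)
      refine h.trans ?_
      have := mul_le_mul_of_nonneg_right hlt.le (mul_nonneg hk0 hD0)
      linarith
    have halive : Δ / 2 ≤ #𝓛 := by
      have : 𝓐 ⊆ 𝓛 ∪ (𝓐' ∪ 𝓓) := by
        intro i hi
        simp only [h𝓛, h𝓓, mem_union, mem_filter, mem_sdiff, hi, true_and]
        by_cases h1 : i ∈ 𝓐' <;> by_cases h2 : #(f i \ Sat) ≤ κ' <;> simp [h1, h2] <;> omega
      have : (#𝓐 : ℝ) ≤ #𝓛 + (#𝓐' + #𝓓) := by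
        exact_mod_cast (card_le_card this).trans ((card_union_le _ _).trans
          (Nat.add_le_add_left (card_union_le _ _) _))
      linarith
    set G := {v ∈ U \ S | θ ≤ (#{i ∈ 𝓛 | v ∈ f i} : ℝ)} with hG
    have hGlarge : δ * #U ≤ #G := by
      apply hnum
      have h := good_large 𝓛 f U S (D := D) (κ := κ) hθ.le hD0
        (fun i hi => (hlev.sub i (h𝓛𝓐 hi)).trans (hbU i (h𝓛𝓐 hi)))
        (fun i hi => by exact_mod_cast hlev.large i (h𝓛𝓐 hi))
        (fun w => le_trans (by exact_mod_cast card_le_card (filter_subset_filter _ h𝓛𝓐))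
          (hlev.deg w))
      have h1 := mul_le_mul_of_nonneg_right halive (Nat.cast_nonneg (α := ℝ) κ)
      have h2 := mul_le_mul_of_nonneg_right (add_le_add_right hSt (#G : ℝ)) hD0
      linarith
    have hratio : 0 ≤ (Δ' - #𝓐') / θ := div_nonneg (by linarith) hθ.le
    have hcov0 : Covers M (m + (Δ' - #𝓐') / θ) fun T => Fam wt t X U S T ∧ Disjoint T G := by
      refine (hshr S hS1 (U \ G) sdiff_subset ?_).mono (by linarith) fun T hT => Fam.sdiff hT
      have hGU : G ⊆ U := (filter_subset _ _).trans sdiff_subset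
      have : (#(U \ G) : ℝ) + #G = #U := by exact_mod_cast card_sdiff_add_card_eq_card hGU
      linarith
    have e : m + 1 + (Δ' - #𝓐') / θ = m + (Δ' - #𝓐') / θ + 1 := by ring
    rw [e]
    refine Covers.branch G ?_ hcov0
    intro v hv
  · -- here `U ⊆ S`, so there is nothing to choose
    have : v ∈ U \ S := (mem_filter.1 hv).1
    rw [card_eq_zero.1 (Nat.le_zero.1 hn)] at this
    simp at this
  · obtain ⟨hvUS, hvθ⟩ := mem_filter.1 hv
    have hvU := (mem_sdiff.1 hvUS).1
    have hvS := (mem_sdiff.1 hvUS).2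
    set 𝓝 : Finset ι := {i ∈ 𝓛 | v ∈ f i} with h𝓝
    set f'' : ι → Finset V := fun i => if i ∈ 𝓐' then f' i else (f i \ Sat).erase v with hf''
    have hS1' : S₁ ⊆ insert v S := hS1.trans (subset_insert _ _)
    have h𝓝𝓐 : 𝓝 ⊆ 𝓐 := (filter_subset _ _).trans h𝓛𝓐
    have hdis : ∀ i ∈ 𝓝, i ∉ 𝓐' := fun i hi =>
      (mem_sdiff.1 (mem_filter.1 (mem_filter.1 hi).1).1).2
    have hcard : (#(𝓐' ∪ 𝓝) : ℝ) = #𝓐' + #𝓝 := by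
      rw [card_union_of_disjoint (disjoint_right.2 hdis)]; push_cast; rfl
    have hlev'' : Level b f'' (insert v S \ S₀) (j + 1) D' κ' (𝓐' ∪ 𝓝) := by
      refine ⟨?_, ?_, ?_, ?_⟩
      · intro i hi
        by_cases h : i ∈ 𝓐'
        · simp only [hf'', h, if_true]; exact hlev'.sub i h
        · have hi := (mem_union.1 hi).resolve_left h
          simp only [hf'', h, if_false]
          exact (erase_subset _ _).trans (sdiff_subset.trans (hlev.sub i (h𝓝𝓐 hi)))
      · intro i hi
        by_cases h : i ∈ 𝓐'
        · simp only [hf'', h, if_true]; exact hlev'.large i h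
        · have hi := (mem_union.1 hi).resolve_left h
          simp only [hf'', h, if_false]
          have h1 := (mem_filter.1 (mem_filter.1 hi).1).2
          have h2 := pred_card_le_card_erase (s := f i \ Sat) (a := v)
          omega
      · intro i hi
        by_cases h : i ∈ 𝓐'
        · exact (hlev'.hit i h).trans (card_le_card (inter_subset_inter_left
            (sdiff_subset_sdiff (subset_insert _ _) le_rfl)))
        · have hi := (mem_union.1 hi).resolve_left h
          have h1 := hlev.hit i (h𝓝𝓐 hi)
          have hvb : v ∈ b i := hlev.sub i (h𝓝𝓐 hi) (mem_filter.1 hi).2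
          have h2 : insert v (b i ∩ (S₁ \ S₀)) ⊆ b i ∩ (insert v S \ S₀) := by
            intro x hx
            rcases mem_insert.1 hx with rfl | hx
            · simp only [mem_inter, mem_sdiff, mem_insert, true_or, true_and]
              exact ⟨hvb, fun h => hvS (hS1 (hS h))⟩
            · simp only [mem_inter, mem_sdiff, mem_insert] at hx ⊢
              exact ⟨hx.1, Or.inr (hS1 hx.2.1), hx.2.2⟩
          have h3 := card_le_card h2
          rw [card_insert_of_notMem (fun h => hvS (hS1 (mem_sdiff.1 (mem_inter.1 h).2).1))] at h3
          omega
      · intro w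
        have h1 : {i ∈ 𝓐' ∪ 𝓝 | w ∈ f'' i} ⊆
            {i ∈ 𝓐' | w ∈ f' i} ∪ {i ∈ 𝓝 | w ∈ (f i \ Sat).erase v} := by
          intro i hi
          obtain ⟨hi, hw⟩ := mem_filter.1 hi
          by_cases h : i ∈ 𝓐'
          · simp only [hf'', h, if_true] at hw
            exact mem_union_left _ (mem_filter.2 ⟨h, hw⟩)
          · simp only [hf'', h, if_false] at hw
            exact mem_union_right _ (mem_filter.2 ⟨(mem_union.1 hi).resolve_left h, hw⟩)
        have h2 := (card_le_card h1).trans (card_union_le _ _)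
        by_cases hw : w = v ∨ w ∈ Sat
        · have : {i ∈ 𝓝 | w ∈ (f i \ Sat).erase v} = ∅ := by
            refine filter_eq_empty_iff.2 fun i _ h => ?_
            simp only [mem_erase, mem_sdiff] at h
            tauto
          rw [this, card_empty, add_zero] at h2
          exact le_trans (by exact_mod_cast h2) (hlev'.deg w)
        · push Not at hw
          -- two distinct elements lie in at most one common block
          have h3 : #{i ∈ 𝓝 | w ∈ (f i \ Sat).erase v} ≤ 1 := by
            rw [card_le_one]
            intro i hi i' hi'
            simp only [h𝓝, mem_filter, mem_erase, mem_sdiff] at hi hi'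
            have hb := hlev.sub i (h𝓛𝓐 hi.1.1)
            have hb' := hlev.sub i' (h𝓛𝓐 hi'.1.1)
            exact hlin v w hw.1.symm i (h𝓛𝓐 hi.1.1) i' (h𝓛𝓐 hi'.1.1) (hb hi.1.2)
              (hb hi.2.2.1) (hb' hi'.1.2) (hb' hi'.2.2.1)
          have h4 : (#{i ∈ 𝓐' | w ∈ f' i} : ℝ) ≤ D' - 1 := by
            have := hw.2
            simpa [hSat] using this
          have h5 : (#{i ∈ 𝓐' ∪ 𝓝 | w ∈ f'' i} : ℝ) ≤ #{i ∈ 𝓐' | w ∈ f' i} + 1 := by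
            exact_mod_cast h2.trans (Nat.add_le_add_left h3 _)
          linarith
    by_cases hdone : Δ' ≤ #(𝓐' ∪ 𝓝)
    · exact (hnext _ hS1' _ (union_subset h𝓐' h𝓝𝓐) f'' hlev'' hdone).mono (by linarith)
        fun T hT => Fam.insert hT
    · have hlt' : #(U \ insert v S) ≤ n := by
        have : #(U \ insert v S) < #(U \ S) := by
          apply card_lt_card
          rw [ssubset_iff_of_subset (sdiff_subset_sdiff le_rfl (subset_insert _ _))]
          exact ⟨v, hvUS, by simp⟩
        omega
      refine (ih _ hlt' hS1' _ (union_subset h𝓐' h𝓝𝓐) f'' hlev'' (not_le.1 hdone)).mono ?_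
        fun T hT => Fam.insert hT
      have : (Δ' - #(𝓐' ∪ 𝓝)) / θ ≤ (Δ' - #𝓐') / θ - 1 := by
        have h1 : 1 ≤ #𝓝 / θ := (one_le_div hθ).2 hvθ
        rw [hcard, show Δ' - ((#𝓐' : ℝ) + #𝓝) = Δ' - #𝓐' - #𝓝 by ring, sub_div]
        linarith
      linarith

/-- The last round of the container construction. Every chosen element `v` completes at least `θ`
blocks, each of which adds one to the weight, so this happens at most `X / θ` times overall. -/
lemma last_step {V ι : Type} [Fintype V] [DecidableEq V] [DecidableEq ι] {wt : Finset V → ℕ}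
    {t X : ℕ} {U S₀ S₁ : Finset V} {b f : ι → Finset V} {𝓐 : Finset ι} {j κ : ℕ}
    {M m D Δ θ δ : ℝ} (hθ : 0 < θ) (hD0 : 0 ≤ D)
    (hwt : ∀ S T, S ⊆ T → wt S ≤ wt T)
    (hpack : ∀ S, S₁ ⊆ S → wt S₀ + #{i ∈ 𝓐 | j + 1 ≤ #(b i ∩ (S \ S₀))} ≤ wt S)
    (hbU : ∀ i ∈ 𝓐, b i ⊆ U)
    (hS : S₀ ⊆ S₁) (hlev : Level b f (S₁ \ S₀) j D κ 𝓐) (hΔ : Δ ≤ #𝓐) (hX : X ≤ Δ / 2)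
    (hnum : ∀ x : ℝ, Δ / 2 * κ ≤ (x + t) * D + #U * θ → δ * #U ≤ x)
    (hshr : ∀ S, S₁ ⊆ S → ∀ U' ⊆ U, (#U' : ℝ) ≤ (1 - δ) * #U →
      Covers M (m + ((X : ℝ) - wt S) / θ) (Fam wt t X U' S)) :
    ∀ n S, #(U \ S) ≤ n → S₁ ⊆ S →
      Covers M (m + 1 + ((X : ℝ) - wt S₀ - #{i ∈ 𝓐 | j + 1 ≤ #(b i ∩ (S \ S₀))}) / θ)
        (Fam wt t X U S) := by
  classical
  intro n
  induction n with
  | zero => ?_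
  | succ n ih => ?_
  all_goals
    intro S hn hS1
    by_cases hemp : ∀ T, ¬ Fam wt t X U S T
    · exact Covers.of_empty hemp
    push Not at hemp
    obtain ⟨T₀, hT₀⟩ := hemp
    have hSt : (#S : ℝ) ≤ t := by exact_mod_cast (card_le_card hT₀.2.2.1).trans hT₀.1
    have hSX : wt S ≤ X := (hwt _ _ hT₀.2.2.1).trans hT₀.2.1
    set 𝓗 : Finset ι := {i ∈ 𝓐 | j + 1 ≤ #(b i ∩ (S \ S₀))} with h𝓗
    have hp : (wt S₀ : ℝ) + #𝓗 ≤ wt S := by exact_mod_cast hpack S hS1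
    have hSX' : (wt S : ℝ) ≤ X := by exact_mod_cast hSX
    have hwt0 : (0 : ℝ) ≤ wt S₀ := Nat.cast_nonneg _
    set 𝓛 : Finset ι := 𝓐 \ 𝓗 with h𝓛
    have h𝓛𝓐 : 𝓛 ⊆ 𝓐 := sdiff_subset
    have halive : Δ / 2 ≤ #𝓛 := by
      have : (#𝓛 : ℝ) + #𝓗 = #𝓐 := by exact_mod_cast card_sdiff_add_card_eq_card (filter_subset _ _)
      linarith
    set G := {v ∈ U \ S | θ ≤ (#{i ∈ 𝓛 | v ∈ f i} : ℝ)} with hG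
    have hGlarge : δ * #U ≤ #G := by
      apply hnum
      have h := good_large 𝓛 f U S (D := D) (κ := κ) hθ.le hD0
        (fun i hi => (hlev.sub i (h𝓛𝓐 hi)).trans (hbU i (h𝓛𝓐 hi)))
        (fun i hi => by exact_mod_cast hlev.large i (h𝓛𝓐 hi))
        (fun w => le_trans (by exact_mod_cast card_le_card (filter_subset_filter _ h𝓛𝓐))
          (hlev.deg w))
      have h1 := mul_le_mul_of_nonneg_right halive (Nat.cast_nonneg (α := ℝ) κ)
      have h2 := mul_le_mul_of_nonneg_right (add_le_add_right hSt (#G : ℝ)) hD0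
      linarith
    have hcov0 : Covers M (m + ((X : ℝ) - wt S₀ - #𝓗) / θ)
        fun T => Fam wt t X U S T ∧ Disjoint T G := by
      refine (hshr S hS1 (U \ G) sdiff_subset ?_).mono ?_ fun T hT => Fam.sdiff hT
      · have hGU : G ⊆ U := (filter_subset _ _).trans sdiff_subset
        have : (#(U \ G) : ℝ) + #G = #U := by exact_mod_cast card_sdiff_add_card_eq_card hGU
        linarith
      · have : ((X : ℝ) - wt S) / θ ≤ ((X : ℝ) - wt S₀ - #𝓗) / θ :=
          div_le_div_of_nonneg_right (by linarith) hθ.le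
        linarith
    have e : m + 1 + ((X : ℝ) - wt S₀ - #𝓗) / θ = m + ((X : ℝ) - wt S₀ - #𝓗) / θ + 1 := by ring
    rw [e]
    refine Covers.branch G ?_ hcov0
    intro v hv
  · have : v ∈ U \ S := (mem_filter.1 hv).1
    rw [card_eq_zero.1 (Nat.le_zero.1 hn)] at this
    simp at this
  · obtain ⟨hvUS, hvθ⟩ := mem_filter.1 hv
    have hvS := (mem_sdiff.1 hvUS).2
    have hS1' : S₁ ⊆ insert v S := hS1.trans (subset_insert _ _)
    have hlt' : #(U \ insert v S) ≤ n := by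
      have : #(U \ insert v S) < #(U \ S) := by
        apply card_lt_card
        rw [ssubset_iff_of_subset (sdiff_subset_sdiff le_rfl (subset_insert _ _))]
        exact ⟨v, hvUS, by simp⟩
      omega
    refine (ih _ hlt' hS1').mono ?_ fun T hT => Fam.insert hT
    set 𝓗' : Finset ι := {i ∈ 𝓐 | j + 1 ≤ #(b i ∩ (insert v S \ S₀))} with h𝓗'
    have hsub : 𝓗 ∪ {i ∈ 𝓛 | v ∈ f i} ⊆ 𝓗' := by
      intro i hi
      rcases mem_union.1 hi with hi | hi
      · obtain ⟨h1, h2⟩ := mem_filter.1 hi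
        exact mem_filter.2 ⟨h1, h2.trans (card_le_card (inter_subset_inter_left
            (sdiff_subset_sdiff (subset_insert _ _) le_rfl)))⟩
      · obtain ⟨h1, h2⟩ := mem_filter.1 hi
        refine mem_filter.2 ⟨h𝓛𝓐 h1, ?_⟩
        have h1' := hlev.hit i (h𝓛𝓐 h1)
        have hvb : v ∈ b i := hlev.sub i (h𝓛𝓐 h1) h2
        have h2 : insert v (b i ∩ (S₁ \ S₀)) ⊆ b i ∩ (insert v S \ S₀) := by
          intro x hx
          rcases mem_insert.1 hx with rfl | hx
          · simp only [mem_inter, mem_sdiff, mem_insert, true_or, true_and]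
            exact ⟨hvb, fun h => hvS (hS1 (hS h))⟩
          · simp only [mem_inter, mem_sdiff, mem_insert] at hx ⊢
            exact ⟨hx.1, Or.inr (hS1 hx.2.1), hx.2.2⟩
        have h3 := card_le_card h2
        rw [card_insert_of_notMem (fun h => hvS (hS1 (mem_sdiff.1 (mem_inter.1 h).2).1))] at h3
        omega
    have hcard : (#𝓗 : ℝ) + #{i ∈ 𝓛 | v ∈ f i} ≤ #𝓗' := by
      have h1 := card_le_card hsub
      rw [card_union_of_disjoint (disjoint_right.2 fun i hi =>
        (mem_sdiff.1 (mem_filter.1 hi).1).2)] at h1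
      exact_mod_cast h1
    have : ((X : ℝ) - wt S₀ - #𝓗') / θ ≤ ((X : ℝ) - wt S₀ - #𝓗) / θ - 1 := by
      rw [le_sub_iff_add_le, div_add_one hθ.ne']
      exact div_le_div_of_nonneg_right (by linarith) hθ.le
    linarith

/-- The `e + 1` rounds combined, where blocks have to be hit `e + 1` times to count. -/
lemma all_rounds {V ι : Type} [Fintype V] [DecidableEq V] [DecidableEq ι] {wt : Finset V → ℕ}
    {t X : ℕ} {U S₀ : Finset V} {b : ι → Finset V} {𝓑 : Finset ι} {e k' : ℕ} {κ : ℕ → ℕ}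
    {M m δ k τ : ℝ} {D Δ θ : ℕ → ℝ} (hθ : ∀ j, 0 < θ j) (hD0 : ∀ j, 0 ≤ D j) (hk0 : 0 ≤ k)
    (hτ0 : 0 ≤ τ) (hΔ0 : ∀ j, 0 < Δ j)
    (hD1 : ∀ j < e, 1 ≤ D (j + 1)) (hbU : ∀ i ∈ 𝓑, b i ⊆ U) (hbk : ∀ i ∈ 𝓑, (#(b i) : ℝ) ≤ k)
    (hlin : ∀ v w, v ≠ w → ∀ i ∈ 𝓑, ∀ i' ∈ 𝓑, v ∈ b i → w ∈ b i → v ∈ b i' → w ∈ b i' → i = i')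
    (hwt : ∀ S T, S ⊆ T → wt S ≤ wt T)
    (hpack : ∀ S, S₀ ⊆ S → wt S₀ + #{i ∈ 𝓑 | e + 1 ≤ #(b i ∩ (S \ S₀))} ≤ wt S)
    (hκ : ∀ j < e, κ (j + 1) + k' ≤ κ j) (hΔ4 : ∀ j < e, Δ (j + 1) ≤ Δ j / 4)
    (hτ : ∀ j < e, Δ (j + 1) / θ j ≤ τ) (hX : X ≤ Δ e / 2)
    (hnum : ∀ j ≤ e, ∀ x : ℝ, Δ j / 2 * κ j ≤ (x + t) * D j + #U * θ j → δ * #U ≤ x)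
    (hnum2 : ∀ j < e, ∀ x : ℝ, x * k' * (D (j + 1) - 1) ≤ Δ (j + 1) * k * D j → x ≤ Δ j / 4)
    (hshr : ∀ S, S₀ ⊆ S → ∀ U' ⊆ U, (#U' : ℝ) ≤ (1 - δ) * #U →
      Covers M (m + ((X : ℝ) - wt S) / θ e) (Fam wt t X U' S)) :
    ∀ d j, j + d = e → ∀ S₁, S₀ ⊆ S₁ → ∀ 𝓐 ⊆ 𝓑, ∀ f, Level b f (S₁ \ S₀) j (D j) (κ j) 𝓐 →
      Δ j ≤ #𝓐 →
      Covers M (m + ((X : ℝ) - wt S₀) / θ e + 1 + d * (τ + 1)) (Fam wt t X U S₁) := by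
  have hwtS : ∀ S, S₀ ⊆ S → ((X : ℝ) - wt S) / θ e ≤ ((X : ℝ) - wt S₀) / θ e := by
    intro S hS
    have : (wt S₀ : ℝ) ≤ wt S := by exact_mod_cast hwt _ _ hS
    exact div_le_div_of_nonneg_right (by linarith) (hθ e).le
  intro d
  induction d with
  | zero =>
    intro j hj S₁ hS 𝓐 h𝓐 f hlev hΔ
    obtain rfl : j = e := by omega
    have := last_step (m := m) (M := M) (δ := δ) (t := t) (X := X) (hθ j) (hD0 j) hwt
      (fun S hS1 => le_trans (Nat.add_le_add_left (card_le_card (filter_subset_filter _ h𝓐)) _)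
        (hpack S (hS.trans hS1))) (fun i hi => hbU i (h𝓐 hi)) hS hlev hΔ hX (hnum j le_rfl)
      (fun S hS1 U' hU' h => hshr S (hS.trans hS1) U' hU' h) _ S₁ le_rfl le_rfl
    refine this.mono ?_ fun T hT => hT
    have h1 : ((X : ℝ) - wt S₀ - #{i ∈ 𝓐 | j + 1 ≤ #(b i ∩ (S₁ \ S₀))}) / θ j
        ≤ ((X : ℝ) - wt S₀) / θ j :=
      div_le_div_of_nonneg_right (sub_le_self _ (Nat.cast_nonneg _)) (hθ j).le
    push_cast
    linarith
  | succ d ih =>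
    intro j hj S₁ hS 𝓐 h𝓐 f hlev hΔ
    have hje : j < e := by omega
    have := round_step (m := m + ((X : ℝ) - wt S₀) / θ e + 1 + d * (τ + 1)) (M := M) (t := t)
      (X := X) (wt := wt) (hθ j) (hD0 j) (hD1 j hje) hk0 (fun i hi => hbU i (h𝓐 hi))
      (fun i hi => hbk i (h𝓐 hi))
      (fun v w hvw i hi i' hi' => hlin v w hvw i (h𝓐 hi) i' (h𝓐 hi')) hS hlev hΔ (hκ j hje)
      (hΔ4 j hje) (hnum j hje.le) (hnum2 j hje)
      (fun S hS1 𝓐' h𝓐' f' hlev' hΔ' => ih (j + 1) (by omega) S (hS.trans hS1) 𝓐' (h𝓐'.trans h𝓐)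
        f' hlev' hΔ')
      (fun S hS1 U' hU' h => (hshr S (hS.trans hS1) U' hU' h).mono (by
        have h1 := hwtS S (hS.trans hS1)
        have h2 : 0 ≤ (d : ℝ) * (τ + 1) := by positivity
        linarith) fun T hT => hT)
      _ S₁ le_rfl le_rfl ∅ (empty_subset _) f
      ⟨by simp, by simp, by simp, by
        intro w
        have := hD1 j hje
        simp only [filter_empty, card_empty, Nat.cast_zero]
        linarith⟩ (by simpa using hΔ0 (j + 1))
    refine this.mono ?_ fun T hT => hT
    have h1 := hτ j hje
    simp only [card_empty, Nat.cast_zero, sub_zero]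
    push_cast
    linarith

/-! ### Containers for sets of small packing number -/

lemma packNum_mono {Pt Ln : Type} [Fintype Pt] [DecidableEq Ln] (pen : Pt → Finset Ln) (s : ℕ)
    {S T : Finset Ln} (h : S ⊆ T) : packNum pen s S ≤ packNum pen s T :=
  sum_le_sum fun _ _ => Nat.div_le_div_right (card_le_card (inter_subset_inter_left h))

/-- Disjoint blocks inside the pencils that contain `s` new elements each raise the packing number
by one. -/
lemma packNum_add {Pt Ln : Type} [Fintype Pt] [DecidableEq Ln] (pen : Pt → Finset Ln) {s : ℕ}
    (hs : 0 < s) {S T : Finset Ln} (h : S ⊆ T) (𝓑 : Finset (Pt × Finset Ln))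
    (hsub : ∀ B ∈ 𝓑, B.2 ⊆ pen B.1)
    (hdis : ∀ B ∈ 𝓑, ∀ B' ∈ 𝓑, B ≠ B' → B.1 = B'.1 → Disjoint B.2 B'.2) :
    packNum pen s S + #{B ∈ 𝓑 | s ≤ #(B.2 ∩ (T \ S))} ≤ packNum pen s T := by
  classical
  set 𝓗 : Finset (Pt × Finset Ln) := {B ∈ 𝓑 | s ≤ #(B.2 ∩ (T \ S))} with h𝓗
  have h1 : #𝓗 = ∑ P, #{B ∈ 𝓗 | B.1 = P} :=
    card_eq_sum_card_fiberwise (f := fun B : Pt × Finset Ln => B.1) (fun _ _ => mem_univ _)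
  rw [h1, packNum, packNum, ← sum_add_distrib]
  refine sum_le_sum fun P _ => ?_
  have h2 : s * #{B ∈ 𝓗 | B.1 = P} ≤ #(pen P ∩ (T \ S)) := by
    have h3 : #(({B ∈ 𝓗 | B.1 = P}).biUnion fun B => B.2 ∩ (T \ S))
        = ∑ B ∈ {B ∈ 𝓗 | B.1 = P}, #(B.2 ∩ (T \ S)) := by
      apply card_biUnion
      intro B hB B' hB' hne
      obtain ⟨hB1, hB2⟩ := mem_filter.1 hB
      obtain ⟨hB1', hB2'⟩ := mem_filter.1 hB'
      have := hdis B (mem_filter.1 hB1).1 B' (mem_filter.1 hB1').1 hne (hB2.trans hB2'.symm)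
      exact disjoint_of_subset_left inter_subset_left
        (disjoint_of_subset_right inter_subset_left this)
    have h4 : #(({B ∈ 𝓗 | B.1 = P}).biUnion fun B => B.2 ∩ (T \ S)) ≤ #(pen P ∩ (T \ S)) := by
      apply card_le_card
      intro x hx
      obtain ⟨B, hB, hxB⟩ := mem_biUnion.1 hx
      obtain ⟨hB1, hB2⟩ := mem_filter.1 hB
      have := hsub B (mem_filter.1 hB1).1 (mem_inter.1 hxB).1
      rw [hB2] at this
      exact mem_inter.2 ⟨this, (mem_inter.1 hxB).2⟩
    have h5 := card_nsmul_le_sum {B ∈ 𝓗 | B.1 = P} (fun B => #(B.2 ∩ (T \ S))) s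
      (fun B hB => (mem_filter.1 (mem_filter.1 hB).1).2)
    rw [smul_eq_mul] at h5
    rw [mul_comm]
    omega
  have h6 : #(pen P ∩ S) + #(pen P ∩ (T \ S)) ≤ #(pen P ∩ T) := by
    rw [← card_union_of_disjoint (disjoint_of_subset_left inter_subset_right
      (disjoint_of_subset_right inter_subset_right disjoint_sdiff))]
    apply card_le_card
    intro x hx
    simp only [mem_union, mem_inter, mem_sdiff] at hx ⊢
    rcases hx with hx | hx
    · exact ⟨hx.1, h hx.2⟩
    · exact ⟨hx.1, hx.2.1⟩
  calc #(pen P ∩ S) / s + #{B ∈ 𝓗 | B.1 = P}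
      = (#(pen P ∩ S) + s * #{B ∈ 𝓗 | B.1 = P}) / s := (Nat.add_mul_div_left _ _ hs).symm
    _ ≤ _ := Nat.div_le_div_right (by omega)

/-- The hypothesis `hnum` of `all_rounds` for the degrees `D j = 2 * q * (16 * (e + 1) * lam) ^ j`,
thresholds `θ j = q * lam ^ j / 32` and system sizes `Δ j = q ^ 3 * lam ^ j`: each round offers at
least `δ * u` vertices to guess from. -/
lemma num_good {q lam δ C₀ u t x κ k' : ℝ} {e j : ℕ} (hq0 : 0 < q) (hl0 : 0 < lam) (hj : j ≤ e)
    (hδ : δ = 1 / (128 * (16 * (e + 1)) ^ e)) (hC2 : 1 / δ ≤ C₀) (hu0 : 0 ≤ u)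
    (hU : C₀ * q ^ 2 < u) (h11 : t ≤ q ^ 2) (hκ : (e + 1) * k' ≤ κ)
    (hkU2 : u ≤ k' * (8 * (e + 1) * q ^ 2))
    (hx : q ^ 3 * lam ^ j / 2 * κ ≤ (x + t) * (2 * q * (16 * (e + 1) * lam) ^ j)
      + u * (q * lam ^ j / 32)) : δ * u ≤ x := by
  have he0 : (0 : ℝ) ≤ e := Nat.cast_nonneg _
  have h1 : u / (8 * q ^ 2) ≤ κ := by
    rw [div_le_iff₀ (by positivity)]
    nlinarith [mul_le_mul_of_nonneg_right hκ (sq_nonneg (q : ℝ))]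
  have hlj : 0 < lam ^ j := pow_pos hl0 j
  have h2 : (q : ℝ) ^ 3 * lam ^ j / 2 * (u / (8 * q ^ 2)) = q * lam ^ j * (u / 16) := by
    field_simp; ring
  have h3 := mul_le_mul_of_nonneg_left h1 (by positivity : 0 ≤ (q : ℝ) ^ 3 * lam ^ j / 2)
  rw [h2] at h3
  have h4 : q * lam ^ j * (u / 32) ≤ q * lam ^ j * ((x + t) * (2 * (16 * (e + 1)) ^ j)) := by
    have h5 : (x + t) * (2 * q * (16 * (e + 1) * lam) ^ j)
        = q * lam ^ j * ((x + t) * (2 * (16 * ((e : ℝ) + 1)) ^ j)) := by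
      rw [mul_pow]; ring
    have h6 : u * (q * lam ^ j / 32) = q * lam ^ j * (u / 32) := by ring
    have h7 : q * lam ^ j * (u / 16) = q * lam ^ j * (u / 32) + q * lam ^ j * (u / 32) := by
      ring
    linarith
  have h5 := le_of_mul_le_mul_left h4 (by positivity)
  have h6 : (16 * ((e : ℝ) + 1)) ^ j ≤ (16 * (e + 1)) ^ e :=
    pow_le_pow_right₀ (by linarith) hj
  have h7 : 0 < (16 * ((e : ℝ) + 1)) ^ j := by positivity
  have h8 : 2 * δ * u ≤ x + t := by
    have h9 : u / (64 * (16 * (e + 1)) ^ j) ≤ x + t := by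
      rw [div_le_iff₀ (by positivity)]
      linarith
    refine le_trans ?_ h9
    rw [hδ, le_div_iff₀ (by positivity)]
    have : 2 * (1 / (128 * (16 * ((e : ℝ) + 1)) ^ e)) * u * (64 * (16 * (e + 1)) ^ j)
        = u * ((16 * (e + 1)) ^ j / (16 * (e + 1)) ^ e) := by
      field_simp
      ring
    rw [this]
    refine mul_le_of_le_one_right hu0 ?_
    rw [div_le_one (by positivity)]
    exact h6
  have hδ0 : 0 < δ := by rw [hδ]; positivity
  have h10 : t ≤ δ * u := by
    have h12 : 1 ≤ δ * C₀ := by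
      rw [div_le_iff₀ hδ0] at hC2
      linarith
    have h13 := mul_le_mul_of_nonneg_left hU.le hδ0.le
    nlinarith [mul_le_mul_of_nonneg_right h12 (sq_nonneg (q : ℝ))]
  linarith

/-- The hypothesis `hnum2` of `all_rounds` for the same parameters: at most a quarter of the blocks
lose too many vertices to saturation. -/
lemma num_dead {q lam x k' : ℝ} {e j : ℕ} (hq0 : 0 < q) (hl0 : 0 < lam) (hk0 : 0 < k')
    (hD : 2 ≤ 2 * q * (16 * (e + 1) * lam) ^ (j + 1))
    (hx : x * k' * (2 * q * (16 * (e + 1) * lam) ^ (j + 1) - 1) ≤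
      q ^ 3 * lam ^ (j + 1) * (2 * (e + 1) * k') * (2 * q * (16 * (e + 1) * lam) ^ j)) :
    x ≤ q ^ 3 * lam ^ j / 4 := by
  by_contra! hlt
  have hΔp : 0 < q ^ 3 * lam ^ j := by positivity
  have hx0 : 0 < x := by linarith
  have hDp : 0 < 2 * q * (16 * (e + 1) * lam) ^ j := by positivity
  have h1 : x * k' * (2 * q * (16 * (e + 1) * lam) ^ (j + 1) / 2)
      ≤ x * k' * (2 * q * (16 * (e + 1) * lam) ^ (j + 1) - 1) :=
    mul_le_mul_of_nonneg_left (by linarith) (by positivity)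
  have h2 := h1.trans hx
  have e1 : x * k' * (2 * q * (16 * (e + 1) * lam) ^ (j + 1) / 2)
      = (4 * x) * (2 * k' * (e + 1) * lam * (2 * q * (16 * (e + 1) * lam) ^ j)) := by
    rw [pow_succ]; ring
  have e2 : q ^ 3 * lam ^ (j + 1) * (2 * (e + 1) * k') *
        (2 * q * (16 * (e + 1) * lam) ^ j)
      = (q ^ 3 * lam ^ j) * (2 * k' * (e + 1) * lam * (2 * q * (16 * (e + 1) * lam) ^ j)) := by
    rw [pow_succ]; ring
  rw [e1, e2] at h2
  have := le_of_mul_le_mul_right h2 (by positivity)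
  linarith

/-- One iteration of the container construction: the number of vertices still available drops by a
factor `1 - δ`. -/
lemma iter_step {Pt Ln : Type} [Fintype Pt] [DecidableEq Pt] [Fintype Ln] [DecidableEq Ln]
    (pen : Pt → Finset Ln) {q e t X : ℕ} {lam δ C₀ M m : ℝ} (hq : 1 ≤ q)
    (hPt : Fintype.card Pt ≤ q ^ 3) (hdeg : ∀ v, #{P : Pt | v ∈ pen P} = q + 1)
    (hlin : ∀ v w, v ≠ w → ∀ P Q, v ∈ pen P → w ∈ pen P → v ∈ pen Q → w ∈ pen Q → P = Q)
    (hl0 : 0 < lam) (hl : lam ≤ 1 / 4)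
    (hD2 : ∀ j ≤ e, 2 ≤ 2 * q * (16 * (e + 1) * lam) ^ j)
    (ht : t ≤ q ^ 2) (hX : (X : ℝ) ≤ q ^ 3 * lam ^ e / 2)
    (hδ : δ = 1 / (128 * (16 * (e + 1)) ^ e)) (hC1 : 8 * (e + 1) ≤ C₀) (hC2 : 1 / δ ≤ C₀)
    (U S₀ : Finset Ln) (hU : C₀ * q ^ 2 < #U)
    (hshr : ∀ S, S₀ ⊆ S → ∀ U' ⊆ U, (#U' : ℝ) ≤ (1 - δ) * #U →
      Covers M (m + ((X : ℝ) - packNum pen (e + 1) S) / (q * lam ^ e / 32))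
        (Fam (packNum pen (e + 1)) t X U' S)) :
    Covers M (m + ((X : ℝ) - packNum pen (e + 1) S₀) / (q * lam ^ e / 32) + 1
      + e * (32 * q ^ 2 * lam + 1)) (Fam (packNum pen (e + 1)) t X U S₀) := by
  classical
  have hq' : (1 : ℝ) ≤ q := by exact_mod_cast hq
  have hq0 : (0 : ℝ) < q := by linarith
  have he0 : (0 : ℝ) ≤ e := Nat.cast_nonneg _
  have hδ0 : 0 < δ := by rw [hδ]; positivity
  set k' : ℕ := ⌊(#U : ℝ) / (4 * (e + 1) * q ^ 2)⌋₊ with hk'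
  have hx1 : 2 ≤ (#U : ℝ) / (4 * (e + 1) * q ^ 2) := by
    rw [le_div_iff₀ (by positivity)]
    nlinarith [mul_le_mul_of_nonneg_right hC1 (sq_nonneg (q : ℝ))]
  have hk1 : (k' : ℝ) ≤ (#U : ℝ) / (4 * (e + 1) * q ^ 2) := Nat.floor_le (by linarith)
  have hk2 : (#U : ℝ) / (4 * (e + 1) * q ^ 2) < k' + 1 := Nat.lt_floor_add_one _
  have hk0 : 0 < k' := Nat.floor_pos.2 (by linarith)
  have hk0' : (0 : ℝ) < k' := by exact_mod_cast hk0
  have hkU1 : (k' : ℝ) * (4 * (e + 1) * q ^ 2) ≤ #U := (le_div_iff₀ (by positivity)).1 hk1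
  have hkU2 : (#U : ℝ) ≤ k' * (8 * (e + 1) * q ^ 2) := by
    have h1 : (#U : ℝ) / (4 * (e + 1) * q ^ 2) ≤ 2 * k' := by linarith
    have := (div_le_iff₀ (by positivity)).1 h1
    linarith
  obtain ⟨𝓑, hB1, hB2, hB3⟩ := exists_blocks (fun P => pen P ∩ U) (2 * (e + 1) * k')
    (by positivity)
  have hBpen : ∀ B ∈ 𝓑, B.2 ⊆ pen B.1 := fun B hB => (hB1 B hB).1.trans inter_subset_left
  have hblin : ∀ v w, v ≠ w → ∀ B ∈ 𝓑, ∀ B' ∈ 𝓑, v ∈ B.2 → w ∈ B.2 → v ∈ B'.2 → w ∈ B'.2 →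
      B = B' := by
    intro v w hvw B hB B' hB' h1 h2 h3 h4
    by_contra hne
    have := hlin v w hvw B.1 B'.1 (hBpen B hB h1) (hBpen B hB h2) (hBpen B' hB' h3)
      (hBpen B' hB' h4)
    exact disjoint_left.1 (hB2 B hB B' hB' hne this) h1 h3
  have hbdeg : ∀ w, (#{B ∈ 𝓑 | w ∈ B.2} : ℝ) ≤ 2 * q := by
    intro w
    have h1 : #{B ∈ 𝓑 | w ∈ B.2} ≤ #{P : Pt | w ∈ pen P} := by
      apply card_le_card_of_injOn (fun B => B.1)
      · intro B hB
        simp only [coe_filter, Set.mem_ofPred_eq, mem_univ, true_and] at hB ⊢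
        exact hBpen B hB.1 hB.2
      · intro B hB B' hB' h
        simp only [coe_filter, Set.mem_ofPred_eq] at hB hB'
        by_contra hne
        exact disjoint_left.1 (hB2 B hB.1 B' hB'.1 hne h) hB.2 hB'.2
    rw [hdeg] at h1
    have : (#{B ∈ 𝓑 | w ∈ B.2} : ℝ) ≤ q + 1 := by exact_mod_cast h1
    linarith
  -- cutting the traces of the pencils on `U` yields at least `q ^ 3` blocks
  have hBcard : (q : ℝ) ^ 3 ≤ #𝓑 := by
    have h1 : ∑ P, #(pen P ∩ U) = #U * (q + 1) := by
      rw [sum_card_inter univ pen U, sum_congr rfl fun v _ => hdeg v, sum_const, smul_eq_mul]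
    set K : ℝ := 2 * (e + 1) * k' with hK
    have hKpos : 0 < K := by positivity
    have h2 : ∀ P, (#(pen P ∩ U) : ℝ) / K - 1 ≤ ((#(pen P ∩ U) / (2 * (e + 1) * k') : ℕ) : ℝ) := by
      intro P
      have h3 := Nat.lt_div_mul_add (a := #(pen P ∩ U)) (b := 2 * (e + 1) * k') (by positivity)
      have h4 : (#(pen P ∩ U) : ℝ) <
          ((#(pen P ∩ U) / (2 * (e + 1) * k') : ℕ) : ℝ) * K + K := by
        rw [hK]; exact_mod_cast h3
      rw [sub_le_iff_le_add, div_le_iff₀ hKpos]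
      linarith
    have h3 := sum_le_sum fun P (_ : P ∈ (univ : Finset Pt)) => h2 P
    rw [sum_sub_distrib, ← sum_div, sum_const, card_univ, nsmul_eq_mul, mul_one] at h3
    have h4 : (∑ P, (#(pen P ∩ U) : ℝ)) = #U * (q + 1) := by exact_mod_cast h1
    have h5 : (#𝓑 : ℝ) = ∑ P, ((#(pen P ∩ U) / (2 * (e + 1) * k') : ℕ) : ℝ) := by
      rw [hB3]; push_cast; rfl
    have h6 : (Fintype.card Pt : ℝ) ≤ q ^ 3 := by exact_mod_cast hPt
    have h7 : 2 * (q : ℝ) ^ 3 ≤ (#U : ℝ) * (q + 1) / K := by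
      rw [le_div_iff₀ hKpos, hK]
      nlinarith [mul_le_mul_of_nonneg_right hkU1 hq0.le, Nat.cast_nonneg (α := ℝ) #U]
    rw [h4] at h3
    rw [h5]
    linarith
  have key := all_rounds (V := Ln) (ι := Pt × Finset Ln) (wt := packNum pen (e + 1)) (t := t)
    (X := X) (U := U) (S₀ := S₀) (b := fun B => B.2) (𝓑 := 𝓑) (e := e) (k' := k')
    (κ := fun j => (2 * (e + 1) - j) * k') (M := M) (m := m) (δ := δ)
    (k := 2 * (e + 1) * k') (τ := 32 * q ^ 2 * lam)
    (D := fun j => 2 * q * (16 * (e + 1) * lam) ^ j) (Δ := fun j => q ^ 3 * lam ^ j)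
    (θ := fun j => q * lam ^ j / 32)
    (fun j => by positivity) (fun j => by positivity) (by positivity) (by positivity)
    (fun j => by positivity)
    (fun j hj => by have := hD2 (j + 1) hj; linarith)
    (fun B hB => (hB1 B hB).1.trans inter_subset_right)
    (fun B hB => by rw [(hB1 B hB).2]; push_cast; exact le_rfl)
    hblin (fun S T h => packNum_mono pen _ h)
    (fun S hS => packNum_add pen (Nat.succ_pos e) hS 𝓑 hBpen hB2)
    ?_ ?_ ?_ hX ?_ ?_ hshr e 0 (by omega) S₀ le_rfl 𝓑 le_rfl (fun B => B.2) ?_ ?_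
  · exact key
  · intro j hj
    have : 2 * (e + 1) - j = (2 * (e + 1) - (j + 1)) + 1 := by omega
    change (2 * (e + 1) - (j + 1)) * k' + k' ≤ (2 * (e + 1) - j) * k'
    rw [this, Nat.add_mul, one_mul]
  · intro j _
    have : 0 < (q : ℝ) ^ 3 * lam ^ j := by positivity
    change (q : ℝ) ^ 3 * lam ^ (j + 1) ≤ q ^ 3 * lam ^ j / 4
    rw [pow_succ lam j]
    nlinarith
  · intro j _
    apply le_of_eq
    rw [pow_succ lam j]
    field_simp
  · intro j hj x hx
    -- `κ ≥ (e + 1) * k' ≥ |U| / (8 q ^ 2)`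
    have hκ : ((e : ℝ) + 1) * k' ≤ (((2 * (e + 1) - j) * k' : ℕ) : ℝ) := by
      have : (e + 1) * k' ≤ (2 * (e + 1) - j) * k' := Nat.mul_le_mul_right _ (by omega)
      exact_mod_cast this
    exact num_good hq0 hl0 hj hδ hC2 (Nat.cast_nonneg _) hU (by exact_mod_cast ht) hκ hkU2 hx
  · exact fun j hj x hx => num_dead hq0 hl0 hk0' (hD2 (j + 1) hj) hx
  · refine ⟨fun _ _ => le_rfl, fun B hB => ?_, fun _ _ => Nat.zero_le _, fun w => ?_⟩
    · rw [(hB1 B hB).2]; simp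
    · have := hbdeg w
      simpa using this
  · simpa using hBcard

/-- The container theorem: sets of size at most `t` and packing number at most `X` have few
containers of size `O(q ^ 2)`. -/
lemma containers {Pt Ln : Type} [Fintype Pt] [DecidableEq Pt] [Fintype Ln] [DecidableEq Ln]
    (pen : Pt → Finset Ln) {q e t X : ℕ} {lam δ C₀ : ℝ} (hq : 1 ≤ q)
    (hPt : Fintype.card Pt ≤ q ^ 3) (hdeg : ∀ v, #{P : Pt | v ∈ pen P} = q + 1)
    (hlin : ∀ v w, v ≠ w → ∀ P Q, v ∈ pen P → w ∈ pen P → v ∈ pen Q → w ∈ pen Q → P = Q)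
    (hl0 : 0 < lam) (hl : lam ≤ 1 / 4)
    (hD2 : ∀ j ≤ e, 2 ≤ 2 * q * (16 * (e + 1) * lam) ^ j)
    (ht : t ≤ q ^ 2) (hX : (X : ℝ) ≤ q ^ 3 * lam ^ e / 2)
    (hδ : δ = 1 / (128 * (16 * (e + 1)) ^ e)) (hC1 : 8 * (e + 1) ≤ C₀) (hC2 : 1 / δ ≤ C₀) :
    ∀ (L : ℕ) (U S : Finset Ln), (1 - δ) ^ L * #U ≤ C₀ * q ^ 2 →
      Covers (C₀ * q ^ 2 + t) (L * (1 + e * (32 * q ^ 2 * lam + 1))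
        + ((X : ℝ) - packNum pen (e + 1) S) / (q * lam ^ e / 32))
        (Fam (packNum pen (e + 1)) t X U S) := by
  have hq0 : (0 : ℝ) < q := by exact_mod_cast hq
  have hδ1 : δ ≤ 1 := by
    rw [hδ, div_le_one (by positivity)]
    have : (1 : ℝ) ≤ (16 * (e + 1)) ^ e := one_le_pow₀ (by
      have : (0 : ℝ) ≤ e := Nat.cast_nonneg _
      linarith)
    linarith
  have term : ∀ (L : ℕ) (U S : Finset Ln), (#U : ℝ) ≤ C₀ * q ^ 2 →
      Covers (C₀ * q ^ 2 + t) (L * (1 + e * (32 * q ^ 2 * lam + 1))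
        + ((X : ℝ) - packNum pen (e + 1) S) / (q * lam ^ e / 32))
        (Fam (packNum pen (e + 1)) t X U S) := by
    intro L U S hU
    by_cases hemp : ∀ T, ¬ Fam (packNum pen (e + 1)) t X U S T
    · exact Covers.of_empty hemp
    push Not at hemp
    obtain ⟨T₀, h1, h2, h3, -⟩ := hemp
    refine Covers.of_single (U ∪ S) ?_ ?_ fun T hT => hT.2.2.2
    · have h4 : (#(U ∪ S) : ℝ) ≤ #U + #S := by exact_mod_cast card_union_le _ _
      have h5 : (#S : ℝ) ≤ t := by exact_mod_cast (card_le_card h3).trans h1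
      linarith
    · have h4 : (packNum pen (e + 1) S : ℝ) ≤ X := by
        exact_mod_cast (packNum_mono pen _ h3).trans h2
      have : 0 ≤ ((X : ℝ) - packNum pen (e + 1) S) / (q * lam ^ e / 32) :=
        div_nonneg (by linarith) (by positivity)
      positivity
  intro L
  induction L with
  | zero =>
    intro U S hU
    rw [pow_zero, one_mul] at hU
    exact term 0 U S hU
  | succ L ih =>
    intro U S hU
    by_cases hU' : (#U : ℝ) ≤ C₀ * q ^ 2
    · exact term _ U S hU'
    have := iter_step pen (M := C₀ * q ^ 2 + t) (m := L * (1 + e * (32 * q ^ 2 * lam + 1))) hq hPt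
      hdeg hlin hl0 hl hD2 ht hX hδ hC1 hC2 U S (not_le.1 hU') (fun S' _ U' _ hU' => ih U' S' (by
        refine le_trans (mul_le_mul_of_nonneg_left hU' (pow_nonneg (by linarith) _)) ?_
        rw [← mul_assoc, ← pow_succ]
        exact hU))
    refine this.mono (le_of_eq ?_) fun T hT => hT
    push_cast
    ring

/-! ### The random sample -/

/-- A union bound over maps `g : Fin n → V`: if there are few small containers, some `g` maps no
`t`-set of indices into a container. -/
lemma exists_avoiding_s6 {V : Type} [Fintype V] {n t : ℕ} (ht : 0 < t) (𝒞 : Finset (Finset V))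
    {M c : ℝ} (hM0 : 0 ≤ M) (hc : (#𝒞 : ℝ) ≤ c) (hM : ∀ C ∈ 𝒞, (#C : ℝ) ≤ M)
    (h : (n.choose t : ℝ) * c * M ^ t < (Fintype.card V : ℝ) ^ t) :
    ∃ g : Fin n → V, ∀ I : Finset (Fin n), #I = t → ∀ C ∈ 𝒞, ∃ i ∈ I, g i ∉ C := by
  classical
  have hc0 : 0 ≤ c := le_trans (Nat.cast_nonneg _) hc
  have hN : (0 : ℝ) < Fintype.card V := by
    by_contra hN
    have : (Fintype.card V : ℝ) = 0 := le_antisymm (not_lt.1 hN) (Nat.cast_nonneg _)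
    rw [this, zero_pow ht.ne'] at h
    have : 0 ≤ (n.choose t : ℝ) * c * M ^ t := by positivity
    linarith
  by_cases htn : n < t
  · have : Nonempty V := Fintype.card_pos_iff.1 (by exact_mod_cast hN)
    refine ⟨fun _ => this.some, fun I hI => ?_⟩
    have := card_le_univ I
    rw [Fintype.card_fin] at this
    omega
  have htn := not_lt.1 htn
  by_contra! hcon
  have hcov : (univ : Finset (Fin n → V)) ⊆ (powersetCard t univ ×ˢ 𝒞).biUnion fun x =>
      {g | ∀ i ∈ x.1, g i ∈ x.2} := by
    intro g _
    obtain ⟨I, hI, C, hC, hg⟩ := hcon g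
    exact mem_biUnion.2 ⟨(I, C), mem_product.2 ⟨mem_powersetCard.2 ⟨subset_univ _, hI⟩, hC⟩,
      mem_filter.2 ⟨mem_univ _, hg⟩⟩
  have hcount : ∀ x ∈ (powersetCard t (univ : Finset (Fin n)) ×ˢ 𝒞),
      (#{g : Fin n → V | ∀ i ∈ x.1, g i ∈ x.2} : ℝ) ≤ M ^ t * (Fintype.card V : ℝ) ^ (n - t) := by
    rintro ⟨I, C⟩ hx
    obtain ⟨hI, hC⟩ := mem_product.1 hx
    have hI : #I = t := (mem_powersetCard.1 hI).2
    have e1 : ({g : Fin n → V | ∀ i ∈ I, g i ∈ C} : Finset _)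
        = Fintype.piFinset fun i => if i ∈ I then C else univ := by
      ext g
      simp only [mem_filter, mem_univ, true_and, Fintype.mem_piFinset]
      refine forall_congr' fun i => ?_
      split_ifs with hi <;> simp [hi]
    have e2 : #({g : Fin n → V | ∀ i ∈ I, g i ∈ C} : Finset _)
        = #C ^ t * Fintype.card V ^ (n - t) := by
      rw [e1, Fintype.card_piFinset]
      have : ∀ i, #(if i ∈ I then C else univ) = if i ∈ I then #C else Fintype.card V := by
        intro i; split_ifs <;> simp
      simp only [this]
      rw [prod_ite, prod_const, prod_const]
      have h1 : #{i | i ∈ I} = t := by rw [filter_univ_mem, hI]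
      have h2 : #{i | i ∉ I} = n - t := by
        have h3 := card_filter_add_card_filter_not (s := (univ : Finset (Fin n))) (fun i => i ∈ I)
        rw [card_univ, Fintype.card_fin] at h3
        omega
      rw [h1, h2]
    change (#({g : Fin n → V | ∀ i ∈ I, g i ∈ C} : Finset _) : ℝ) ≤ _
    rw [e2]
    push_cast
    exact mul_le_mul_of_nonneg_right (pow_le_pow_left₀ (Nat.cast_nonneg _) (hM C hC) _)
      (by positivity)
  have h1 : (#(univ : Finset (Fin n → V)) : ℝ) ≤
      ∑ x ∈ (powersetCard t (univ : Finset (Fin n)) ×ˢ 𝒞),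
        (#{g : Fin n → V | ∀ i ∈ x.1, g i ∈ x.2} : ℝ) := by
    exact_mod_cast (card_le_card hcov).trans card_biUnion_le
  have h2 := h1.trans (sum_le_card_nsmul _ _ _ hcount)
  rw [card_product, card_powersetCard, card_univ, card_univ, Fintype.card_fun, Fintype.card_fin,
    nsmul_eq_mul] at h2
  push_cast at h2
  have h3 : (Fintype.card V : ℝ) ^ n = (Fintype.card V : ℝ) ^ t * (Fintype.card V : ℝ) ^ (n - t) := by
    rw [← pow_add, Nat.add_sub_cancel' htn]
  rw [h3] at h2
  have h4 : 0 < (Fintype.card V : ℝ) ^ (n - t) := by positivity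
  have h5 : (n.choose t : ℝ) * #𝒞 * M ^ t ≤ n.choose t * c * M ^ t := by gcongr
  have h6 := mul_lt_mul_of_pos_right (h5.trans_lt h) h4
  nlinarith

/-- The construction: `n` random vertices of a well-coloured pencil graph. A `t`-set of them that is
not rich would have packing number below `X`, hence lie in a container. -/
lemma minFIndep_le_of_pencils {Pt Ln : Type} [Fintype Pt] [Fintype Ln] [DecidableEq Ln]
    {r n t X e : ℕ} (hr : 2 ≤ r) (sz : Fin r → ℕ) (hs : ∑ i, sz i = e + 1) (ht : 0 < t)
    (pen : Pt → Finset Ln)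
    (hlin : ∀ v w, v ≠ w → ∀ P Q, v ∈ pen P → w ∈ pen P → v ∈ pen Q → w ∈ pen Q → P = Q)
    (hon : ∀ ℓ₁ ℓ₂ ℓ₃ ℓ₄ : Ln, ∀ A B C D E F : Pt, ℓ₂ ≠ ℓ₃ →
        ℓ₁ ∈ pen A → ℓ₂ ∈ pen A → ℓ₁ ∈ pen B → ℓ₃ ∈ pen B → ℓ₂ ∈ pen C → ℓ₃ ∈ pen C →
        ℓ₁ ∈ pen D → ℓ₄ ∈ pen D → ℓ₂ ∈ pen E → ℓ₄ ∈ pen E → ℓ₃ ∈ pen F → ℓ₄ ∈ pen F →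
        ℓ₁ ∈ pen C ∨ ℓ₄ ∈ pen A ∨ ℓ₄ ∈ pen B ∨ ℓ₄ ∈ pen C)
    (hX : (Fintype.card Ln) ^ t * (r ^ (e + 1) - 1) ^ X < (r ^ (e + 1)) ^ X)
    {M m : ℝ} (hM0 : 0 ≤ M) (hcov : Covers M m (Fam (packNum pen (e + 1)) t X univ ∅))
    (hn : (n.choose t : ℝ) * ((Fintype.card Ln : ℝ) + 1) ^ m * M ^ t
      < (Fintype.card Ln : ℝ) ^ t) :
    minFIndep (SimpleGraph.completeMultipartiteGraph fun i => Fin (sz i))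
      (⊤ : SimpleGraph (Fin (r + 2))) n ≤ t := by
  classical
  obtain ⟨χ, hχ⟩ := exists_colouring (by omega) pen sz (by omega) t X (by rw [hs]; exact hX)
  rw [hs] at hχ
  obtain ⟨𝒞, hc, hM, hcov⟩ := hcov
  obtain ⟨g, hg⟩ := exists_avoiding_s6 ht 𝒞 hM0 hc hM hn
  refine minFIndep_le_of_forall _ _ n t ((penGraph pen χ).comap g) ?_ ?_
  · rintro ⟨f, -, hf⟩
    exact penGraph_no_clique hr pen χ hlin hon (fun a => g (f a)) fun a b hab => hf hab
  · intro I hI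
    apply Rich.containsCopy
    by_contra hrich
    have hTt : #(I.image g) ≤ t := card_image_le.trans hI.le
    have hne : (I.image g).Nonempty := (card_pos.1 (by omega)).image g
    have hp := hχ _ hne hTt hrich
    obtain ⟨C, hC, hTC⟩ := hcov (I.image g) ⟨hTt, hp.le, empty_subset _, by simp⟩
    obtain ⟨i, hi, hiC⟩ := hg I hI C hC
    exact hiC (hTC (mem_image_of_mem g hi))

/-- The binomial estimate `n.choose t ≤ (e * n / t) ^ t`, with `e ^ t` kept as an exponential. -/
lemma choose_mul_pow_le (n t : ℕ) : (n.choose t : ℝ) * (t : ℝ) ^ t ≤ Real.exp t * (n : ℝ) ^ t := by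
  have h1 : (n.choose t : ℝ) ≤ (n : ℝ) ^ t / t.factorial := Nat.choose_le_pow_div t n
  have h2 : (t : ℝ) ^ t / t.factorial ≤ Real.exp t :=
    Real.pow_div_factorial_le_exp t (Nat.cast_nonneg _) t
  have h3 : (0 : ℝ) < t.factorial := by exact_mod_cast Nat.factorial_pos t
  calc (n.choose t : ℝ) * (t : ℝ) ^ t ≤ (n : ℝ) ^ t / t.factorial * (t : ℝ) ^ t := by gcongr
    _ = (t : ℝ) ^ t / t.factorial * (n : ℝ) ^ t := by ring
    _ ≤ _ := by gcongr

/-- The union bound in `exists_colouring` succeeds, with `R = r ^ s`, as soon as `X` exceeds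
`R * t * log N`. -/
lemma colouring_numerics {N t R X : ℕ} (hR : 1 ≤ R) (hN : 0 < N)
    (h : R * (t * Real.log N) < X) : N ^ t * (R - 1) ^ X < R ^ X := by
  have hR0 : (0 : ℝ) < R := by exact_mod_cast hR
  have hN0 : (0 : ℝ) < N := by exact_mod_cast hN
  have h1 : 1 - 1 / (R : ℝ) ≤ Real.exp (-(1 / R)) := by
    have := Real.add_one_le_exp (-(1 / (R : ℝ)))
    linarith
  have h0 : 0 ≤ 1 - 1 / (R : ℝ) := by
    rw [sub_nonneg, div_le_one hR0]; exact_mod_cast hR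
  have h2 : (1 - 1 / (R : ℝ)) ^ X ≤ Real.exp (-(X / R)) := by
    refine (pow_le_pow_left₀ h0 h1 X).trans (le_of_eq ?_)
    rw [← Real.exp_nat_mul]; congr 1; ring
  have h3 : (N : ℝ) ^ t = Real.exp (t * Real.log N) := by
    rw [Real.exp_nat_mul, Real.exp_log hN0]
  have h4 : t * Real.log N < X / R := by
    rw [lt_div_iff₀ hR0]; linarith
  have h5 : (N : ℝ) ^ t * (1 - 1 / (R : ℝ)) ^ X < 1 := by
    calc (N : ℝ) ^ t * (1 - 1 / (R : ℝ)) ^ X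
        ≤ Real.exp (t * Real.log N) * Real.exp (-(X / R)) := by rw [h3]; gcongr
      _ = Real.exp (t * Real.log N - X / R) := by rw [← Real.exp_add]; rfl
      _ < 1 := by rw [Real.exp_lt_one_iff]; linarith
  have h6 : ((R - 1 : ℕ) : ℝ) = R * (1 - 1 / R) := by
    rw [Nat.cast_sub hR, mul_sub, mul_one_div_cancel hR0.ne']; simp
  have h7 : (N : ℝ) ^ t * ((R - 1 : ℕ) : ℝ) ^ X < (R : ℝ) ^ X := by
    rw [h6, mul_pow]
    have : 0 < (R : ℝ) ^ X := by positivity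
    nlinarith
  exact_mod_cast h7

set_option maxHeartbeats 2000000 in
/-- The bound obtained from the unital over a given prime `q`, for all parameters in the admissible
range. -/
lemma minFIndep_le_of_prime {r e : ℕ} (hr : 2 ≤ r) (he : 1 ≤ e) (sz : Fin r → ℕ)
    (hs : ∑ i, sz i = e + 1) : ∃ K₂ K₃ c : ℝ, 1 ≤ K₂ ∧ 2 ≤ K₃ ∧ 0 < c ∧
      ∀ (q n : ℕ) (L lam : ℝ), q.Prime → 1 ≤ L → Real.log q ≤ L → 0 < lam →
        q * lam ^ e = K₂ * L ^ 2 → lam ≤ 1 / 4 → K₃ * lam * L ^ 2 ≤ 1 / 2 →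
        (n : ℝ) ≤ c * q ^ 2 * (K₃ * q ^ 2 * lam * L ^ 2) →
        minFIndep (SimpleGraph.completeMultipartiteGraph fun i => Fin (sz i))
          (⊤ : SimpleGraph (Fin (r + 2))) n ≤ ⌈K₃ * q ^ 2 * lam * L ^ 2⌉₊ := by
  set R : ℕ := r ^ (e + 1) with hR
  have hR1 : 1 ≤ R := Nat.one_le_pow _ _ (by omega)
  have hR1' : (1 : ℝ) ≤ R := by exact_mod_cast hR1
  have he1 : (1 : ℝ) ≤ e := by exact_mod_cast he
  set δ : ℝ := 1 / (128 * (16 * (e + 1)) ^ e) with hδ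
  have hδ0 : 0 < δ := by positivity
  have hδ1 : δ ≤ 1 := by
    rw [hδ, div_le_one (by positivity)]
    have : (1 : ℝ) ≤ (16 * (e + 1)) ^ e := one_le_pow₀ (by linarith)
    linarith
  set C₀ : ℝ := 8 * (e + 1) + 1 / δ with hC₀
  have hinv : 0 < 1 / δ := by positivity
  have hC0pos : 1 ≤ C₀ := by linarith
  have hK3 : 4800 ≤ 4800 * e / δ := by
    rw [le_div_iff₀ hδ0]; nlinarith
  refine ⟨1600 * R, 4800 * e / δ, 1 / (32 * (C₀ + 1)), by linarith, by linarith, by positivity, ?_⟩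
  intro q n L lam hq hL hlogq hl0 hlam hl4 hsmall hn
  set K₃ : ℝ := 4800 * e / δ with hK₃
  set y : ℝ := K₃ * q ^ 2 * lam * L ^ 2 with hy
  set t : ℕ := ⌈y⌉₊ with htdef
  have hq2 : (2 : ℝ) ≤ q := by exact_mod_cast hq.two_le
  have hq0 : (0 : ℝ) < q := by linarith
  have hL0 : 0 < L := by linarith
  have hL2 : 1 ≤ L ^ 2 := one_le_pow₀ hL
  have hy0 : 0 < y := by positivity
  have hty : y ≤ t := Nat.le_ceil _
  have ht0 : 0 < t := Nat.ceil_pos.2 hy0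
  have ht0' : (0 : ℝ) < t := by exact_mod_cast ht0
  have ht1 : (1 : ℝ) ≤ t := by exact_mod_cast ht0
  have htq : (t : ℝ) ≤ q ^ 2 := by
    have h1 : (t : ℝ) < y + 1 := Nat.ceil_lt_add_one hy0.le
    have h2 : y ≤ q ^ 2 / 2 := by
      have := mul_le_mul_of_nonneg_left hsmall (sq_nonneg (q : ℝ))
      rw [hy]; linarith
    nlinarith
  obtain ⟨Pt, Ln, _, _, _, pen, hPt, hLn, hLn', hdeg, hlin, hon⟩ := unital_exists q hq
  have := Classical.decEq Pt
  have hNq : (q : ℝ) ^ 4 / 2 ≤ Fintype.card Ln := by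
    have h1 : (q : ℝ) ^ 4 ≤ Fintype.card Ln + q ^ 3 := by exact_mod_cast hLn'
    have h2 : 2 * (q : ℝ) ^ 3 ≤ q ^ 4 := by
      have := mul_le_mul_of_nonneg_right hq2 (by positivity : 0 ≤ (q : ℝ) ^ 3)
      linarith
    linarith
  have hN0' : (0 : ℝ) < Fintype.card Ln := lt_of_lt_of_le (by positivity) hNq
  have hN0 : 0 < Fintype.card Ln := by exact_mod_cast hN0'
  have hNle : (Fintype.card Ln : ℝ) ≤ q ^ 4 := by exact_mod_cast hLn
  have hlogN : Real.log (Fintype.card Ln) ≤ 4 * L := by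
    have h1 := Real.log_le_log hN0' hNle
    rw [Real.log_pow] at h1
    push_cast at h1
    linarith
  have hlogN1 : Real.log ((Fintype.card Ln : ℝ) + 1) ≤ 5 * L := by
    have h1 : (Fintype.card Ln : ℝ) + 1 ≤ q ^ 5 := by
      have h3 : 1 ≤ (q : ℝ) ^ 4 := one_le_pow₀ (by linarith)
      have := mul_le_mul_of_nonneg_right hq2 (by positivity : 0 ≤ (q : ℝ) ^ 4)
      linarith
    have h2 := Real.log_le_log (by linarith) h1
    rw [Real.log_pow] at h2
    push_cast at h2
    linarith
  set X : ℕ := ⌊4 * R * t * L⌋₊ + 1 with hX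
  have hX1 : 4 * R * t * L < X := by
    rw [hX]; push_cast; exact Nat.lt_floor_add_one _
  have hX2 : (X : ℝ) ≤ 5 * R * t * L := by
    have h1 : (⌊4 * R * t * L⌋₊ : ℝ) ≤ 4 * R * t * L := Nat.floor_le (by positivity)
    have h2 : 1 ≤ R * t * L := one_le_mul_of_one_le_of_one_le
      (one_le_mul_of_one_le_of_one_le hR1' ht1) hL
    rw [hX]; push_cast
    linarith
  -- enough iterations to shrink the whole vertex set
  set J : ℕ := ⌈4 * L / δ⌉₊ with hJ
  have hJ1 : 4 * L / δ ≤ J := Nat.le_ceil _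
  have hJ2 : (J : ℝ) ≤ 5 * L / δ := by
    have h1 : (J : ℝ) < 4 * L / δ + 1 := Nat.ceil_lt_add_one (by positivity)
    have h2 : 1 ≤ L / δ := by rw [le_div_iff₀ hδ0]; linarith
    have h3 : 5 * L / δ = 4 * L / δ + L / δ := by ring
    linarith
  have hJ3 : (1 - δ) ^ J * #(univ : Finset Ln) ≤ C₀ * q ^ 2 := by
    have h1 : (1 - δ) ^ J ≤ Real.exp (-(4 * L)) := by
      have h2 : 1 - δ ≤ Real.exp (-δ) := by have := Real.add_one_le_exp (-δ); linarith
      refine (pow_le_pow_left₀ (by linarith) h2 J).trans ?_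
      rw [← Real.exp_nat_mul, Real.exp_le_exp]
      have := (div_le_iff₀ hδ0).1 hJ1
      linarith
    have h2 : (Fintype.card Ln : ℝ) ≤ Real.exp (4 * L) := by
      rw [← Real.log_le_iff_le_exp hN0']; exact hlogN
    rw [card_univ]
    have h3 : (1 - δ) ^ J * (Fintype.card Ln : ℝ) ≤ Real.exp (-(4 * L)) * Real.exp (4 * L) :=
      mul_le_mul h1 h2 hN0'.le (Real.exp_pos _).le
    rw [← Real.exp_add, neg_add_cancel, Real.exp_zero] at h3
    have h4 : 1 ≤ C₀ * (q : ℝ) ^ 2 :=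
      one_le_mul_of_one_le_of_one_le hC0pos (one_le_pow₀ (by linarith))
    linarith
  have hlamle : lam ≤ 1 := by linarith
  have hqlam : ∀ j ≤ e, 1 ≤ q * lam ^ j := by
    intro j hj
    have h1 : q * lam ^ e ≤ q * lam ^ j :=
      mul_le_mul_of_nonneg_left (pow_le_pow_of_le_one hl0.le hlamle hj) hq0.le
    have h2 : 1 ≤ 1600 * R * L ^ 2 := one_le_mul_of_one_le_of_one_le (by linarith) hL2
    linarith
  have hcont := containers pen (q := q) (e := e) (t := t) (X := X) (lam := lam) (δ := δ) (C₀ := C₀)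
    hq.pos hPt hdeg hlin hl0 hl4 (fun j hj => by
      have h1 := hqlam j hj
      have h2 : (1 : ℝ) ≤ (16 * (e + 1)) ^ j := one_le_pow₀ (by linarith)
      have h3 := one_le_mul_of_one_le_of_one_le h1 h2
      rw [mul_pow]
      linarith) (by exact_mod_cast htq) (by
      have h1 : (q : ℝ) ^ 3 * lam ^ e / 2 = q ^ 2 * (q * lam ^ e) / 2 := by ring
      rw [h1, hlam]
      have h2 : 5 * R * t * L ≤ 5 * R * q ^ 2 * L ^ 2 := by
        have h3 : L ≤ L ^ 2 := by nlinarith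
        gcongr
      have h4 : 0 ≤ (R : ℝ) * q ^ 2 * L ^ 2 := by positivity
      linarith) hδ (by linarith) (by linarith) J univ ∅ hJ3
  have hp0 : (packNum pen (e + 1) ∅ : ℝ) = 0 := by simp [packNum]
  rw [hp0, sub_zero] at hcont
  set m : ℝ := J * (1 + e * (32 * q ^ 2 * lam + 1)) + X / (q * lam ^ e / 32) with hm
  have hm0 : 0 ≤ m := by positivity
  have hmL : 5 * L * m ≤ t := by
    have h1 : J * (1 + e * (32 * q ^ 2 * lam + 1)) ≤ 5 * L / δ * (96 * e * (q ^ 2 * lam)) := by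
      have h2 : 1 ≤ (q : ℝ) ^ 2 * lam := by
        have h3 := hqlam 1 he
        rw [pow_one] at h3
        have := mul_le_mul_of_nonneg_left h3 hq0.le
        linarith
      have h3 : (1 : ℝ) ≤ e * (q ^ 2 * lam) := one_le_mul_of_one_le_of_one_le he1 h2
      have h4 : (e : ℝ) ≤ e * (q ^ 2 * lam) := le_mul_of_one_le_right (by linarith) h2
      refine mul_le_mul hJ2 (by linarith) (by positivity) (by positivity)
    have h2 : X / (q * lam ^ e / 32) ≤ R * t * 160 / (1600 * R * L) := by
      rw [hlam, div_le_div_iff₀ (by positivity) (by positivity)]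
      have := mul_le_mul_of_nonneg_right hX2 (by positivity : 0 ≤ 1600 * (R : ℝ) * L)
      nlinarith
    have h3 : 5 * L * (5 * L / δ * (96 * e * (q ^ 2 * lam))) = y / 2 := by
      rw [hy, hK₃]; ring
    have h4 : 5 * L * (R * t * 160 / (1600 * R * L)) = t / 2 := by
      have : (R : ℝ) ≠ 0 := by positivity
      field_simp; norm_num
    have h5 := mul_le_mul_of_nonneg_left (add_le_add h1 h2) (by positivity : 0 ≤ 5 * L)
    rw [mul_add _ (5 * L / δ * _), h3, h4] at h5
    rw [hm]
    linarith
  have hrpow : ((Fintype.card Ln : ℝ) + 1) ^ m ≤ Real.exp t := by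
    rw [Real.rpow_def_of_pos (by linarith), Real.exp_le_exp]
    exact (mul_le_mul_of_nonneg_right hlogN1 hm0).trans hmL
  refine minFIndep_le_of_pencils (t := t) (X := X) (e := e) (M := C₀ * q ^ 2 + t) (m := m) hr sz hs
    ht0 pen hlin hon ?_ (by positivity) hcont ?_
  · apply colouring_numerics hR1 hN0
    refine lt_of_le_of_lt ?_ hX1
    have := mul_le_mul_of_nonneg_left hlogN (by positivity : 0 ≤ (R : ℝ) * t)
    linarith
  · have hM : C₀ * q ^ 2 + t ≤ (C₀ + 1) * q ^ 2 := by linarith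
    have h1 : (n.choose t : ℝ) * ((Fintype.card Ln : ℝ) + 1) ^ m * (C₀ * q ^ 2 + t) ^ t
        ≤ n.choose t * Real.exp t * ((C₀ + 1) * q ^ 2) ^ t := by gcongr
    refine lt_of_le_of_lt h1 ?_
    have h2 : 0 < (t : ℝ) ^ t := by positivity
    rw [← mul_lt_mul_iff_left₀ h2]
    have hexp : Real.exp t = Real.exp 1 ^ t := by rw [← Real.exp_nat_mul, mul_one]
    have h3 : n.choose t * Real.exp t * ((C₀ + 1) * q ^ 2) ^ t * (t : ℝ) ^ t
        ≤ (Real.exp 1 * Real.exp 1 * n * ((C₀ + 1) * q ^ 2)) ^ t := by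
      have h4 := mul_le_mul_of_nonneg_right (choose_mul_pow_le n t)
        (by positivity : 0 ≤ Real.exp t * ((C₀ + 1) * (q : ℝ) ^ 2) ^ t)
      rw [mul_pow (_ * _ * _), mul_pow (Real.exp 1 * Real.exp 1), mul_pow (Real.exp 1), ← hexp]
      linarith
    refine lt_of_le_of_lt h3 ?_
    rw [← mul_pow]
    refine pow_lt_pow_left₀ ?_ (by positivity) ht0.ne'
    have he2 : Real.exp 1 * Real.exp 1 < 8 := by
      have := Real.exp_one_lt_d9
      have h0 := Real.exp_pos 1
      nlinarith
    have h5 : n * (32 * (C₀ + 1)) ≤ q ^ 2 * t := by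
      have h6 : (n : ℝ) ≤ q ^ 2 * t / (32 * (C₀ + 1)) := by
        refine hn.trans ?_
        have h7 := mul_le_mul_of_nonneg_left hty
          (by positivity : 0 ≤ 1 / (32 * (C₀ + 1)) * (q : ℝ) ^ 2)
        refine h7.trans (le_of_eq ?_)
        ring
      exact (le_div_iff₀ (by positivity)).1 h6
    have h8 : Real.exp 1 * Real.exp 1 * n * ((C₀ + 1) * q ^ 2)
        ≤ 8 * n * ((C₀ + 1) * q ^ 2) := by gcongr
    have h9 : 8 * n * ((C₀ + 1) * q ^ 2) ≤ q ^ 2 * (q ^ 2 * t) / 4 := by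
      have := mul_le_mul_of_nonneg_left h5 (by positivity : 0 ≤ (q : ℝ) ^ 2 / 4)
      linarith
    have h10 := mul_le_mul_of_nonneg_right hNq ht0'.le
    have h11 : 0 < (q : ℝ) ^ 4 * t := by positivity
    linarith

/-! ### Choice of the parameters -/

set_option maxHeartbeats 1000000 in
/-- The optimal choice of `q` and `lam`, with `L = log n` and `ε = 1 / e`: the prime `q` has order
`n ^ (1 / (4 - ε)) * L ^ (-ε)`, and `lam = (K₂ * L ^ 2 / q) ^ ε`. The exponent of `L` in the last
bound comes out as `2 + ε ^ 2 ≤ 3`. -/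
lemma exists_parameters {e : ℕ} (he : 1 ≤ e) {K₂ K₃ c : ℝ} (hK₂ : 1 ≤ K₂) (hK₃ : 2 ≤ K₃)
    (hc : 0 < c) : ∃ (C : ℝ) (N : ℕ), 0 < C ∧ ∀ n : ℕ, n > N → ∃ (q : ℕ) (lam : ℝ),
      q.Prime ∧ 1 ≤ Real.log n ∧ Real.log q ≤ Real.log n ∧ 0 < lam ∧
      q * lam ^ e = K₂ * Real.log n ^ 2 ∧ lam ≤ 1 / 4 ∧ K₃ * lam * Real.log n ^ 2 ≤ 1 / 2 ∧
      (n : ℝ) ≤ c * q ^ 2 * (K₃ * q ^ 2 * lam * Real.log n ^ 2) ∧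
      (⌈K₃ * q ^ 2 * lam * Real.log n ^ 2⌉₊ : ℝ) ≤
        C * (n : ℝ) ^ ((2 * e - 1 : ℝ) / (4 * e - 1)) * Real.log n ^ 3 := by
  have he1 : (1 : ℝ) ≤ e := by exact_mod_cast he
  have he0 : (0 : ℝ) < e := by linarith
  set ε : ℝ := (e : ℝ)⁻¹ with hε
  have hε0 : 0 < ε := by positivity
  have hε1 : ε ≤ 1 := inv_le_one_of_one_le₀ he1
  have heε : (e : ℝ) * ε = 1 := mul_inv_cancel₀ he0.ne'
  set a : ℝ := 1 / (4 - ε) with ha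
  have ha0 : 0 < a := by rw [ha]; apply one_div_pos.2; linarith
  have ha4 : a * (4 - ε) = 1 := one_div_mul_cancel (by linarith)
  have ha1 : a ≤ 1 / 2 := by nlinarith
  have hb : (2 * e - 1 : ℝ) / (4 * e - 1) = a * (2 - ε) := by
    rw [div_eq_iff (by linarith)]
    have h1 : (4 * e - 1 : ℝ) = e * (4 - ε) := by rw [mul_sub, heε]; ring
    have h2 : (2 * e - 1 : ℝ) = e * (2 - ε) := by rw [mul_sub, heε]; ring
    rw [h1, h2]
    linear_combination (-(e : ℝ) * (2 - ε)) * ha4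
  set M : ℝ := K₂ * (2 * K₃) ^ e with hM
  have hM4 : 4 ≤ M := by
    have h1 : 2 * K₃ ≤ (2 * K₃) ^ e := le_self_pow₀ (by linarith) (by omega)
    nlinarith
  -- powers of the logarithm are negligible against powers of `n`
  have hev : ∀ᶠ n : ℕ in Filter.atTop, 1 ≤ Real.log n ∧ 1 ≤ c * K₃ * Real.log n ∧
      M * Real.log n ^ (3 + 2 * e) ≤ (n : ℝ) ^ a := by
    have hlog : Filter.Tendsto (fun n : ℕ => Real.log n) Filter.atTop Filter.atTop :=
      Real.tendsto_log_atTop.comp tendsto_natCast_atTop_atTop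
    have hpow : ∀ᶠ n : ℕ in Filter.atTop,
        ‖Real.log n ^ ((3 + 2 * e : ℕ) : ℝ)‖ ≤ M⁻¹ * ‖(n : ℝ) ^ a‖ :=
      tendsto_natCast_atTop_atTop.eventually
        ((isLittleO_log_rpow_rpow_atTop ((3 + 2 * e : ℕ) : ℝ) ha0).bound (by positivity))
    filter_upwards [hlog.eventually_ge_atTop 1, hlog.eventually_ge_atTop (1 / (c * K₃)), hpow]
      with n h1 h2 h3
    refine ⟨h1, ?_, ?_⟩
    · rw [div_le_iff₀ (by positivity)] at h2
      linarith
    · rw [Real.rpow_natCast, Real.norm_of_nonneg (by positivity),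
        Real.norm_of_nonneg (by positivity), ← div_eq_inv_mul, le_div_iff₀ (by positivity)] at h3
      linarith
  obtain ⟨N, hN⟩ := Filter.eventually_atTop.1 hev
  refine ⟨32 * K₃ * K₂, N, by positivity, fun n hn => ?_⟩
  obtain ⟨hL, hcL, hML⟩ := hN n hn.le
  set L : ℝ := Real.log n with hLdef
  have hL0 : 0 < L := by linarith
  have hn1 : (1 : ℝ) ≤ n := by
    rcases Nat.eq_zero_or_pos n with h | h
    · exfalso; rw [hLdef, h] at hL0; simp at hL0
    · exact_mod_cast h
  have hn0 : (0 : ℝ) < n := by linarith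
  have hna : 4 ≤ (n : ℝ) ^ a := by
    have h1 : 1 ≤ L ^ (3 + 2 * e) := one_le_pow₀ hL
    nlinarith
  set Q : ℝ := (n : ℝ) ^ a * L ^ (-ε) with hQ
  have hQ0 : 0 < Q := by positivity
  have hQn : Q ≤ (n : ℝ) ^ a :=
    mul_le_of_le_one_right (by positivity) (Real.rpow_le_one_of_one_le_of_nonpos hL (by linarith))
  have hQM : M * L ^ (2 + 2 * e) ≤ Q := by
    have h1 : L ^ (-1 : ℝ) ≤ L ^ (-ε) := Real.rpow_le_rpow_of_exponent_le hL (by linarith)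
    calc M * L ^ (2 + 2 * e) = M * L ^ (3 + 2 * e) * L ^ (-1 : ℝ) := by
          rw [Real.rpow_neg_one]; field_simp; ring
      _ ≤ (n : ℝ) ^ a * L ^ (-ε) := by gcongr
  have hQ1 : 1 ≤ Q := by
    have h1 : 1 ≤ L ^ (2 + 2 * e) := one_le_pow₀ hL
    nlinarith
  obtain ⟨q, hq, hqQ, hqQ'⟩ := Nat.exists_prime_lt_and_le_two_mul ⌈Q⌉₊ (Nat.ceil_pos.2 hQ0).ne'
  have hq1 : Q ≤ q := (Nat.le_ceil Q).trans (by exact_mod_cast hqQ.le)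
  have hq2 : (q : ℝ) ≤ 4 * Q := by
    have h1 : (q : ℝ) ≤ 2 * ⌈Q⌉₊ := by exact_mod_cast hqQ'
    have h2 := Nat.ceil_lt_add_one hQ0.le
    linarith
  have hq0 : (0 : ℝ) < q := by linarith
  set lam : ℝ := (K₂ * L ^ 2 / q) ^ ε with hlamdef
  have hl0 : 0 < lam := by positivity
  have hlame : lam ^ e = K₂ * L ^ 2 / q :=
    Real.rpow_inv_natCast_pow (by positivity) (by omega)
  have hlam : q * lam ^ e = K₂ * L ^ 2 := by rw [hlame]; field_simp
  have hsmall : 2 * K₃ * L ^ 2 * lam ≤ 1 := by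
    refine (pow_le_one_iff_of_nonneg (by positivity) (by omega : e ≠ 0)).1 ?_
    rw [mul_pow, hlame, mul_pow, ← mul_div_assoc, div_le_one hq0]
    refine le_trans (le_of_eq ?_) (hQM.trans hq1)
    rw [hM]; ring
  have hL2 : 1 ≤ L ^ 2 := one_le_pow₀ hL
  have hl4 : lam ≤ 1 / 4 := by
    have h1 : 4 ≤ 2 * K₃ * L ^ 2 := by nlinarith
    have := mul_le_mul_of_nonneg_right h1 hl0.le
    linarith
  -- `y` is the size bound before rounding
  have hy : ∀ u : ℝ, (q : ℝ) ^ u * lam = K₂ ^ ε * L ^ (2 * ε) * q ^ (u - ε) := by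
    intro u
    rw [hlamdef, Real.div_rpow (by positivity) hq0.le, Real.mul_rpow (by positivity) (by positivity),
      Real.rpow_sub hq0, Real.rpow_mul hL0.le, Real.rpow_two]
    ring
  have hy2 := hy 2
  have hy4 := hy 4
  have hp4 : (q : ℝ) ^ (4 : ℝ) = q ^ 4 := by exact_mod_cast Real.rpow_natCast (q : ℝ) 4
  rw [Real.rpow_two] at hy2
  rw [hp4] at hy4
  have hK2a : 1 ≤ K₂ ^ ε := Real.one_le_rpow hK₂ hε0.le
  have hK2b : K₂ ^ ε ≤ K₂ := by
    simpa using Real.rpow_le_rpow_of_exponent_le hK₂ hε1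
  have hLL : L ^ (2 : ℝ) = L ^ 2 := Real.rpow_two L
  have hQpow : ∀ u : ℝ, Q ^ u = (n : ℝ) ^ (a * u) * L ^ (-ε * u) := by
    intro u
    rw [hQ, Real.mul_rpow (by positivity) (by positivity), Real.rpow_mul hn0.le,
      Real.rpow_mul hL0.le]
  refine ⟨q, lam, hq, hL, ?_, hl0, hlam, hl4, by linarith, ?_, ?_⟩
  · refine Real.log_le_log hq0 (hq2.trans ?_)
    calc 4 * Q ≤ (n : ℝ) ^ a * (n : ℝ) ^ a := by gcongr
      _ = (n : ℝ) ^ (a + a) := (Real.rpow_add hn0 _ _).symm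
      _ ≤ (n : ℝ) ^ (1 : ℝ) := Real.rpow_le_rpow_of_exponent_le hn1 (by linarith)
      _ = n := Real.rpow_one _
  · have h1 : (n : ℝ) * L ≤ q ^ 4 * lam * L ^ 2 := by
      calc (n : ℝ) * L = (n : ℝ) ^ (a * (4 - ε)) * L ^ (1 : ℝ) := by
            rw [ha4, Real.rpow_one, Real.rpow_one]
        _ ≤ (n : ℝ) ^ (a * (4 - ε)) * L ^ (2 * ε + (-ε * (4 - ε)) + 2) := by
            gcongr
            nlinarith [sq_nonneg (1 - ε)]
        _ = 1 * L ^ (2 * ε) * Q ^ (4 - ε) * L ^ 2 := by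
            rw [Real.rpow_add hL0, Real.rpow_add hL0, hQpow, hLL]; ring
        _ ≤ K₂ ^ ε * L ^ (2 * ε) * q ^ (4 - ε) * L ^ 2 := by
            have : 0 ≤ 4 - ε := by linarith
            gcongr
        _ = q ^ 4 * lam * L ^ 2 := by rw [hy4]
    have h2 := mul_le_mul_of_nonneg_left hcL hn0.le
    have h3 := mul_le_mul_of_nonneg_left h1 (by positivity : 0 ≤ c * K₃)
    linarith
  · set y : ℝ := K₃ * q ^ 2 * lam * L ^ 2 with hydef
    have hql : 1 ≤ q * lam := by
      have h1 : lam ^ e ≤ lam := pow_le_of_le_one hl0.le (by linarith) (by omega)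
      have h2 := mul_le_mul_of_nonneg_left h1 hq0.le
      nlinarith
    have hy1 : 1 ≤ y := by
      have h1 : (1 : ℝ) ≤ q := hQ1.trans hq1
      have h2 : y = K₃ * q * (q * lam) * L ^ 2 := by rw [hydef]; ring
      rw [h2]
      exact one_le_mul_of_one_le_of_one_le (one_le_mul_of_one_le_of_one_le
        (one_le_mul_of_one_le_of_one_le (by linarith) h1) hql) hL2
    have hceil := Nat.ceil_lt_add_one (by linarith : 0 ≤ y)
    have h1 : (q : ℝ) ^ (2 - ε) ≤ 16 * Q ^ (2 - ε) := by
      calc (q : ℝ) ^ (2 - ε) ≤ (4 * Q) ^ (2 - ε) := by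
            have : 0 ≤ 2 - ε := by linarith
            gcongr
        _ = 4 ^ (2 - ε) * Q ^ (2 - ε) := Real.mul_rpow (by norm_num) hQ0.le
        _ ≤ 4 ^ (2 : ℝ) * Q ^ (2 - ε) := by
            gcongr
            · norm_num
            · linarith
        _ = 16 * Q ^ (2 - ε) := by norm_num
    have h2 : y ≤ 16 * K₃ * K₂ * (n : ℝ) ^ (a * (2 - ε)) * L ^ 3 := by
      calc y = K₃ * (K₂ ^ ε * L ^ (2 * ε) * q ^ (2 - ε)) * L ^ 2 := by
            rw [← hy2, hydef]; ring
        _ ≤ K₃ * (K₂ * L ^ (2 * ε) * (16 * Q ^ (2 - ε))) * L ^ 2 := by gcongr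
        _ = 16 * K₃ * K₂ * (n : ℝ) ^ (a * (2 - ε)) * L ^ (2 * ε + (-ε * (2 - ε)) + 2) := by
            rw [Real.rpow_add hL0, Real.rpow_add hL0, hQpow, hLL]; ring
        _ ≤ 16 * K₃ * K₂ * (n : ℝ) ^ (a * (2 - ε)) * L ^ (3 : ℝ) := by
            gcongr
            nlinarith
        _ = _ := by
            congr 1
            exact_mod_cast Real.rpow_natCast L 3
    rw [hb]
    linarith

theorem stmt6 (r : ℕ) (hr : 2 ≤ r) (sz : Fin r → ℕ) (hsz : ∀ i, 0 < sz i) :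
    ∃ (C : ℝ) (N : ℕ), 0 < C ∧ ∀ n : ℕ, n > N →
      (minFIndep (SimpleGraph.completeMultipartiteGraph fun i => Fin (sz i))
          (⊤ : SimpleGraph (Fin (r + 2))) n : ℝ) ≤
        C * (n : ℝ) ^ ((2 * (∑ i, sz i) - 3 : ℝ) / (4 * (∑ i, sz i) - 5)) *
          Real.log n ^ 3 := by
  -- `e = s - 1`, which is at least `1` because there are at least two nonempty parts
  obtain ⟨e, he, hs⟩ : ∃ e, 1 ≤ e ∧ ∑ i, sz i = e + 1 := by
    have h : ∑ _i : Fin r, 1 ≤ ∑ i, sz i := sum_le_sum fun i _ => hsz i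
    simp only [sum_const, card_univ, Fintype.card_fin, smul_eq_mul, mul_one] at h
    exact ⟨∑ i, sz i - 1, by omega, by omega⟩
  have hs' : ∑ i, (sz i : ℝ) = e + 1 := by exact_mod_cast hs
  obtain ⟨K₂, K₃, c, hK₂, hK₃, hc, hmain⟩ := minFIndep_le_of_prime hr he sz hs
  obtain ⟨C, N, hC, hpar⟩ := exists_parameters he hK₂ hK₃ hc
  refine ⟨C, N, hC, fun n hn => ?_⟩
  obtain ⟨q, lam, hq, hL, hlogq, hl0, hql, hl4, hsmall, hnq, hbound⟩ := hpar n hn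
  have h := hmain q n (Real.log n) lam hq hL hlogq hl0 hql hl4 hsmall hnq
  have hexp : (2 * (∑ i, sz i) - 3 : ℝ) / (4 * (∑ i, sz i) - 5)
      = (2 * e - 1 : ℝ) / (4 * e - 1) := by
    push_cast
    rw [hs']
    congr 1 <;> ring
  rw [hexp]
  exact le_trans (by exact_mod_cast h) hbound
end
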